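/- arXiv:2404.02069 — 4 statements merged into one kernel-verified Lean document; each statement's English description precedes it below -/
import Mathlib

section
/- Let n = n_1 + … + n_p with n_1,…,n_p nonnegative integers (p ≥ 1), let A ⊆ ℕ^n, and let ω_A(t_1,…,t_p) be the dimension polynomial of A, i.e., the numerical polynomial satisfying ω_A(r_1,…,r_p) = Card V_A(r_1,…,r_p) for all sufficiently large (r_1,…,r_p) ∈ ℕ^p. Then the total degree of ω_A equals n if and only if A is empty, and in that case ω_A(t_1,…,t_p) = ∏_{i=1}^{p} C(t_i+n_i, n_i). -/
open MvPolynomial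

/-- A polynomial in `p` variables with rational coefficients is numerical if it takes
integer values for all sufficiently large integer arguments. -/
def IsNumerical {p : ℕ} (f : MvPolynomial (Fin p) ℚ) : Prop :=
  ∃ s : Fin p → ℤ, ∀ r : Fin p → ℤ, (∀ i, s i ≤ r i) →
    ∃ z : ℤ, MvPolynomial.eval (fun i => (r i : ℚ)) f = (z : ℚ)

/-- The binomial-coefficient polynomial `C(t_j + c, k)` in the variable `t_j`. -/
noncomputable def binomShift {p : ℕ} (j : Fin p) (c : ℤ) (k : ℕ) : MvPolynomial (Fin p) ℚ :=
  (k.factorial : ℚ)⁻¹ • ∏ l ∈ Finset.range k, (X j + MvPolynomial.C ((c : ℚ) - (l : ℚ)))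

/-- The sum of the entries of `v` over the `j`-th block of the partition `B`. -/
def blockSum {n p : ℕ} (B : Fin n → Fin p) (v : Fin n → ℕ) (j : Fin p) : ℕ :=
  ∑ i ∈ Finset.univ.filter (fun i => B i = j), v i

/-- `V_A`: the set of points of `ℕ^n` that are not ≥ (componentwise) any element of `A`. -/
def VSet {n : ℕ} (A : Set (Fin n → ℕ)) : Set (Fin n → ℕ) :=
  {v | ∀ a ∈ A, ¬ a ≤ v}


/-- The number of functions on a finite type with sum at most `r`. -/
theorem card_sum_le {ι : Type*} [Fintype ι] (r : ℕ) :
    Nat.card {f : ι → ℕ // ∑ i, f i ≤ r} = (r + Fintype.card ι).choose (Fintype.card ι) := by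
  classical
  let e : {f : ι → ℕ // ∑ i, f i ≤ r} ≃ {P : Option ι → ℕ // ∑ i, P i = r} :=
    { toFun := fun f => ⟨fun o => o.elim (r - ∑ i, f.1 i) f.1, by
        rw [Fintype.sum_option]
        have := f.2
        simp only [Option.elim]
        omega⟩
      invFun := fun P => ⟨fun i => P.1 (some i), by
        have := P.2
        rw [Fintype.sum_option] at this
        exact (Nat.le_add_left _ _).trans this.le⟩
      left_inv := fun f => by ext i; rfl
      right_inv := fun P => by
        ext o
        have := P.2
        rw [Fintype.sum_option] at this
        cases o with
        | none => simp only [Option.elim]; omega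
        | some i => rfl }
  rw [Nat.card_congr (e.trans (Sym.equivNatSumOfFintype (Option ι) r).symm),
    Nat.card_eq_fintype_card, Sym.card_sym_eq_choose, Fintype.card_option]
  rw [show Fintype.card ι + 1 + r - 1 = r + Fintype.card ι by omega]
  exact Nat.choose_symm_add

theorem card_blocks {n p : ℕ} (B : Fin n → Fin p) (r : Fin p → ℕ) (nn : Fin p → ℕ)
    (hBcard : ∀ j, (Finset.univ.filter fun i => B i = j).card = nn j) :
    ({v | ∀ j, blockSum B v j ≤ r j} : Set (Fin n → ℕ)).ncard
      = ∏ j, (r j + nn j).choose (nn j) := by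
  have hb : ∀ (v : Fin n → ℕ) (j : Fin p), blockSum B v j = ∑ i : {i // B i = j}, v i.1 := by
    intro v j
    unfold blockSum
    exact Finset.sum_subtype _ (by simp) _
  let e : ({v | ∀ j, blockSum B v j ≤ r j} : Set (Fin n → ℕ)) ≃
      (∀ j, {f : {i // B i = j} → ℕ // ∑ i, f i ≤ r j}) :=
    { toFun := fun v j => ⟨fun i => v.1 i.1, by rw [← hb v.1 j]; exact v.2 j⟩
      invFun := fun g => ⟨fun i => (g (B i)).1 ⟨i, rfl⟩, by
        intro j
        rw [hb]
        refine le_trans (le_of_eq ?_) (g j).2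
        refine Finset.sum_congr rfl ?_
        rintro ⟨i, rfl⟩ -
        rfl⟩
      left_inv := fun v => rfl
      right_inv := fun g => by
        funext j
        ext ⟨i, hi⟩
        subst hi
        rfl }
  rw [← Nat.card_coe_set_eq, Nat.card_congr e, Nat.card_pi]
  refine Finset.prod_congr rfl fun j _ => ?_
  rw [card_sum_le, Fintype.card_subtype, hBcard]

theorem eval_binomShift {p : ℕ} (j : Fin p) (k : ℕ) (r : Fin p → ℕ) :
    eval (fun i => ((r i : ℤ) : ℚ)) (binomShift j (k : ℤ) k) = ((r j + k).choose k : ℚ) := by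
  unfold binomShift
  rw [smul_eval, map_prod]
  simp only [map_add, eval_X, eval_C, Int.cast_natCast]
  rw [Nat.cast_choose_eq_descPochhammer_div, descPochhammer_eval_eq_prod_range, div_eq_inv_mul]
  congr 1
  refine Finset.prod_congr rfl fun l _ => ?_
  push_cast
  ring

theorem lin_ne_zero {p : ℕ} (j : Fin p) (c : ℚ) : (X j + C c : MvPolynomial (Fin p) ℚ) ≠ 0 := by
  intro h
  have := congrArg (eval (fun _ => 1 - c)) h
  simp at this

theorem totalDegree_lin {p : ℕ} (j : Fin p) (c : ℚ) :
    (X j + C c : MvPolynomial (Fin p) ℚ).totalDegree = 1 := by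
  rw [totalDegree_add_eq_left_of_totalDegree_lt] <;> simp

theorem totalDegree_prod_domain {σ ι : Type*} (s : Finset ι) (f : ι → MvPolynomial σ ℚ)
    (h : ∀ i ∈ s, f i ≠ 0) : (∏ i ∈ s, f i).totalDegree = ∑ i ∈ s, (f i).totalDegree := by
  classical
  induction s using Finset.induction_on with
  | empty => simp
  | insert a s ha ih =>
    rw [Finset.prod_insert ha, Finset.sum_insert ha, totalDegree_mul_of_isDomain, ih]
    · exact fun i hi => h i (Finset.mem_insert_of_mem hi)
    · exact h a (Finset.mem_insert_self _ _)
    · exact Finset.prod_ne_zero_iff.2 fun i hi => h i (Finset.mem_insert_of_mem hi)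

theorem binomShift_eq {p : ℕ} (j : Fin p) (c : ℤ) (k : ℕ) : binomShift j c k =
    C (k.factorial : ℚ)⁻¹ * ∏ l ∈ Finset.range k, (X j + C ((c : ℚ) - (l : ℚ))) := by
  rw [binomShift, smul_eq_C_mul]

theorem fact_C_ne {p : ℕ} (k : ℕ) : (C (k.factorial : ℚ)⁻¹ : MvPolynomial (Fin p) ℚ) ≠ 0 := by
  rw [Ne, C_eq_zero]
  have := k.factorial_ne_zero
  positivity

theorem binomShift_ne_zero {p : ℕ} (j : Fin p) (c : ℤ) (k : ℕ) : binomShift j c k ≠ 0 := by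
  rw [binomShift_eq]
  exact mul_ne_zero (fact_C_ne k) (Finset.prod_ne_zero_iff.2 fun l _ => lin_ne_zero _ _)

theorem totalDegree_binomShift {p : ℕ} (j : Fin p) (c : ℤ) (k : ℕ) :
    (binomShift j c k).totalDegree = k := by
  rw [binomShift_eq, totalDegree_mul_of_isDomain (fact_C_ne k)
    (Finset.prod_ne_zero_iff.2 fun l _ => lin_ne_zero _ _),
    totalDegree_prod_domain _ _ fun l _ => lin_ne_zero _ _]
  simp only [totalDegree_lin, totalDegree_C]
  simp

/-- Polynomials that agree on all large natural points agree. -/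
theorem eq_of_large {p : ℕ} (f g : MvPolynomial (Fin p) ℚ) (s : Fin p → ℕ)
    (h : ∀ r : Fin p → ℕ, (∀ i, s i ≤ r i) →
      eval (fun i => ((r i : ℤ) : ℚ)) f = eval (fun i => ((r i : ℤ) : ℚ)) g) : f = g := by
  refine funext_set (fun i => (fun m : ℕ => ((m : ℤ) : ℚ)) '' Set.Ici (s i)) ?_ ?_
  · intro i
    refine (Set.Ici_infinite (s i)).image ?_
    intro a _ b _ hab
    simpa using hab
  · intro x hx
    choose r hr hrx using fun i => hx i (Set.mem_univ i)
    have : x = fun i => ((r i : ℤ) : ℚ) := funext fun i => (hrx i).symm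
    rw [this]
    exact h r hr

theorem eval_homog {p k : ℕ} {f : MvPolynomial (Fin p) ℚ} (hf : f.IsHomogeneous k)
    (c : Fin p → ℚ) (t : ℚ) : eval (fun i => t * c i) f = eval c f * t ^ k := by
  rw [eval_eq, eval_eq, Finset.sum_mul]
  refine Finset.sum_congr rfl fun d hd => ?_
  have hk : ∑ i ∈ d.support, d i = k := by
    have := hf (mem_support_iff.1 hd)
    rw [← this, Finsupp.weight_apply, Finsupp.sum]
    simp
  simp only [mul_pow]
  rw [Finset.prod_mul_distrib, Finset.prod_pow_eq_pow_sum, hk]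
  ring

/-- The count for a nonempty `A` is of lower order. -/
theorem card_bound {n p : ℕ} (B : Fin n → Fin p) (A : Set (Fin n → ℕ)) (a : Fin n → ℕ)
    (ha : a ∈ A) (r : Fin p → ℕ) (N : ℕ) (hN : ∀ j, r j ≤ N) :
    ({v ∈ VSet A | ∀ j, blockSum B v j ≤ r j} : Set (Fin n → ℕ)).ncard
      ≤ (∑ i, a i) * (N + 1) ^ (n - 1) := by
  classical
  let F : Fin n → Finset (Fin n → ℕ) := fun i =>
    Fintype.piFinset (fun l => if l = i then Finset.range (a i) else Finset.range (N + 1))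
  have hF : ∀ i, (F i).card = a i * (N + 1) ^ (n - 1) := by
    intro i
    rw [Fintype.card_piFinset, ← Finset.mul_prod_erase _ _ (Finset.mem_univ i)]
    simp only [if_true, Finset.card_range]
    congr 1
    rw [Finset.prod_congr rfl (g := fun _ => N + 1)]
    · simp
    · intro l hl
      rw [if_neg (Finset.ne_of_mem_erase hl), Finset.card_range]
  have hsub : ({v ∈ VSet A | ∀ j, blockSum B v j ≤ r j} : Set (Fin n → ℕ)) ⊆
      ↑(Finset.univ.biUnion F) := by
    rintro v ⟨hv, hb⟩
    have h1 : ∃ i, v i < a i := by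
      by_contra! hc
      exact hv a ha hc
    obtain ⟨i, hi⟩ := h1
    simp only [Finset.coe_biUnion, Set.mem_iUnion, Finset.mem_coe, Finset.mem_univ]
    refine ⟨i, trivial, ?_⟩
    rw [Fintype.mem_piFinset]
    intro l
    split_ifs with h
    · subst h; simpa using hi
    · rw [Finset.mem_range]
      have : v l ≤ blockSum B v (B l) :=
        Finset.single_le_sum (f := v) (fun _ _ => Nat.zero_le _) (by simp)
      have := hb (B l)
      have := hN (B l)
      omega
  calc _ ≤ (↑(Finset.univ.biUnion F) : Set (Fin n → ℕ)).ncard :=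
        Set.ncard_le_ncard hsub (Finset.finite_toSet _)
    _ = (Finset.univ.biUnion F).card := Set.ncard_coe_finset _
    _ ≤ ∑ i, (F i).card := Finset.card_biUnion_le
    _ = _ := by simp only [hF, Finset.sum_mul]

theorem no_growth {n : ℕ} (hn0 : 0 < n) (q : Polynomial ℚ) (hq : q.coeff n ≠ 0) (K M : ℕ)
    (h : ∀ t : ℕ, 1 ≤ t → |q.eval (t : ℚ)| ≤ (K * (M * t + 1) ^ (n - 1) : ℕ)) : False := by
  let P : Polynomial ℚ := Polynomial.C ((K : ℚ) + 1) *
    (Polynomial.C (M : ℚ) * Polynomial.X + Polynomial.C 1) ^ (n - 1)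
  have hPe : ∀ t : ℚ, P.eval t = (K + 1) * (M * t + 1) ^ (n - 1) := by
    intro t; simp [P]
  have hP0 : P ≠ 0 := by
    intro h0
    have := hPe 0
    rw [h0] at this
    simp at this
    have h2 : (0 : ℚ) < K + 1 := by positivity
    linarith
  have hPd : P.natDegree ≤ n - 1 := by
    refine (Polynomial.natDegree_C_mul_le _ _).trans (Polynomial.natDegree_pow_le.trans ?_)
    have := Polynomial.natDegree_linear_le (a := (M : ℚ)) (b := 1)
    nlinarith
  have hdeg : P.degree < q.degree := by
    refine lt_of_lt_of_le ?_ (Polynomial.le_degree_of_ne_zero hq)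
    refine lt_of_le_of_lt Polynomial.degree_le_natDegree ?_
    exact_mod_cast (by omega : P.natDegree < n)
  have ht := (Polynomial.abs_div_tendsto_atTop_atTop_of_degree_gt q P hdeg hP0).comp
    (tendsto_natCast_atTop_atTop (R := ℚ))
  obtain ⟨t, ht1, ht2⟩ :=
    ((ht.eventually_gt_atTop 1).and (Filter.eventually_ge_atTop 1)).exists
  have hb := h t ht2
  simp only [Function.comp] at ht1
  have hpos : (0 : ℚ) < P.eval (t : ℚ) := by rw [hPe]; positivity
  rw [abs_div, abs_of_pos hpos, lt_div_iff₀ hpos, one_mul, hPe] at ht1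
  push_cast at hb
  have : (0 : ℚ) < (M * t + 1) ^ (n - 1) := by positivity
  nlinarith

theorem empty_of_totalDegree {p n : ℕ} (hn0 : 0 < n) (B : Fin n → Fin p)
    (A : Set (Fin n → ℕ)) (ω : MvPolynomial (Fin p) ℚ)
    (hagree : ∃ s : Fin p → ℕ, ∀ r : Fin p → ℕ, (∀ i, s i ≤ r i) →
      MvPolynomial.eval (fun i => ((r i : ℤ) : ℚ)) ω =
        (({v ∈ VSet A | ∀ j, blockSum B v j ≤ r j} : Set (Fin n → ℕ)).ncard : ℚ))
    (hd : ω.totalDegree = n) : A = ∅ := by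
  by_contra hA
  obtain ⟨a, ha⟩ := Set.nonempty_iff_ne_empty.2 hA
  obtain ⟨s, hs⟩ := hagree
  have hne : homogeneousComponent n ω ≠ 0 := by
    have hω0 : ω ≠ 0 := by
      rintro rfl
      simp at hd
      omega
    obtain ⟨d, hdm, hdd⟩ := Finset.exists_mem_eq_sup ω.support
      (support_nonempty.2 hω0) (fun m => m.sum fun _ e => e)
    intro h0
    have h1 := coeff_homogeneousComponent n ω d
    rw [h0, coeff_zero, if_pos] at h1
    · exact mem_support_iff.1 hdm h1.symm
    · rw [← hd]
      exact hdd.symm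
  obtain ⟨c, hcs, hc⟩ : ∃ c : Fin p → ℕ, (∀ i, s i ≤ c i) ∧
      eval (fun i => ((c i : ℤ) : ℚ)) (homogeneousComponent n ω) ≠ 0 := by
    by_contra! hcon
    exact hne (eq_of_large _ 0 s fun r hr => by rw [hcon r hr, map_zero])
  let c' : Fin p → ℚ := fun i => ((c i : ℤ) : ℚ)
  let q : Polynomial ℚ := ∑ k ∈ Finset.range (n + 1),
    Polynomial.C (eval c' (homogeneousComponent k ω)) * Polynomial.X ^ k
  have hqn : q.coeff n = eval c' (homogeneousComponent n ω) := by
    simp [q, Polynomial.finsetSum_coeff, Polynomial.coeff_X_pow]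
  have hqe : ∀ t : ℚ, q.eval t = eval (fun i => t * c' i) ω := by
    intro t
    conv_rhs => rw [← sum_homogeneousComponent ω, hd, map_sum]
    simp only [q, Polynomial.eval_finsetSum, Polynomial.eval_mul, Polynomial.eval_C,
      Polynomial.eval_pow, Polynomial.eval_X]
    exact Finset.sum_congr rfl fun k _ =>
      (eval_homog (homogeneousComponent_isHomogeneous k ω) c' t).symm
  refine no_growth hn0 q (by rw [hqn]; exact hc) (∑ i, a i) (∑ j, c j) ?_
  intro t ht
  have h1 := hs (fun i => t * c i) (fun i => (hcs i).trans (Nat.le_mul_of_pos_left _ ht))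
  have h2 : q.eval (t : ℚ) = eval (fun i => (((t * c i : ℕ) : ℤ) : ℚ)) ω := by
    rw [hqe]
    congr 1
    congr 1
    funext i
    simp [c']
  rw [h2, h1, abs_of_nonneg (Nat.cast_nonneg _)]
  exact_mod_cast card_bound B A a ha (fun i => t * c i) ((∑ j, c j) * t) (fun j => by
    rw [mul_comm]
    exact Nat.mul_le_mul_right _
      (Finset.single_le_sum (f := c) (fun _ _ => Nat.zero_le _) (Finset.mem_univ j)))

theorem statement_2 (p n : ℕ) (hp : 1 ≤ p) (hn0 : 0 < n)
    (nn : Fin p → ℕ) (hn : ∑ j, nn j = n)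
    (B : Fin n → Fin p) (hBmono : Monotone B)
    (hBcard : ∀ j, (Finset.univ.filter fun i => B i = j).card = nn j)
    (A : Set (Fin n → ℕ))
    (ω : MvPolynomial (Fin p) ℚ) (hω : IsNumerical ω)
    (hagree : ∃ s : Fin p → ℕ, ∀ r : Fin p → ℕ, (∀ i, s i ≤ r i) →
      MvPolynomial.eval (fun i => ((r i : ℤ) : ℚ)) ω =
        (({v ∈ VSet A | ∀ j, blockSum B v j ≤ r j} : Set (Fin n → ℕ)).ncard : ℚ)) :
    (ω.totalDegree = n ↔ A = ∅) ∧
    (A = ∅ → ω = ∏ i, binomShift i (nn i : ℤ) (nn i)) := by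
  have key : A = ∅ → ω = ∏ i, binomShift i (nn i : ℤ) (nn i) := by
    rintro rfl
    obtain ⟨s, hs⟩ := hagree
    refine eq_of_large _ _ s fun r hr => ?_
    rw [hs r hr, map_prod]
    simp only [eval_binomShift]
    have hset : ({v ∈ VSet (∅ : Set (Fin n → ℕ)) | ∀ j, blockSum B v j ≤ r j} :
        Set (Fin n → ℕ)) = {v | ∀ j, blockSum B v j ≤ r j} := by
      ext v
      simp [VSet]
    rw [hset, card_blocks B r nn hBcard]
    push_cast
    rfl
  refine ⟨⟨empty_of_totalDegree hn0 B A ω hagree, fun hA => ?_⟩, key⟩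
  rw [key hA, totalDegree_prod_domain _ _ fun i _ => binomShift_ne_zero _ _ _]
  simp only [totalDegree_binomShift, hn]
end

section
/- Let K be a field of characteristic zero, A_n(K) the Weyl algebra, and M a finitely generated left A_n(K)-module with generators g_1,…,g_p, filtered by M_r = Σ_{i=1}^{p} W_r g_i. Then there exists a polynomial ψ_M(t) ∈ ℚ[t] such that ψ_M(r) = dim_K M_r for all sufficiently large r ∈ ℤ, and n ≤ deg ψ_M ≤ 2n. -/
set_option synthInstance.maxHeartbeats 400000
set_option maxHeartbeats 1000000

open MvPolynomial
noncomputable def weylGens (n : ℕ) (K : Type) [Field K] :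
    Set (Module.End K (MvPolynomial (Fin n) K)) :=
  (Set.range fun i : Fin n =>
      (LinearMap.mulLeft K (X i : MvPolynomial (Fin n) K) : Module.End K (MvPolynomial (Fin n) K))) ∪
  (Set.range fun i : Fin n => ((pderiv i).toLinearMap : Module.End K (MvPolynomial (Fin n) K)))

noncomputable def WeylAlg (n : ℕ) (K : Type) [Field K] :
    Subalgebra K (Module.End K (MvPolynomial (Fin n) K)) :=
  Algebra.adjoin K (weylGens n K)

noncomputable def wx (n : ℕ) (K : Type) [Field K] (i : Fin n) : WeylAlg n K :=
  ⟨LinearMap.mulLeft K (X i), Algebra.subset_adjoin (Set.mem_union_left _ ⟨i, rfl⟩)⟩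

noncomputable def wd (n : ℕ) (K : Type) [Field K] (i : Fin n) : WeylAlg n K :=
  ⟨(pderiv i).toLinearMap, Algebra.subset_adjoin (Set.mem_union_right _ ⟨i, rfl⟩)⟩

noncomputable def wMono (n : ℕ) (K : Type) [Field K] (α β : Fin n → ℕ) : WeylAlg n K :=
  (((List.finRange n).map fun i => wx n K i ^ α i).prod) *
  (((List.finRange n).map fun i => wd n K i ^ β i).prod)

def ordTot (n : ℕ) (α β : Fin n → ℕ) : ℕ := (∑ i, α i) + ∑ i, β i

noncomputable def bernW (n : ℕ) (K : Type) [Field K] (r : ℤ) : Submodule K (WeylAlg n K) :=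
  Submodule.span K {D | ∃ α β : Fin n → ℕ, (ordTot n α β : ℤ) ≤ r ∧ D = wMono n K α β}

noncomputable def modFil (n : ℕ) (K : Type) [Field K] (M : Type) [AddCommGroup M]
    [Module K M] [Module (WeylAlg n K) M] (m : ℕ) (g : Fin m → M) (r : ℤ) :
    Submodule K M :=
  Submodule.span K {x | ∃ i, ∃ D ∈ bernW n K r, x = D • g i}

namespace Bern

open Finset in
lemma exists_sumPoly (p : Polynomial ℚ) (d : ℕ) (hd : p.natDegree ≤ d) :
    ∃ q : Polynomial ℚ, q.natDegree ≤ d + 1 ∧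
      ∀ r : ℕ, ∑ t ∈ range r, p.eval (t : ℚ) = q.eval (r : ℚ) := by
  refine ⟨∑ i ∈ range (d + 1), Polynomial.C (p.coeff i / (i + 1)) *
    (Polynomial.bernoulli (i + 1) - Polynomial.C (bernoulli (i + 1))), ?_, ?_⟩
  · refine Polynomial.natDegree_sum_le_of_forall_le _ _ fun i hi => ?_
    have hi' : i ≤ d := by simpa [Nat.lt_succ_iff] using hi
    refine (Polynomial.natDegree_C_mul_le _ _).trans ?_
    refine (Polynomial.natDegree_sub_le _ _).trans ?_
    refine max_le ?_ (by simp)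
    rw [Polynomial.bernoulli_def]
    refine Polynomial.natDegree_sum_le_of_forall_le _ _ fun j hj => ?_
    refine (Polynomial.natDegree_monomial_le _).trans ?_
    have := mem_range.1 hj
    omega
  · intro r
    rw [Polynomial.eval_finsetSum]
    have h1 : ∀ t ∈ range r, p.eval (t : ℚ) = ∑ i ∈ range (d + 1), p.coeff i * (t : ℚ) ^ i := by
      intro t _
      exact Polynomial.eval_eq_sum_range' (by omega) _
    rw [sum_congr rfl h1, sum_comm]
    refine sum_congr rfl fun i _ => ?_
    rw [← mul_sum]
    have := Polynomial.sum_range_pow_eq_bernoulli_sub r i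
    simp only [Polynomial.eval_mul, Polynomial.eval_C, Polynomial.eval_sub]
    rw [show (i + 1) = i.succ from rfl, ← this]
    have : (i : ℚ) + 1 ≠ 0 := by positivity
    field_simp

/-- `f` is eventually given by a polynomial of degree at most `d`. -/
def EvPoly (d : ℕ) (f : ℕ → ℕ) : Prop :=
  ∃ p : Polynomial ℚ, p.natDegree ≤ d ∧ ∃ N : ℕ, ∀ r : ℕ, N ≤ r → p.eval (r : ℚ) = (f r : ℚ)

lemma EvPoly.mono {d e : ℕ} {f : ℕ → ℕ} (h : EvPoly d f) (hde : d ≤ e) : EvPoly e f := by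
  obtain ⟨p, hp, h⟩ := h
  exact ⟨p, hp.trans hde, h⟩

lemma EvPoly.congr {d : ℕ} {f g : ℕ → ℕ} (h : EvPoly d f) (N : ℕ) (hfg : ∀ r, N ≤ r → f r = g r) :
    EvPoly d g := by
  obtain ⟨p, hp, N', h⟩ := h
  refine ⟨p, hp, max N N', fun r hr => ?_⟩
  rw [← hfg r ((le_max_left _ _).trans hr)]
  exact h r ((le_max_right _ _).trans hr)

lemma EvPoly.add {d : ℕ} {f g : ℕ → ℕ} (hf : EvPoly d f) (hg : EvPoly d g) :
    EvPoly d (fun r => f r + g r) := by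
  obtain ⟨p, hp, N, h⟩ := hf
  obtain ⟨q, hq, N', h'⟩ := hg
  refine ⟨p + q, Polynomial.natDegree_add_le_of_degree_le hp hq, max N N', fun r hr => ?_⟩
  rw [Polynomial.eval_add, h r ((le_max_left _ _).trans hr), h' r ((le_max_right _ _).trans hr)]
  push_cast
  rfl

lemma EvPoly.zero (d : ℕ) : EvPoly d (fun _ => 0) := ⟨0, by simp, 0, by simp⟩

lemma EvPoly.sum {ι : Type*} (s : Finset ι) {d : ℕ} {f : ι → ℕ → ℕ} (hf : ∀ i ∈ s, EvPoly d (f i)) :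
    EvPoly d (fun r => ∑ i ∈ s, f i r) := by
  classical
  induction s using Finset.induction_on with
  | empty => simpa using EvPoly.zero d
  | insert a s ha ih =>
    simp only [Finset.sum_insert ha]
    exact (hf a (by simp)).add (ih fun i hi => hf i (by simp [hi]))

lemma EvPoly.shift {d : ℕ} {f : ℕ → ℕ} (hf : EvPoly d f) (t : ℕ) : EvPoly d (fun r => f (r - t)) := by
  obtain ⟨p, hp, N, h⟩ := hf
  refine ⟨p.comp (Polynomial.X - Polynomial.C (t : ℚ)), ?_, N + t, fun r hr => ?_⟩
  · rw [Polynomial.natDegree_comp, Polynomial.natDegree_X_sub_C, mul_one]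
    exact hp
  · rw [← h (r - t) (by omega), Polynomial.eval_comp, Nat.cast_sub (by omega)]
    simp

open Finset in
lemma EvPoly.cumsum {d : ℕ} {f : ℕ → ℕ} (hf : EvPoly d f) :
    EvPoly (d + 1) (fun r => ∑ t ∈ range r, f t) := by
  obtain ⟨p, hp, N, h⟩ := hf
  obtain ⟨q, hq, hq'⟩ := exists_sumPoly p d hp
  refine ⟨q + Polynomial.C (∑ t ∈ range N, ((f t : ℚ) - p.eval (t : ℚ))), ?_, N, fun r hr => ?_⟩
  · exact Polynomial.natDegree_add_le_of_degree_le hq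
      ((Polynomial.natDegree_C _).trans_le (Nat.zero_le _))
  · rw [Polynomial.eval_add, Polynomial.eval_C, ← hq' r]
    push_cast
    obtain ⟨e, rfl⟩ := Nat.exists_eq_add_of_le hr
    rw [sum_range_add, sum_range_add, sum_sub_distrib]
    have : ∑ x ∈ range e, Polynomial.eval ((N + x : ℕ) : ℚ) p = ∑ x ∈ range e, (f (N + x) : ℚ) :=
      sum_congr rfl fun x _ => h _ (by omega)
    rw [this]
    ring

open Finset in
/-- exponents of total degree at most `r` -/
def box (k r : ℕ) : Finset (Fin k → ℕ) :=
  (Fintype.piFinset fun _ : Fin k => range (r + 1)).filter (fun a => ∑ i, a i ≤ r)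

lemma mem_box {k r : ℕ} {a : Fin k → ℕ} : a ∈ box k r ↔ ∑ i, a i ≤ r := by
  simp only [box, Finset.mem_filter, Fintype.mem_piFinset, Finset.mem_range, and_iff_right_iff_imp]
  intro h i
  have := Finset.single_le_sum (f := a) (fun j _ => Nat.zero_le _) (Finset.mem_univ i)
  omega

open Classical in
noncomputable def cnt (k : ℕ) (U : Set (Fin k → ℕ)) (r : ℕ) : ℕ :=
  ((box k r).filter (fun a => a ∉ U)).card

def slice {k : ℕ} (U : Set (Fin (k + 1) → ℕ)) (t : ℕ) : Set (Fin k → ℕ) := {a | Fin.cons t a ∈ U}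

open Finset in
lemma cnt_succ (k : ℕ) (U : Set (Fin (k + 1) → ℕ)) (r : ℕ) :
    cnt (k + 1) U r = ∑ t ∈ range (r + 1), cnt k (slice U t) (r - t) := by
  classical
  unfold cnt
  rw [card_eq_sum_card_fiberwise (f := fun a : Fin (k + 1) → ℕ => a 0) (t := range (r + 1))]
  · refine sum_congr rfl fun t ht => ?_
    have ht' : t ≤ r := by simpa [Nat.lt_succ_iff] using ht
    symm
    refine card_bij (fun a _ => Fin.cons t a) ?_ ?_ ?_
    · intro a ha
      simp only [mem_filter, mem_box] at ha ⊢
      refine ⟨⟨?_, ha.2⟩, by simp⟩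
      rw [Fin.sum_univ_succ]
      simp only [Fin.cons_zero, Fin.cons_succ]
      omega
    · intro a _ b _ hab
      exact (Fin.cons_injective2 hab).2
    · intro b hb
      simp only [mem_filter, mem_box] at hb
      obtain ⟨⟨hb1, hb2⟩, hb3⟩ := hb
      have hbb : (Fin.cons t (Fin.tail b) : Fin (k + 1) → ℕ) = b := by
        rw [← hb3]; exact Fin.cons_self_tail b
      refine ⟨Fin.tail b, ?_, hbb⟩
      simp only [mem_filter, mem_box]
      refine ⟨?_, fun h => hb2 (hbb ▸ (h : (Fin.cons t (Fin.tail b) : Fin (k + 1) → ℕ) ∈ U))⟩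
      rw [Fin.sum_univ_succ, hb3] at hb1
      simp only [Fin.tail]
      omega
  · intro a ha
    simp only [coe_filter, mem_box, Set.mem_ofPred_eq] at ha
    have := single_le_sum (f := a) (fun j _ => Nat.zero_le _) (mem_univ 0)
    simp only [coe_range, Set.mem_Iio]
    omega

lemma stab {k : ℕ} (V : ℕ → Set (Fin k → ℕ)) (hV : ∀ t, IsUpperSet (V t)) (hm : Monotone V) :
    ∃ J, ∀ t, J ≤ t → V t = V J := by
  let P : (Fin k → ℕ) → Prop := fun a => ∃ t, a ∈ V t
  have hfin : {a | Minimal P a}.Finite :=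
    WellQuasiOrderedLE.finite_of_isAntichain (setOfPred_minimal_antichain P)
  have hex : ∀ a, ∃ t, Minimal P a → a ∈ V t := by
    intro a
    by_cases h : Minimal P a
    · obtain ⟨t, ht⟩ := h.prop
      exact ⟨t, fun _ => ht⟩
    · exact ⟨0, fun h' => absurd h' h⟩
  choose τ hτ using hex
  refine ⟨hfin.toFinset.sup τ, fun t ht => ?_⟩
  refine le_antisymm ?_ (hm ht)
  intro a ha
  obtain ⟨b, hba, hb⟩ := exists_minimal_le_of_wellFoundedLT P a ⟨t, ha⟩
  refine hV _ hba (hm ?_ (hτ b hb))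
  exact Finset.le_sup (f := τ) (by simpa using hb)

open Finset in
theorem cnt_evPoly (k : ℕ) (U : Set (Fin k → ℕ)) (hU : IsUpperSet U) : EvPoly k (cnt k U) := by
  induction k with
  | zero =>
    refine ⟨Polynomial.C (cnt 0 U 0 : ℚ), by simp, 0, fun r _ => ?_⟩
    rw [Polynomial.eval_C]
    have hb : box 0 0 = box 0 r := by
      ext a
      simp [mem_box]
    unfold cnt
    rw [hb]
  | succ k ih =>
    have hs : ∀ t, IsUpperSet (slice U t) := fun t a b hab ha =>
      hU (Fin.cons_le_cons.2 ⟨le_rfl, hab⟩) ha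
    have hm : Monotone (slice U) := fun s t hst a ha =>
      hU (Fin.cons_le_cons.2 ⟨hst, le_rfl⟩) ha
    obtain ⟨J, hJ⟩ := stab (slice U) hs hm
    have h1 : EvPoly (k + 1) (fun r => ∑ t ∈ range J, cnt k (slice U t) (r - t)) :=
      EvPoly.sum _ fun t _ => ((ih _ (hs t)).shift t).mono (by omega)
    have h2 : EvPoly (k + 1) (fun r => ∑ t ∈ range (r + 1 - J), cnt k (slice U J) t) := by
      have := (ih _ (hs J)).cumsum
      by_cases hJ0 : J = 0
      · subst hJ0
        obtain ⟨p, hp, N, h⟩ := this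
        refine ⟨p.comp (Polynomial.X + Polynomial.C 1), ?_, N, fun r hr => ?_⟩
        · rw [Polynomial.natDegree_comp, Polynomial.natDegree_X_add_C, mul_one]
          exact hp
        · have h3 := h (r + 1) (by omega)
          simp only [Nat.sub_zero] at h3 ⊢
          rw [← h3, Polynomial.eval_comp]
          simp
      · refine (this.shift (J - 1)).congr 0 fun r _ => ?_
        rw [show r + 1 - J = r - (J - 1) by omega]
    refine (h1.add h2).congr J fun r hr => ?_
    rw [cnt_succ]
    obtain ⟨e, he⟩ : ∃ e, r + 1 = J + e := Nat.exists_eq_add_of_le (by omega)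
    rw [he, sum_range_add, Nat.add_sub_cancel_left]
    congr 1
    rw [← sum_range_reflect]
    refine sum_congr rfl fun t ht => ?_
    have := mem_range.1 ht
    rw [hJ (J + t) (by omega)]
    congr 1
    omega

end Bern
set_option linter.unusedSectionVars false

namespace Bern

lemma greedy {K M I L : Type*} [Field K] [AddCommGroup M] [Module K M] [LinearOrder L]
    (v : I → M) (key : I → L) (hkey : Function.Injective key) (S : Finset I)
    [DecidablePred fun a => v a ∈ Submodule.span K (v '' {b | key b < key a})] :
    (∀ a ∈ S, ∀ b, key b < key a → b ∈ S) →
    Module.finrank K (Submodule.span K (v '' (S : Set I))) =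
      (S.filter fun a => ¬ v a ∈ Submodule.span K (v '' {b | key b < key a})).card := by
  classical
  refine Finset.induction_on_max_value key
    (motive := fun S => (∀ a ∈ S, ∀ b, key b < key a → b ∈ S) →
      Module.finrank K (Submodule.span K (v '' (S : Set I))) =
      (S.filter fun a => ¬ v a ∈ Submodule.span K (v '' {b | key b < key a})).card) S ?_ ?_
  · intro _
    rw [Finset.coe_empty, Set.image_empty, Submodule.span_empty, finrank_bot]
    simp
  · intro a s has hmax ih hlow
    have hs : ∀ x ∈ s, ∀ b, key b < key x → b ∈ s := by
      intro x hx b hb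
      have h1 := hlow x (Finset.mem_insert_of_mem hx) b hb
      rcases Finset.mem_insert.1 h1 with rfl | h
      · exact absurd hb (not_lt.2 (hmax x hx))
      · exact h
    have hset : {b | key b < key a} = (s : Set I) := by
      ext b
      constructor
      · intro hb
        rcases Finset.mem_insert.1 (hlow a (Finset.mem_insert_self _ _) b hb) with rfl | h
        · exact absurd hb (lt_irrefl _)
        · exact h
      · intro hb
        refine lt_of_le_of_ne (hmax b hb) fun h => has ?_
        rw [← hkey h]; exact hb
    have ih := ih hs
    simp only [Finset.filter_insert, hset]
    rw [Finset.coe_insert, Set.image_insert_eq, Submodule.span_insert]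
    have hfd : FiniteDimensional K (Submodule.span K (v '' (s : Set I))) :=
      FiniteDimensional.span_of_finite K (s.finite_toSet.image v)
    by_cases hv : v a ∈ Submodule.span K (v '' (s : Set I))
    · rw [if_neg (by simpa using hv), ← ih]
      rw [sup_eq_right.2 ((Submodule.span_singleton_le_iff_mem _ _).2 hv)]
    · rw [if_pos hv, Finset.card_insert_of_notMem (by simp [has]), ← ih]
      have h0 : v a ≠ 0 := fun h => hv (by rw [h]; exact Submodule.zero_mem _)
      have hinf : Submodule.span K {v a} ⊓ Submodule.span K (v '' (s : Set I)) = ⊥ := by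
        rw [← disjoint_iff, disjoint_comm, Submodule.disjoint_span_singleton' h0]
        exact hv
      have := Submodule.finrank_sup_add_finrank_inf_eq (Submodule.span K {v a})
        (Submodule.span K (v '' (s : Set I)))
      rw [hinf, finrank_bot, finrank_span_singleton h0] at this
      omega

/-- degree-lexicographic key -/
def key1 {k : ℕ} (a : Fin k → ℕ) : ℕ ×ₗ Lex (Fin k → ℕ) := toLex (∑ i, a i, toLex a)

def key2 {k m : ℕ} (a : (Fin k → ℕ) × Fin m) : (ℕ ×ₗ Lex (Fin k → ℕ)) ×ₗ Fin m :=
  toLex (key1 a.1, a.2)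

lemma key1_inj {k : ℕ} : Function.Injective (key1 (k := k)) := by
  intro a b h
  have := congrArg (fun x => (ofLex x).2) h
  exact toLex_inj.1 this

lemma key2_inj {k m : ℕ} : Function.Injective (key2 (k := k) (m := m)) := by
  intro a b h
  have h1 := congrArg (fun x => (ofLex x).1) h
  have h2 := congrArg (fun x => (ofLex x).2) h
  exact Prod.ext (key1_inj h1) h2

lemma key1_add {k : ℕ} (a b : Fin k → ℕ) : key1 (a + b) = key1 a + key1 b := by
  unfold key1
  simp only [Pi.add_apply, Finset.sum_add_distrib]
  rfl

lemma key1_lt_of_deg {k : ℕ} {a b : Fin k → ℕ} (h : ∑ i, a i < ∑ i, b i) : key1 a < key1 b :=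
  Prod.Lex.toLex_lt_toLex.2 (Or.inl h)

lemma deg_le_of_key1 {k : ℕ} {a b : Fin k → ℕ} (h : key1 a < key1 b) : ∑ i, a i ≤ ∑ i, b i := by
  rcases Prod.Lex.toLex_lt_toLex.1 h with h | h
  · exact h.le
  · exact h.1.le

lemma key1_add_lt {k : ℕ} {a b : Fin k → ℕ} (c : Fin k → ℕ) :
    key1 (a + c) < key1 (b + c) ↔ key1 a < key1 b := by
  rw [key1_add, key1_add]
  exact add_lt_add_iff_right _

lemma key2_lt_of_deg {k m : ℕ} {a b : (Fin k → ℕ) × Fin m} (h : ∑ i, a.1 i < ∑ i, b.1 i) :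
    key2 a < key2 b :=
  Prod.Lex.toLex_lt_toLex.2 (Or.inl (key1_lt_of_deg h))

lemma deg_le_of_key2 {k m : ℕ} {a b : (Fin k → ℕ) × Fin m} (h : key2 a < key2 b) :
    ∑ i, a.1 i ≤ ∑ i, b.1 i := by
  rcases Prod.Lex.toLex_lt_toLex.1 h with h | h
  · exact deg_le_of_key1 h
  · exact (congrArg (fun a : Fin k → ℕ => ∑ i, a i) (key1_inj h.1)).le

lemma key2_add_lt {k m : ℕ} {a b : (Fin k → ℕ) × Fin m} (c : Fin k → ℕ) (h : key2 a < key2 b) :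
    key2 (a.1 + c, a.2) < key2 (b.1 + c, b.2) := by
  rcases Prod.Lex.toLex_lt_toLex.1 h with h | h
  · exact Prod.Lex.toLex_lt_toLex.2 (Or.inl ((key1_add_lt c).2 h))
  · refine Prod.Lex.toLex_lt_toLex.2 (Or.inr ⟨?_, h.2⟩)
    have := key1_inj h.1
    simp only [this]

lemma deg_add_single {k : ℕ} (a : Fin k → ℕ) (j : Fin k) :
    ∑ i, (a + Pi.single j 1 : Fin k → ℕ) i = ∑ i, a i + 1 := by
  simp [Finset.sum_add_distrib]

lemma sub_add_single {k : ℕ} (a : Fin k → ℕ) (j : Fin k) (h : a j ≠ 0) :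
    a - Pi.single j 1 + Pi.single j 1 = a := by
  refine tsub_add_cancel_of_le ?_
  rw [Pi.le_def]
  intro i
  rcases eq_or_ne i j with rfl | hi
  · simp; omega
  · simp [Pi.single_eq_of_ne hi]

lemma upper_of_step {k : ℕ} (U : Set (Fin k → ℕ)) (h : ∀ a j, a ∈ U → a + Pi.single j 1 ∈ U) :
    IsUpperSet U := by
  have key : ∀ N : ℕ, ∀ c : Fin k → ℕ, ∑ i, c i = N → ∀ a ∈ U, a + c ∈ U := by
    intro N
    induction N with
    | zero =>
      intro c hc a ha
      have : c = 0 := by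
        funext i
        simpa using (Finset.sum_eq_zero_iff.1 hc) i (Finset.mem_univ _)
      simpa [this] using ha
    | succ N ih =>
      intro c hc a ha
      have : ∃ j, c j ≠ 0 := by
        by_contra hcon
        push Not at hcon
        simp [hcon] at hc
      obtain ⟨j, hj⟩ := this
      have h1 := sub_add_single c j hj
      have h2 := deg_add_single (c - Pi.single j 1) j
      rw [h1] at h2
      rw [← h1, ← add_assoc]
      exact h _ _ (ih _ (by omega) a ha)
  intro a b hab ha
  have := key _ (b - a) rfl a ha
  rwa [add_tsub_cancel_of_le hab] at this

section
variable {K A M : Type*} [Field K] [Ring A] [Algebra K A] [AddCommGroup M] [Module K M]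
  [Module A M] [IsScalarTower K A M]

/-- span of monomials of degree at most `r` -/
def Wf (K : Type*) {A : Type*} [Field K] [Ring A] [Algebra K A] {k : ℕ}
    (mono : (Fin k → ℕ) → A) (r : ℕ) : Submodule K A :=
  Submodule.span K (mono '' {a | ∑ i, a i ≤ r})

def vf {A M : Type*} [Ring A] [AddCommGroup M] [Module A M] {k m : ℕ}
    (mono : (Fin k → ℕ) → A) (g : Fin m → M) (a : (Fin k → ℕ) × Fin m) : M := mono a.1 • g a.2

def Mf (K : Type*) {A M : Type*} [Field K] [Ring A] [AddCommGroup M] [Module K M]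
    [Module A M] {k m : ℕ}
    (mono : (Fin k → ℕ) → A) (g : Fin m → M) (r : ℕ) : Submodule K M :=
  Submodule.span K (vf mono g '' {a | ∑ i, a.1 i ≤ r})

variable {k m : ℕ} (w w' : Fin k → A) (mono : (Fin k → ℕ) → A) (g : Fin m → M)

lemma smul_span_mem (D : A) (s : Set M) (N : Submodule K M) (h : ∀ x ∈ s, D • x ∈ N) {x : M}
    (hx : x ∈ Submodule.span K s) : D • x ∈ N := by
  have : Submodule.span K s ≤ N.comap (Algebra.lsmul K K M D) := Submodule.span_le.2 h
  exact this hx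

lemma span_smul_mem (s : Set A) (N : Submodule K M) (x : M) (h : ∀ D ∈ s, D • x ∈ N) {D : A}
    (hx : D ∈ Submodule.span K s) : D • x ∈ N := by
  have : Submodule.span K s ≤ N.comap ((Algebra.lsmul K K M).toLinearMap.flip x) :=
    Submodule.span_le.2 h
  exact this hx

lemma Mf_mono {r s : ℕ} (h : r ≤ s) : Mf K mono g r ≤ Mf K mono g s :=
  Submodule.span_mono (Set.image_mono fun _ ha => le_trans (b := r) ha h)

lemma Wf_smul_g {r : ℕ} {D : A} (hD : D ∈ Wf K mono r) (i : Fin m) : D • g i ∈ Mf K mono g r := by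
  refine span_smul_mem _ _ _ ?_ hD
  rintro _ ⟨a, ha, rfl⟩
  exact Submodule.subset_span ⟨(a, i), ha, rfl⟩

variable (hF1 : ∀ j a, w j * mono a - mono (a + Pi.single j 1) ∈ Wf K mono (∑ i, a i))
include hF1

lemma w_smul_vf (j : Fin k) (a : (Fin k → ℕ) × Fin m) :
    ∃ y ∈ Mf K mono g (∑ i, a.1 i), w j • vf mono g a = vf mono g (a.1 + Pi.single j 1, a.2) + y := by
  refine ⟨_, Wf_smul_g mono g (hF1 j a.1) a.2, ?_⟩
  simp only [vf, sub_smul, mul_smul]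
  abel

lemma nonstd_step (a : Fin k → ℕ) (j : Fin k) (i : Fin m)
    (h : vf mono g (a, i) ∈ Submodule.span K (vf mono g '' {b | key2 b < key2 (a, i)})) :
    vf mono g (a + Pi.single j 1, i) ∈
      Submodule.span K (vf mono g '' {b | key2 b < key2 (a + Pi.single j 1, i)}) := by
  have hlow : Mf K mono g (∑ i, a i) ≤
      Submodule.span K (vf mono g '' {b | key2 b < key2 (a + Pi.single j 1, i)}) := by
    refine Submodule.span_mono (Set.image_mono fun b hb => key2_lt_of_deg ?_)
    rw [deg_add_single]
    exact Nat.lt_succ_of_le hb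
  obtain ⟨y, hy, e⟩ := w_smul_vf w mono g hF1 j (a, i)
  have : w j • vf mono g (a, i) ∈
      Submodule.span K (vf mono g '' {b | key2 b < key2 (a + Pi.single j 1, i)}) := by
    refine smul_span_mem _ _ _ ?_ h
    rintro _ ⟨b, hb, rfl⟩
    obtain ⟨z, hz, e'⟩ := w_smul_vf w mono g hF1 j b
    rw [e']
    refine Submodule.add_mem _ ?_ (hlow (Mf_mono mono g (deg_le_of_key2 hb) hz))
    exact Submodule.subset_span ⟨_, key2_add_lt (Pi.single j 1) hb, rfl⟩
  rw [e] at this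
  exact (Submodule.add_mem_iff_left _ (hlow hy)).1 this

theorem Mf_evPoly : EvPoly k (fun r => Module.finrank K (Mf K mono g r)) := by
  classical
  let U : Fin m → Set (Fin k → ℕ) := fun i =>
    {a | vf mono g (a, i) ∈ Submodule.span K (vf mono g '' {b | key2 b < key2 (a, i)})}
  have hU : ∀ i, IsUpperSet (U i) := fun i =>
    upper_of_step _ fun a j ha => nonstd_step w mono g hF1 a j i ha
  refine (EvPoly.sum Finset.univ (f := fun i => cnt k (U i)) fun i _ =>
    cnt_evPoly k (U i) (hU i)).congr 0 fun r _ => ?_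
  have hS : {a : (Fin k → ℕ) × Fin m | ∑ i, a.1 i ≤ r} =
      ((box k r ×ˢ (Finset.univ : Finset (Fin m)) : Finset _) : Set ((Fin k → ℕ) × Fin m)) := by
    ext a
    simp [mem_box]
  unfold Mf
  rw [hS, greedy (vf mono g) key2 key2_inj]
  · rw [Finset.card_eq_sum_card_fiberwise (f := fun a => a.2) (t := Finset.univ)
      (by intro _ _; simp)]
    refine Finset.sum_congr rfl fun i _ => ?_
    refine Finset.card_bij (fun a _ => (a, i)) ?_ ?_ ?_
    · intro a ha
      simpa [U] using ha
    · intro a _ b _ hab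
      exact congrArg Prod.fst hab
    · rintro ⟨a, i'⟩ hb
      simp only [Finset.mem_filter] at hb
      obtain ⟨⟨h1, h2⟩, rfl⟩ := hb
      refine ⟨a, ?_, rfl⟩
      simp only [Finset.mem_filter]
      exact ⟨(Finset.mem_product.1 h1).1, h2⟩
  · intro a ha b hb
    simp only [Finset.mem_product, mem_box, Finset.mem_univ, and_true] at ha ⊢
    exact (deg_le_of_key2 hb).trans ha

lemma w_smul_Mf (j : Fin k) {r : ℕ} {x : M} (hx : x ∈ Mf K mono g r) :
    w j • x ∈ Mf K mono g (r + 1) := by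
  refine smul_span_mem _ _ _ ?_ hx
  rintro _ ⟨b, hb, rfl⟩
  obtain ⟨z, hz, e'⟩ := w_smul_vf w mono g hF1 j b
  rw [e']
  have hb' : ∑ i, b.1 i ≤ r := hb
  refine Submodule.add_mem _ (Submodule.subset_span ⟨_, ?_, rfl⟩)
    (Mf_mono mono g (by omega) hz)
  change ∑ i, (b.1 + Pi.single j 1 : Fin k → ℕ) i ≤ r + 1
  rw [deg_add_single]
  omega

variable (h0 : mono 0 = 1)
include h0

lemma Wf_smul_Mf (r s : ℕ) {D : A} {x : M} (hD : D ∈ Wf K mono r) (hx : x ∈ Mf K mono g s) :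
    D • x ∈ Mf K mono g (r + s) := by
  induction r generalizing D with
  | zero =>
    refine span_smul_mem _ _ _ ?_ hD
    rintro _ ⟨a, ha, rfl⟩
    have : a = 0 := by
      funext i
      simpa using (Finset.sum_eq_zero_iff.1 (Nat.le_zero.1 ha)) i (Finset.mem_univ _)
    rw [this, h0, one_smul, zero_add]
    exact hx
  | succ r ih =>
    refine span_smul_mem _ _ _ ?_ hD
    rintro _ ⟨a, ha, rfl⟩
    have ha' : ∑ i, a i ≤ r + 1 := ha
    rcases Nat.lt_or_ge (∑ i, a i) (r + 1) with h | h
    · exact Mf_mono mono g (by omega) (ih (Submodule.subset_span ⟨a, Nat.le_of_lt_succ h, rfl⟩))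
    · have : ∃ j, a j ≠ 0 := by
        by_contra hcon
        push Not at hcon
        simp [hcon] at h
      obtain ⟨j, hj⟩ := this
      have h1 := sub_add_single a j hj
      have h2 := deg_add_single (a - Pi.single j 1) j
      have h3 := hF1 j (a - Pi.single j 1)
      rw [h1] at h2 h3
      have h4 : ∑ i, (a - Pi.single j 1 : Fin k → ℕ) i = r := by omega
      rw [h4] at h3
      have h5 := ih h3
      have h6 : mono (a - Pi.single j 1) • x ∈ Mf K mono g (r + s) :=
        ih (Submodule.subset_span ⟨_, h4.le, rfl⟩)
      have h7 := w_smul_Mf w mono g hF1 j h6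
      rw [sub_smul, mul_smul] at h5
      have h8 := Submodule.sub_mem _ h7 (Mf_mono mono g (by omega : r + s ≤ r + s + 1) h5)
      rw [sub_sub_cancel] at h8
      rwa [show r + 1 + s = r + s + 1 by omega]

omit hF1
variable [CharZero K]
variable (hF2 : ∀ j, ∃ j', ∃ ε : K, ε ≠ 0 ∧ ∀ a,
  mono a * w j' - w j' * mono a = (ε * (a j : K)) • mono (a - Pi.single j 1))
include hF2

lemma mono_std [Nontrivial A] (N : ℕ) : ∀ a : Fin k → ℕ, ∑ i, a i = N →
    mono a ∉ Submodule.span K (mono '' {b | key1 b < key1 a}) := by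
  induction N with
  | zero =>
    intro a ha
    have hz : ∀ c : Fin k → ℕ, ∑ i, c i ≤ 0 → c = 0 := by
      intro c hc
      funext i
      simpa using (Finset.sum_eq_zero_iff.1 (Nat.le_zero.1 hc)) i (Finset.mem_univ _)
    have ha0 := hz a ha.le
    have : {b | key1 b < key1 a} = ∅ := by
      ext b
      simp only [Set.mem_ofPred_eq, Set.mem_empty_iff_false, iff_false]
      intro hb
      have := hz b ((deg_le_of_key1 hb).trans ha.le)
      rw [this, ha0] at hb
      exact lt_irrefl _ hb
    rw [this, ha0, h0]
    simp
  | succ N ih =>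
    intro a ha hmem
    have : ∃ j, a j ≠ 0 := by
      by_contra hcon
      push Not at hcon
      simp [hcon] at ha
    obtain ⟨j, hj⟩ := this
    have h1 := sub_add_single a j hj
    have h2 := deg_add_single (a - Pi.single j 1) j
    rw [h1] at h2
    refine ih (a - Pi.single j 1) (by omega) ?_
    obtain ⟨j', ε, hε, hc⟩ := hF2 j
    let ad : A →ₗ[K] A := LinearMap.mulRight K (w j') - LinearMap.mulLeft K (w j')
    have had : ∀ a, ad (mono a) = (ε * (a j : K)) • mono (a - Pi.single j 1) := fun a => hc a
    set N' := Submodule.span K (mono '' {b | key1 b < key1 (a - Pi.single j 1)}) with hN'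
    have : Submodule.span K (mono '' {b | key1 b < key1 a}) ≤ N'.comap ad := by
      refine Submodule.span_le.2 ?_
      rintro _ ⟨b, hb, rfl⟩
      change ad (mono b) ∈ N'
      rw [had]
      by_cases hbj : b j = 0
      · simp [hbj]
      · refine Submodule.smul_mem _ _ (Submodule.subset_span ⟨_, ?_, rfl⟩)
        change key1 _ < key1 _
        rw [← key1_add_lt (Pi.single j 1), sub_add_single b j hbj, h1]
        exact hb
    have h3 : ad (mono a) ∈ N' := this hmem
    rw [had] at h3
    have hne : ε * (a j : K) ≠ 0 := mul_ne_zero hε (Nat.cast_ne_zero.2 hj)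
    exact (Submodule.smul_mem_iff _ hne).1 h3

lemma finrank_Wf [Nontrivial A] (r : ℕ) : Module.finrank K (Wf K mono r) = (box k r).card := by
  classical
  have hS : {a : Fin k → ℕ | ∑ i, a i ≤ r} = ((box k r : Finset _) : Set (Fin k → ℕ)) := by
    ext a
    simp [mem_box]
  unfold Wf
  rw [hS, greedy mono key1 key1_inj]
  · rw [Finset.filter_true_of_mem]
    intro a _
    exact mono_std w mono h0 hF2 _ a rfl
  · intro a ha b hb
    rw [mem_box] at ha ⊢
    exact (deg_le_of_key1 hb).trans ha

variable (hF3 : ∀ j', ∃ j, ∃ ε : K, ∀ a,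
  mono a * w j' - w j' * mono a = (ε * (a j : K)) • mono (a - Pi.single j 1))
variable (hcen : ∀ D : A, (∀ j, D * w j = w j * D) → ∃ c : K, D = algebraMap K A c)
include hF1 hF3 hcen
omit hF2

lemma comm_mem {r : ℕ} (j' : Fin k) {D : A} (hD : D ∈ Wf K mono (r + 1)) :
    D * w j' - w j' * D ∈ Wf K mono r := by
  obtain ⟨j, ε, hc⟩ := hF3 j'
  let ad : A →ₗ[K] A := LinearMap.mulRight K (w j') - LinearMap.mulLeft K (w j')
  have had : ∀ a, ad (mono a) = (ε * (a j : K)) • mono (a - Pi.single j 1) := fun a => hc a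
  have : Wf K mono (r + 1) ≤ (Wf K mono r).comap ad := by
    refine Submodule.span_le.2 ?_
    rintro _ ⟨b, hb, rfl⟩
    change ad (mono b) ∈ Wf K mono r
    rw [had]
    by_cases hbj : b j = 0
    · simp [hbj]
    · refine Submodule.smul_mem _ _ (Submodule.subset_span ⟨_, ?_, rfl⟩)
      have h2 := deg_add_single (b - Pi.single j 1) j
      rw [sub_add_single b j hbj] at h2
      have hb' : ∑ i, b i ≤ r + 1 := hb
      change ∑ i, (b - Pi.single j 1 : Fin k → ℕ) i ≤ r
      omega
  exact this hD

lemma comm_zero (j' : Fin k) {D : A} (hD : D ∈ Wf K mono 0) :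
    D * w j' - w j' * D = 0 := by
  let ad : A →ₗ[K] A := LinearMap.mulRight K (w j') - LinearMap.mulLeft K (w j')
  have : Wf K mono 0 ≤ LinearMap.ker ad := by
    refine Submodule.span_le.2 ?_
    rintro _ ⟨b, hb, rfl⟩
    have : b = 0 := by
      funext i
      simpa using (Finset.sum_eq_zero_iff.1 (Nat.le_zero.1 hb)) i (Finset.mem_univ _)
    change ad (mono b) = 0
    rw [this, h0]
    simp [ad]
  exact this hD

lemma inj_aux (hg : ∃ i, g i ≠ 0) (r : ℕ) {D : A} (hD : D ∈ Wf K mono r)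
    (hk : ∀ x ∈ Mf K mono g r, D • x = 0) : D = 0 := by
  have fin : ∀ (r : ℕ) (D : A), (∀ x ∈ Mf K mono g r, D • x = 0) →
      (∀ j, D * w j - w j * D = 0) → D = 0 := by
    intro r D hk hcomm
    obtain ⟨c, rfl⟩ := hcen D fun j => sub_eq_zero.1 (hcomm j)
    obtain ⟨i, hi⟩ := hg
    have : g i ∈ Mf K mono g r := by
      refine Submodule.subset_span ⟨(0, i), ?_, ?_⟩
      · change ∑ j, (0 : Fin k → ℕ) j ≤ r
        simp
      · simp [vf, h0]
    have h := hk _ this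
    rw [algebraMap_smul] at h
    rw [(smul_eq_zero.1 h).resolve_right hi, map_zero]
  induction r generalizing D with
  | zero => exact fin 0 D hk fun j => comm_zero w mono hF1 h0 hF3 hcen j hD
  | succ r ih =>
    refine fin _ D hk fun j => ?_
    refine ih (comm_mem w mono hF1 h0 hF3 hcen j hD) fun x hx => ?_
    rw [sub_smul, mul_smul, mul_smul, hk _ (w_smul_Mf w mono g hF1 j hx),
      hk _ (Mf_mono mono g (Nat.le_succ r) hx), smul_zero, sub_zero]

include hF2 in
lemma card_le [Nontrivial A] (hg : ∃ i, g i ≠ 0) (r : ℕ) :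
    (box k r).card ≤ Module.finrank K (Mf K mono g r) * Module.finrank K (Mf K mono g (r + r)) := by
  have hfd : ∀ r, FiniteDimensional K (Mf K mono g r) := by
    intro r
    refine FiniteDimensional.span_of_finite K (Set.Finite.image _ ?_)
    have hS : {a : (Fin k → ℕ) × Fin m | ∑ i, a.1 i ≤ r} =
        ((box k r ×ˢ (Finset.univ : Finset (Fin m)) : Finset _) : Set ((Fin k → ℕ) × Fin m)) := by
      ext a
      simp [mem_box]
    rw [hS]
    exact Finset.finite_toSet _
  have := hfd r
  have := hfd (r + r)
  rw [← finrank_Wf w mono h0 hF2 r, ← Module.finrank_linearMap (R := K) (S := K)]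
  let φ : Wf K mono r →ₗ[K] (Mf K mono g r →ₗ[K] Mf K mono g (r + r)) :=
    LinearMap.mk₂ K (fun D x => ⟨D.1 • x.1, Wf_smul_Mf w mono g hF1 h0 r r D.2 x.2⟩)
      (by intro a b x; ext; simp [add_smul])
      (by intro c a x; ext; simp)
      (by intro a x y; ext; simp)
      (by intro c a x; ext; exact smul_comm _ _ _)
  refine LinearMap.finrank_le_finrank_of_injective (f := φ) ?_
  rw [injective_iff_map_eq_zero]
  intro D hD
  refine Subtype.ext (inj_aux w mono g hF1 h0 hF3 hcen hg r D.2 fun x hx => ?_)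
  have := congrArg (fun f => (f ⟨x, hx⟩ : M)) hD
  exact this

end

open Finset in
lemma box_lower (k s : ℕ) : s ^ k ≤ (box k (k * s)).card := by
  have : (Fintype.piFinset fun _ : Fin k => range s).card = s ^ k := by simp
  rw [← this]
  refine card_le_card fun a ha => mem_box.2 ?_
  rw [Fintype.mem_piFinset] at ha
  calc ∑ i, a i ≤ ∑ _i : Fin k, s := sum_le_sum fun i _ => (mem_range.1 (ha i)).le
    _ = k * s := by simp

lemma deg_bound (n k : ℕ) (hk : k = 2 * n) (f : ℕ → ℕ) (p : Polynomial ℚ) (N : ℕ)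
    (hp : ∀ r : ℕ, N ≤ r → p.eval (r : ℚ) = (f r : ℚ))
    (h : ∀ s : ℕ, s ^ k ≤ f (k * s) * f (k * s + k * s)) : n ≤ p.natDegree := by
  by_contra hlt
  push Not at hlt
  have hk0 : 1 ≤ k := by omega
  let q : Polynomial ℚ := p.comp (Polynomial.C (k : ℚ) * Polynomial.X) *
    p.comp (Polynomial.C (2 * k : ℚ) * Polynomial.X)
  have hq : q.natDegree < k := by
    refine Polynomial.natDegree_mul_le.trans_lt ?_
    rw [Polynomial.natDegree_comp, Polynomial.natDegree_comp]
    have h1 := Polynomial.natDegree_C_mul_le (k : ℚ) Polynomial.X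
    have h2 := Polynomial.natDegree_C_mul_le (2 * k : ℚ) Polynomial.X
    rw [Polynomial.natDegree_X] at h1 h2
    have h1' := Nat.mul_le_mul_left p.natDegree h1
    have h2' := Nat.mul_le_mul_left p.natDegree h2
    omega
  have hdeg : q.degree < (Polynomial.X ^ k : Polynomial ℚ).degree := by
    rw [Polynomial.degree_X_pow]
    exact lt_of_le_of_lt Polynomial.degree_le_natDegree (by exact_mod_cast hq)
  have ht := Polynomial.div_tendsto_atTop_zero_of_degree_lt q (Polynomial.X ^ k) hdeg
  have ht' := ht.comp (tendsto_natCast_atTop_atTop (R := ℚ))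
  have hev := (ht'.eventually (gt_mem_nhds (zero_lt_one' ℚ))).and
    (Filter.eventually_ge_atTop (N + 1))
  obtain ⟨s, hs1, hs2⟩ := hev.exists
  have hks : N ≤ k * s := by nlinarith
  have e1 : Polynomial.eval (s : ℚ) q = ((f (k * s) * f (k * s + k * s) : ℕ) : ℚ) := by
    simp only [q, Polynomial.eval_mul, Polynomial.eval_comp, Polynomial.eval_C, Polynomial.eval_X]
    rw [Nat.cast_mul, ← hp _ hks, ← hp _ (by omega : N ≤ k * s + k * s)]
    push_cast
    congr 2
    ring
  simp only [Function.comp, e1, Polynomial.eval_pow, Polynomial.eval_X] at hs1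
  have hspos : (0 : ℚ) < (s : ℚ) ^ k := by
    have : (0 : ℚ) < s := by exact_mod_cast (by omega : 0 < s)
    positivity
  rw [div_lt_one hspos] at hs1
  have := h s
  have : ((s ^ k : ℕ) : ℚ) ≤ ((f (k * s) * f (k * s + k * s) : ℕ) : ℚ) := by exact_mod_cast this
  push_cast at this hs1
  linarith

end Bern
namespace Bern

section
variable {R : Type*} [Monoid R] {n : ℕ} (f : Fin n → R) (hf : ∀ i j, f i * f j = f j * f i)

def PP (α : Fin n → ℕ) : R := ((List.finRange n).map fun i => f i ^ α i).prod

lemma PP_zero : PP f 0 = 1 := by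
  unfold PP
  apply List.prod_eq_one
  intro x hx
  obtain ⟨i, _, rfl⟩ := List.mem_map.1 hx
  simp

include hf

lemma list_succ (α : Fin n → ℕ) (i : Fin n) (l : List (Fin n)) (hl : l.Nodup) (hi : i ∈ l) :
    (l.map fun j => f j ^ (α + Pi.single i 1 : Fin n → ℕ) j).prod =
      f i * (l.map fun j => f j ^ α j).prod := by
  induction l with
  | nil => simp at hi
  | cons j l ih =>
    rw [List.nodup_cons] at hl
    simp only [List.map_cons, List.prod_cons]
    by_cases hij : i = j
    · subst hij
      have : (l.map fun j => f j ^ (α + Pi.single i 1 : Fin n → ℕ) j) = l.map fun j => f j ^ α j := by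
        refine List.map_congr_left fun x hx => ?_
        have hxi : x ≠ i := fun h => hl.1 (h ▸ hx)
        simp [hxi]
      rw [this]
      simp only [Pi.add_apply, Pi.single_eq_same]
      rw [pow_succ', mul_assoc]
    · have hil : i ∈ l := by
        rcases List.mem_cons.1 hi with h | h
        · exact absurd h hij
        · exact h
      rw [ih hl.2 hil, ← mul_assoc, ← mul_assoc]
      congr 1
      have hji : j ≠ i := fun h => hij h.symm
      simp only [Pi.add_apply, Pi.single_eq_of_ne hji, add_zero]
      exact (Commute.pow_left (hf j i) (α j))

lemma PP_succ (α : Fin n → ℕ) (i : Fin n) : PP f (α + Pi.single i 1) = f i * PP f α :=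
  list_succ f hf α i _ (List.nodup_finRange n) (List.mem_finRange i)

lemma PP_comm (α : Fin n → ℕ) (i : Fin n) : f i * PP f α = PP f α * f i := by
  refine Commute.list_prod_right _ _ ?_
  intro x hx
  obtain ⟨j, _, rfl⟩ := List.mem_map.1 hx
  exact Commute.pow_right (hf i j) _

end

lemma exp_induction {n : ℕ} {P : (Fin n → ℕ) → Prop} (h0 : P 0)
    (hs : ∀ a j, P a → P (a + Pi.single j 1)) (a : Fin n → ℕ) : P a := by
  have := upper_of_step {a | P a} (fun a j h => hs a j h)
  exact this (show (0 : Fin n → ℕ) ≤ a from fun i => Nat.zero_le _) h0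

lemma PP_deriv {K R : Type*} [Field K] [Ring R] [Algebra K R] {n : ℕ} (f : Fin n → R)
    (hf : ∀ i j, f i * f j = f j * f i) (d : R) (i : Fin n) (ε : K)
    (hd : ∀ j, d * f j - f j * d = (if i = j then ε else 0) • (1 : R)) (α : Fin n → ℕ) :
    d * PP f α - PP f α * d = (ε * (α i : K)) • PP f (α - Pi.single i 1) := by
  induction α using exp_induction with
  | h0 => simp [PP_zero]
  | hs α j ih =>
    have e1 : d * PP f (α + Pi.single j 1) - PP f (α + Pi.single j 1) * d =
        (d * f j - f j * d) * PP f α + f j * (d * PP f α - PP f α * d) := by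
      rw [PP_succ f hf]; noncomm_ring
    rw [e1, ih, hd j, smul_mul_assoc, one_mul, mul_smul_comm]
    by_cases hij : i = j
    · subst hij
      rw [add_tsub_cancel_right, if_pos rfl]
      by_cases h : α i = 0
      · simp [h]
      · rw [← PP_succ f hf, sub_add_single α i h, ← add_smul]
        congr 1
        simp
        ring
    · rw [if_neg hij, zero_smul, zero_add]
      have h1 : (α + Pi.single j 1 : Fin n → ℕ) i = α i := by simp [hij]
      rw [h1]
      by_cases h : α i = 0
      · simp [h]
      · rw [← PP_succ f hf]
        congr 2
        funext x
        by_cases hx : x = i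
        · subst hx; simp [hij]
        · simp [hx]

/-- the defining relations of the Weyl algebra -/
structure IsWeyl (K : Type*) {R : Type*} [Field K] [Ring R] [Algebra K R] {n : ℕ}
    (x d : Fin n → R) : Prop where
  hx : ∀ i j, x i * x j = x j * x i
  hd : ∀ i j, d i * d j = d j * d i
  hdx : ∀ i j, d i * x j - x j * d i = (if i = j then (1 : K) else 0) • (1 : R)

def IsCen (K : Type*) {R ι : Type*} [Field K] [Ring R] [Algebra K R] (w : ι → R) : Prop :=
  ∀ D : R, (∀ j, D * w j = w j * D) → ∃ c : K, D = algebraMap K R c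

def gen {R : Type*} {n : ℕ} (x d : Fin n → R) : Fin (n + n) → R := Fin.append x d

def mono {R : Type*} [Monoid R] {n : ℕ} (x d : Fin n → R) (a : Fin (n + n) → ℕ) : R :=
  PP x (fun i => a (Fin.castAdd n i)) * PP d (fun i => a (Fin.natAdd n i))

section
variable {K R : Type*} [Field K] [Ring R] [Algebra K R] {n : ℕ} (x d : Fin n → R)
  (hx : ∀ i j, x i * x j = x j * x i) (hd : ∀ i j, d i * d j = d j * d i)
  (hdx : ∀ i j, d i * x j - x j * d i = (if i = j then (1 : K) else 0) • (1 : R))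

include hdx in
lemma wx_wd (i j : Fin n) : x i * d j - d j * x i =
    (if i = j then (-1 : K) else 0) • (1 : R) := by
  rw [← neg_sub, hdx, ← neg_smul]
  by_cases h : i = j
  · subst h; simp
  · simp [h, Ne.symm h]

lemma mono_zero : mono x d 0 = 1 := by
  have h1 := PP_zero x
  have h2 := PP_zero d
  change PP x 0 * PP d 0 = 1
  rw [h1, h2, one_mul]

lemma cast_single_cast (i : Fin n) :
    (fun y => (Pi.single (Fin.castAdd n i) 1 : Fin (n + n) → ℕ) (Fin.castAdd n y)) = Pi.single i 1 := by
  funext y; simp [Pi.single_apply, Fin.ext_iff]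

lemma cast_single_nat (i : Fin n) :
    (fun y => (Pi.single (Fin.castAdd n i) 1 : Fin (n + n) → ℕ) (Fin.natAdd n y)) = 0 := by
  funext y
  simp [Pi.single_apply, Fin.ext_iff]
  omega

lemma nat_single_cast (i : Fin n) :
    (fun y => (Pi.single (Fin.natAdd n i) 1 : Fin (n + n) → ℕ) (Fin.castAdd n y)) = 0 := by
  funext y
  simp [Pi.single_apply, Fin.ext_iff]
  omega

lemma nat_single_nat (i : Fin n) :
    (fun y => (Pi.single (Fin.natAdd n i) 1 : Fin (n + n) → ℕ) (Fin.natAdd n y)) = Pi.single i 1 := by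
  funext y; simp [Pi.single_apply, Fin.ext_iff]

lemma mono_add (a b : Fin (n + n) → ℕ) : mono x d (a + b) =
    PP x ((fun i => a (Fin.castAdd n i)) + fun i => b (Fin.castAdd n i)) *
    PP d ((fun i => a (Fin.natAdd n i)) + fun i => b (Fin.natAdd n i)) := rfl

lemma mono_sub (a b : Fin (n + n) → ℕ) : mono x d (a - b) =
    PP x ((fun i => a (Fin.castAdd n i)) - fun i => b (Fin.castAdd n i)) *
    PP d ((fun i => a (Fin.natAdd n i)) - fun i => b (Fin.natAdd n i)) := rfl

include hx hd hdx

lemma comm_wd (i : Fin n) (a : Fin (n + n) → ℕ) :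
    mono x d a * d i - d i * mono x d a =
      ((-1 : K) * (a (Fin.castAdd n i) : K)) • mono x d (a - Pi.single (Fin.castAdd n i) 1) := by
  rw [mono_sub, cast_single_cast, cast_single_nat, tsub_zero, mono]
  have h := PP_deriv x (hx) (d i) i (1 : K) (hdx i)
    (fun i => a (Fin.castAdd n i))
  have h2 := PP_comm d (hd) (fun i => a (Fin.natAdd n i)) i
  rw [mul_assoc, ← h2, ← mul_assoc, ← mul_assoc, ← sub_mul, ← neg_sub, h, neg_one_mul, neg_smul,
    one_mul, neg_mul, smul_mul_assoc]

lemma comm_wx (i : Fin n) (a : Fin (n + n) → ℕ) :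
    mono x d a * x i - x i * mono x d a =
      ((1 : K) * (a (Fin.natAdd n i) : K)) • mono x d (a - Pi.single (Fin.natAdd n i) 1) := by
  rw [mono_sub, nat_single_cast, nat_single_nat, tsub_zero, mono]
  have h := PP_deriv d (hd) (x i) i (-1 : K) (wx_wd x d hdx i)
    (fun i => a (Fin.natAdd n i))
  have h2 := PP_comm x (hx) (fun i => a (Fin.castAdd n i)) i
  rw [← mul_assoc (x i), h2, mul_assoc, mul_assoc, ← mul_sub, ← neg_sub, h, neg_one_mul,
    neg_smul, neg_neg, one_mul, mul_smul_comm]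

lemma F1 (j : Fin (n + n)) (a : Fin (n + n) → ℕ) :
    gen x d j * mono x d a - mono x d (a + Pi.single j 1) ∈ Wf K (mono x d) (∑ i, a i) := by
  induction j using Fin.addCases with
  | left i =>
    rw [gen, Fin.append_left, mono_add, cast_single_cast, cast_single_nat, add_zero,
      PP_succ _ (hx), mono, mul_assoc, sub_self]
    exact Submodule.zero_mem _
  | right i =>
    have h := comm_wd x d hx hd hdx i a
    have e : mono x d (a + Pi.single (Fin.natAdd n i) 1) = mono x d a * d i := by
      rw [mono_add, nat_single_cast, nat_single_nat, add_zero, PP_succ _ (hd),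
        PP_comm _ (hd), mono, mul_assoc]
    rw [gen, Fin.append_right, e, ← neg_sub, h]
    refine Submodule.neg_mem _ ?_
    by_cases ha : a (Fin.castAdd n i) = 0
    · simp [ha]
    · refine Submodule.smul_mem _ _ (Submodule.subset_span ⟨_, ?_, rfl⟩)
      change ∑ x, (a - Pi.single (Fin.castAdd n i) 1 : Fin (n + n) → ℕ) x ≤ _
      exact Finset.sum_le_sum fun x _ => Nat.sub_le _ _

lemma F2 (j : Fin (n + n)) : ∃ j', ∃ ε : K, ε ≠ 0 ∧ ∀ a,
    mono x d a * gen x d j' - gen x d j' * mono x d a =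
      (ε * (a j : K)) • mono x d (a - Pi.single j 1) := by
  induction j using Fin.addCases with
  | left i =>
    refine ⟨Fin.natAdd n i, -1, by simp, fun a => ?_⟩
    rw [gen, Fin.append_right]
    exact comm_wd x d hx hd hdx i a
  | right i =>
    refine ⟨Fin.castAdd n i, 1, by simp, fun a => ?_⟩
    rw [gen, Fin.append_left]
    exact comm_wx x d hx hd hdx i a

lemma F3 (j' : Fin (n + n)) : ∃ j, ∃ ε : K, ∀ a,
    mono x d a * gen x d j' - gen x d j' * mono x d a =
      (ε * (a j : K)) • mono x d (a - Pi.single j 1) := by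
  induction j' using Fin.addCases with
  | left i =>
    refine ⟨Fin.natAdd n i, 1, fun a => ?_⟩
    rw [gen, Fin.append_left]
    exact comm_wx x d hx hd hdx i a
  | right i =>
    refine ⟨Fin.castAdd n i, -1, fun a => ?_⟩
    rw [gen, Fin.append_right]
    exact comm_wd x d hx hd hdx i a

end

lemma main_abs {K R M : Type*} [Field K] [CharZero K] [Ring R] [Nontrivial R] [Algebra K R]
    [AddCommGroup M] [Module K M] [Module R M] [IsScalarTower K R M] {n m : ℕ} (x d : Fin n → R)
    (hw : IsWeyl K x d) (hc : IsCen K (gen x d)) (g : Fin m → M) (hg : ∃ i, g i ≠ 0) :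
    ∃ p : Polynomial ℚ, p.natDegree ≤ 2 * n ∧ n ≤ p.natDegree ∧ ∃ N : ℕ, ∀ r : ℕ, N ≤ r →
      p.eval (r : ℚ) = (Module.finrank K (Mf K (mono x d) g r) : ℚ) := by
  have F1' := F1 x d hw.hx hw.hd hw.hdx
  obtain ⟨p, hp, N, h⟩ := Mf_evPoly (K := K) (gen x d) (mono x d) g F1'
  refine ⟨p, by omega, ?_, N, h⟩
  refine deg_bound n (n + n) (by omega) _ p N h fun s => ?_
  refine (box_lower (n + n) s).trans ?_
  exact card_le (gen x d) (mono x d) g F1' (mono_zero _ _)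
    (F2 x d hw.hx hw.hd hw.hdx) (F3 x d hw.hx hw.hd hw.hdx) hc hg _

section
variable (n : ℕ) (K : Type) [Field K]

lemma pderiv_swap (i j : Fin n) (p : MvPolynomial (Fin n) K) :
    pderiv i (pderiv j p) = pderiv j (pderiv i p) := by
  have : ⁅(pderiv i : Derivation K (MvPolynomial (Fin n) K) (MvPolynomial (Fin n) K)),
      (pderiv j : Derivation K (MvPolynomial (Fin n) K) (MvPolynomial (Fin n) K))⁆ = 0 := by
    refine MvPolynomial.derivation_ext fun k => ?_
    simp [Derivation.commutator_apply, pderiv_X, Pi.single_apply, apply_ite]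
  have h := congrArg (fun D => D p) this
  simp only [Derivation.commutator_apply] at h
  exact sub_eq_zero.1 h

lemma isWeyl : IsWeyl K (wx n K) (wd n K) := by
  constructor
  · intro i j
    refine Subtype.ext (LinearMap.ext fun p => ?_)
    change X i * (X j * p) = X j * (X i * p)
    ring
  · intro i j
    refine Subtype.ext (LinearMap.ext fun p => ?_)
    exact pderiv_swap n K i j p
  · intro i j
    refine Subtype.ext (LinearMap.ext fun p => ?_)
    change pderiv i (X j * p) - X j * pderiv i p = (if i = j then (1 : K) else 0) • p
    rw [Derivation.leibniz, pderiv_X]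
    by_cases h : i = j
    · subst h; simp
    · simp [h]

lemma mono_eq (a : Fin (n + n) → ℕ) : mono (wx n K) (wd n K) a =
    wMono n K (fun i => a (Fin.castAdd n i)) (fun i => a (Fin.natAdd n i)) := rfl

lemma const_of_pderiv [CharZero K] (q : MvPolynomial (Fin n) K) (h : ∀ i, pderiv i q = 0) :
    ∃ c : K, q = C c := by
  refine ⟨coeff 0 q, ?_⟩
  ext d
  rw [coeff_C]
  split_ifs with hd
  · rw [hd]
  · have : ∃ i, d i ≠ 0 := by
      by_contra hcon
      push Not at hcon
      exact hd (Finsupp.ext fun i => (hcon i).symm)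
    obtain ⟨i, hi⟩ := this
    have h1 := congrArg (coeff (d - Finsupp.single i 1)) (h i)
    rw [coeff_pderiv, coeff_zero] at h1
    have h2 : d - Finsupp.single i 1 + Finsupp.single i 1 = d := by
      refine tsub_add_cancel_of_le ?_
      rw [Finsupp.single_le_iff]
      omega
    rw [h2] at h1
    refine (mul_eq_zero.1 h1).resolve_right ?_
    exact Nat.cast_add_one_ne_zero _

lemma center [CharZero K] : IsCen K (gen (wx n K) (wd n K)) := by
  intro D h
  have hx : ∀ i p, D.1 (X i * p) = X i * D.1 p := by
    intro i p
    have := h (Fin.castAdd n i)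
    rw [gen, Fin.append_left] at this
    exact congrArg (fun E : WeylAlg n K => E.1 p) this
  have hd : ∀ i p, D.1 (pderiv i p) = pderiv i (D.1 p) := by
    intro i p
    have := h (Fin.natAdd n i)
    rw [gen, Fin.append_right] at this
    exact congrArg (fun E : WeylAlg n K => E.1 p) this
  obtain ⟨c, hc⟩ := const_of_pderiv n K (D.1 1) (fun i => by rw [← hd]; simp)
  refine ⟨c, Subtype.ext (LinearMap.ext fun p => ?_)⟩
  change D.1 p = c • p
  induction p using MvPolynomial.induction_on with
  | C a =>
    rw [← mul_one (C a), ← smul_eq_C_mul, map_smul, hc, smul_comm]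
    congr 1
    rw [smul_eq_C_mul, mul_one]
  | add p q hp hq => rw [map_add, hp, hq, smul_add]
  | mul_X p i hp => rw [mul_comm, hx, hp, mul_smul_comm]

lemma sum_split (a : Fin (n + n) → ℕ) :
    ∑ i, a i = ordTot n (fun i => a (Fin.castAdd n i)) (fun i => a (Fin.natAdd n i)) :=
  Fin.sum_univ_add a

lemma bernW_eq (r : ℕ) : bernW n K (r : ℤ) = Wf K (mono (wx n K) (wd n K)) r := by
  unfold bernW Wf
  congr 1
  ext D
  constructor
  · rintro ⟨α, β, h, rfl⟩
    refine ⟨Fin.append α β, ?_, ?_⟩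
    · change ∑ i, _ ≤ r
      rw [sum_split]
      simp only [Fin.append_left, Fin.append_right]
      exact_mod_cast h
    · rw [mono_eq]
      simp only [Fin.append_left, Fin.append_right]
  · rintro ⟨a, ha, rfl⟩
    refine ⟨_, _, ?_, mono_eq n K a⟩
    rw [← sum_split]
    exact_mod_cast ha

lemma modFil_eq (M : Type) [AddCommGroup M]
    [Module K M] [Module (WeylAlg n K) M] [IsScalarTower K (WeylAlg n K) M]
    (m : ℕ) (g : Fin m → M) (r : ℕ) :
    modFil n K M m g (r : ℤ) = Mf K (mono (wx n K) (wd n K)) g r := by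
  refine le_antisymm ?_ ?_
  · refine Submodule.span_le.2 ?_
    rintro _ ⟨i, D, hD, rfl⟩
    rw [bernW_eq] at hD
    exact Wf_smul_g _ g hD i
  · refine Submodule.span_mono ?_
    rintro _ ⟨a, ha, rfl⟩
    refine ⟨a.2, mono (wx n K) (wd n K) a.1, ?_, rfl⟩
    rw [bernW_eq]
    exact Submodule.subset_span ⟨_, ha, rfl⟩

end

end Bern

theorem statement_6 (n : ℕ) (K : Type) [Field K] [CharZero K]
    (M : Type) [AddCommGroup M] [Module K M] [Module (WeylAlg n K) M]
    [IsScalarTower K (WeylAlg n K) M] [Nontrivial M]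
    (m : ℕ) (g : Fin m → M)
    (hgen : Submodule.span (WeylAlg n K) (Set.range g) = ⊤) :
    ∃ ψ : Polynomial ℚ,
      (∃ s : ℤ, ∀ r : ℤ, s ≤ r →
        ψ.eval (r : ℚ) = (Module.finrank K (modFil n K M m g r) : ℚ)) ∧
      n ≤ ψ.natDegree ∧ ψ.natDegree ≤ 2 * n := by
  have hg : ∃ i, g i ≠ 0 := by
    by_contra hcon
    push Not at hcon
    have : Submodule.span (WeylAlg n K) (Set.range g) = ⊥ := by
      rw [Submodule.span_eq_bot]
      rintro _ ⟨i, rfl⟩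
      exact hcon i
    rw [this] at hgen
    exact bot_ne_top hgen
  have key : ∃ p : Polynomial ℚ, p.natDegree ≤ 2 * n ∧ n ≤ p.natDegree ∧ ∃ N : ℕ, ∀ r : ℕ, N ≤ r →
      p.eval (r : ℚ) = (Module.finrank K (Bern.Mf K (Bern.mono (wx n K) (wd n K)) g r) : ℚ) :=
    Bern.main_abs (wx n K) (wd n K) (Bern.isWeyl n K) (Bern.center n K) g hg
  obtain ⟨p, hp, hp', N, h⟩ := key
  refine ⟨p, ⟨N, fun r hr => ?_⟩, hp', hp⟩
  obtain ⟨t, rfl⟩ := Int.eq_ofNat_of_zero_le (by omega : 0 ≤ r)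
  rw [Bern.modFil_eq]
  have := h t (by omega)
  simpa using this
end

section
/- Let K be a field of characteristic zero, A_n(K) the Weyl algebra with a fixed partition of {1,…,n} into blocks of sizes n_1,…,n_p, E a free left A_n(K)-module with free generators e_1,…,e_m, N an A_n(K)-submodule of E, and G = {g_1,…,g_t} a Gröbner basis of N with respect to the orders <_1,…,<_p. Then: (i) f ∈ N if and only if f (<_1,<_2,…,<_p)-reduces to 0 modulo G; and (ii) if f ∈ N and f is (<_1,<_2,…,<_p)-reduced with respect to G, then f = 0. -/
set_option synthInstance.maxHeartbeats 400000
set_option maxHeartbeats 1000000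

open MvPolynomial

/-- The `j`-th order of the monomial `x^α ∂^β` with respect to the partition `B`. -/
def ordBlk {n p : ℕ} (B : Fin n → Fin p) (α β : Fin n → ℕ) (j : Fin p) : ℕ :=
  ∑ i ∈ Finset.univ.filter (fun i => B i = j), (α i + β i)

/-- An exponent pair `(α, β)` encoding the monomial `x^α ∂^β`. -/
abbrev WExp (n : ℕ) := (Fin n → ℕ) × (Fin n → ℕ)

/-- A term `θ e_i` of the free module `E`: a monomial together with the index of a
free generator. -/
abbrev WTerm (n m : ℕ) := WExp n × Fin m

/-- The `j`-th order of a term. -/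
def ordT {n p m : ℕ} (B : Fin n → Fin p) (j : Fin p) (t : WTerm n m) : ℕ :=
  ordBlk B t.1.1 t.1.2 j

/-- The comparison vector of a monomial used to define the order `<_j`:
the `j`-th order, then the other orders, then the exponents of the `j`-th block,
then the remaining exponents. -/
def keyList {n p : ℕ} (B : Fin n → Fin p) (j : Fin p) (t : WExp n) : List ℕ :=
  [ordBlk B t.1 t.2 j] ++
  (((List.finRange p).filter fun k => k ≠ j).map (ordBlk B t.1 t.2)) ++
  (((List.finRange n).filter fun i => B i = j).map t.1) ++
  (((List.finRange n).filter fun i => B i = j).map t.2) ++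
  ((((List.finRange n).filter fun i => B i ≠ j).map fun i => [t.1 i, t.2 i]).flatten)

/-- The order `<_j` on monomials. -/
def monLt {n p : ℕ} (B : Fin n → Fin p) (j : Fin p) (s t : WExp n) : Prop :=
  List.Lex (· < ·) (keyList B j s) (keyList B j t)

/-- The order `<_j` on terms of the free module. -/
def termLt {n p m : ℕ} (B : Fin n → Fin p) (j : Fin p) (s t : WTerm n m) : Prop :=
  monLt B j s.1 t.1 ∨ (s.1 = t.1 ∧ s.2 < t.2)

/-- Divisibility of terms: same free generator and componentwise smaller exponents. -/
def tdvd {n m : ℕ} (s t : WTerm n m) : Prop :=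
  s.2 = t.2 ∧ s.1.1 ≤ t.1.1 ∧ s.1.2 ≤ t.1.2

/-- The quotient monomial `t/s` of two terms with `s ∣ t`. -/
def tquot {n m : ℕ} (t s : WTerm n m) : WExp n :=
  (t.1.1 - s.1.1, t.1.2 - s.1.2)

/-- The element `θ e_i` of the free module `E = A_n(K)^m`. -/
noncomputable def termVal {n m : ℕ} (K : Type) [Field K] (t : WTerm n m) :
    Fin m → WeylAlg n K :=
  Pi.single t.2 (wMono n K t.1.1 t.1.2)

/-- `c` is the coefficient expansion of `f ∈ E` in the basis of terms. -/
def Represents {n m : ℕ} {K : Type} [Field K] (c : WTerm n m →₀ K)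
    (f : Fin m → WeylAlg n K) : Prop :=
  f = c.sum fun t a => a • termVal K t

/-- `u` is the `j`-th leader of the element represented by `c`: the greatest term
appearing in it with respect to `<_j`. -/
def IsLeader {n p m : ℕ} {K : Type} [Field K] (B : Fin n → Fin p) (j : Fin p)
    (c : WTerm n m →₀ K) (u : WTerm n m) : Prop :=
  u ∈ c.support ∧ ∀ t ∈ c.support, t ≠ u → termLt B j t u

/-- `ρ(g) ∣ ρ(f)`, where `u g`, `u f` are the leaders of `g` and `f`:
the first leaders divide and `d_j(g) ≤ d_j(f)` for all `j`. -/
def rhoDvd {n p m : ℕ} (B : Fin n → Fin p) (hp : 0 < p)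
    (ug uf : Fin p → WTerm n m) : Prop :=
  tdvd (ug ⟨0, hp⟩) (uf ⟨0, hp⟩) ∧
  ∀ j, (ordT B j (ug j) : ℤ) - (ordT B j (ug ⟨0, hp⟩) : ℤ) ≤
       (ordT B j (uf j) : ℤ) - (ordT B j (uf ⟨0, hp⟩) : ℤ)

/-- One-step `(<_k, <_{i₁}, …, <_{i_l})`-reduction of `f` to `h` modulo `g`, where `cg`
is the expansion of `g` and `ug j` its `j`-th leader. -/
def RedStep {n p m : ℕ} {K : Type} [Field K] (B : Fin n → Fin p)
    (k : Fin p) (is : List (Fin p))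
    (g : Fin m → WeylAlg n K) (cg : WTerm n m →₀ K) (ug : Fin p → WTerm n m)
    (f h : Fin m → WeylAlg n K) : Prop :=
  ∃ cf : WTerm n m →₀ K, Represents cf f ∧
    ∃ w ∈ cf.support, tdvd (ug k) w ∧
      (∀ i ∈ is, ∀ uf : WTerm n m, IsLeader B i cf uf →
        ordBlk B (tquot w (ug k)).1 (tquot w (ug k)).2 i + ordT B i (ug i) ≤
          ordT B i uf) ∧
      h = f - (cf w * (cg (ug k))⁻¹) •
        fun j => wMono n K (tquot w (ug k)).1 (tquot w (ug k)).2 * g j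

/-- The element represented by `cf` is `(<_k, <_{i₁}, …, <_{i_l})`-reduced with respect to an
element with leaders `ug`. -/
def ReducedWrt {n p m : ℕ} {K : Type} [Field K] (B : Fin n → Fin p)
    (k : Fin p) (is : List (Fin p))
    (cf : WTerm n m →₀ K) (ug : Fin p → WTerm n m) : Prop :=
  ∀ w ∈ cf.support, tdvd (ug k) w →
    ∃ i ∈ is, ∃ uf : WTerm n m, IsLeader B i cf uf ∧
      ordT B i uf <
        ordBlk B (tquot w (ug k)).1 (tquot w (ug k)).2 i + ordT B i (ug i)


section WeylOrder

/-- The block order as an additive functional. -/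
def kOrd {n p : ℕ} (B : Fin n → Fin p) (j : Fin p) : WExp n → ℕ := fun t => ordBlk B t.1 t.2 j

/-- The order functionals of `keyList`. -/
def keyF1 {n p : ℕ} (B : Fin n → Fin p) (j : Fin p) : List (WExp n → ℕ) :=
  kOrd B j :: (((List.finRange p).filter fun k => k ≠ j).map (kOrd B))

/-- The exponent functionals of `keyList`. -/
def keyF2 {n p : ℕ} (B : Fin n → Fin p) (j : Fin p) : List (WExp n → ℕ) :=
  (((List.finRange n).filter fun i => B i = j).map fun i t => t.1 i) ++
  (((List.finRange n).filter fun i => B i = j).map fun i t => t.2 i) ++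
  ((((List.finRange n).filter fun i => B i ≠ j).map
    fun i => [fun t => t.1 i, fun t => t.2 i]).flatten)

lemma keyList_eq {n p : ℕ} (B : Fin n → Fin p) (j : Fin p) (t : WExp n) :
    keyList B j t = (keyF1 B j ++ keyF2 B j).map (fun φ => φ t) := by
  simp only [keyList, keyF1, keyF2, List.map_append, List.map_cons, List.map_map,
    List.map_flatten, List.append_assoc, List.cons_append, List.nil_append]
  rfl

lemma kOrd_add {n p : ℕ} (B : Fin n → Fin p) (j : Fin p) (s t : WExp n) :
    kOrd B j (s + t) = kOrd B j s + kOrd B j t := by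
  simp only [kOrd, ordBlk, ← Finset.sum_add_distrib]
  refine Finset.sum_congr rfl fun i _ => ?_
  simp only [Prod.fst_add, Prod.snd_add, Pi.add_apply]
  omega

lemma keyF_add {n p : ℕ} (B : Fin n → Fin p) (j : Fin p) :
    ∀ φ ∈ keyF1 B j ++ keyF2 B j, ∀ s t : WExp n, φ (s + t) = φ s + φ t := by
  intro φ hφ s t
  simp only [keyF1, keyF2, List.mem_append, List.mem_cons, List.mem_map, List.mem_flatten] at hφ
  rcases hφ with (h | ⟨k, _, rfl⟩) | ((⟨k, _, rfl⟩ | ⟨k, _, rfl⟩) | ⟨l, ⟨k, _, rfl⟩, h⟩)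
  · subst h; exact kOrd_add B j s t
  · exact kOrd_add B k s t
  · rfl
  · rfl
  · simp only [List.mem_cons, List.not_mem_nil, or_false] at h
    rcases h with rfl | rfl <;> rfl

lemma keyList_inj {n p : ℕ} (B : Fin n → Fin p) (j : Fin p) (s t : WExp n)
    (h : keyList B j s = keyList B j t) : s = t := by
  rw [keyList_eq, keyList_eq, List.map_inj_left] at h
  have h2 : ∀ φ ∈ keyF2 B j, φ s = φ t := fun φ hφ => h φ (List.mem_append_right _ hφ)
  have key : ∀ i, s.1 i = t.1 i ∧ s.2 i = t.2 i := by
    intro i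
    by_cases hi : B i = j
    · constructor
      · refine h2 (fun t => t.1 i) ?_
        simp only [keyF2, List.mem_append, List.mem_map]
        exact Or.inl (Or.inl ⟨i, by simp [hi], rfl⟩)
      · refine h2 (fun t => t.2 i) ?_
        simp only [keyF2, List.mem_append, List.mem_map]
        exact Or.inl (Or.inr ⟨i, by simp [hi], rfl⟩)
    · constructor
      · refine h2 (fun t => t.1 i) ?_
        simp only [keyF2, List.mem_append, List.mem_flatten, List.mem_map]
        exact Or.inr ⟨_, ⟨i, by simp [hi], rfl⟩, by simp⟩
      · refine h2 (fun t => t.2 i) ?_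
        simp only [keyF2, List.mem_append, List.mem_flatten, List.mem_map]
        exact Or.inr ⟨_, ⟨i, by simp [hi], rfl⟩, by simp⟩
  exact Prod.ext (funext fun i => (key i).1) (funext fun i => (key i).2)

lemma lex_cons {a b : ℕ} {l l' : List ℕ} :
    List.Lex (· < ·) (a :: l) (b :: l') ↔ a < b ∨ (a = b ∧ List.Lex (· < ·) l l') := by
  constructor
  · intro h
    cases h with
    | cons h => exact Or.inr ⟨rfl, h⟩
    | rel h => exact Or.inl h
  · rintro (h | ⟨rfl, h⟩)
    · exact List.Lex.rel h
    · exact List.Lex.cons h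

lemma lexF_wf {X : Type} (Φ : List (X → ℕ)) :
    WellFounded (fun s t : X => List.Lex (· < ·) (Φ.map fun φ => φ s) (Φ.map fun φ => φ t)) := by
  induction Φ with
  | nil => exact ⟨fun a => ⟨_, fun b h => by simp at h⟩⟩
  | cons φ Φ ih =>
    refine Subrelation.wf (r := InvImage (Prod.Lex (· < ·)
      (fun s t : X => List.Lex (· < ·) (Φ.map fun φ => φ s) (Φ.map fun φ => φ t)))
      (fun s => (φ s, s))) ?_ (InvImage.wf _ (WellFounded.prod_lex Nat.lt_wfRel.wf ih))
    intro s t h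
    simp only [List.map_cons, lex_cons] at h
    exact Prod.lex_def.2 h

lemma lexF_add {X : Type} [Add X] (Φ : List (X → ℕ))
    (hΦ : ∀ φ ∈ Φ, ∀ s t : X, φ (s + t) = φ s + φ t) (θ s t : X)
    (h : List.Lex (· < ·) (Φ.map fun φ => φ s) (Φ.map fun φ => φ t)) :
    List.Lex (· < ·) (Φ.map fun φ => φ (θ + s)) (Φ.map fun φ => φ (θ + t)) := by
  induction Φ with
  | nil => simp at h
  | cons φ Φ ih =>
    simp only [List.map_cons, lex_cons] at h ⊢
    rw [hΦ φ (by simp), hΦ φ (by simp)]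
    rcases h with h | ⟨h1, h2⟩
    · left; omega
    · right
      exact ⟨by omega, ih (fun ψ hψ => hΦ ψ (by simp [hψ])) h2⟩

lemma lexF_of_le {X : Type} (Φ Ψ : List (X → ℕ)) (s t : X)
    (h1 : ∀ φ ∈ Φ, φ s ≤ φ t) (h2 : ∃ φ ∈ Φ, φ s < φ t) :
    List.Lex (· < ·) ((Φ ++ Ψ).map fun φ => φ s) ((Φ ++ Ψ).map fun φ => φ t) := by
  induction Φ with
  | nil => simp at h2
  | cons φ Φ ih =>
    simp only [List.cons_append, List.map_cons, lex_cons]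
    rcases (h1 φ (by simp)).lt_or_eq with h | h
    · exact Or.inl h
    · refine Or.inr ⟨h, ih (fun ψ hψ => h1 ψ (by simp [hψ])) ?_⟩
      obtain ⟨ψ, hψ, hlt⟩ := h2
      rcases List.mem_cons.1 hψ with rfl | hψ
      · omega
      · exact ⟨ψ, hψ, hlt⟩

lemma monLt_wf {n p : ℕ} (B : Fin n → Fin p) (j : Fin p) : WellFounded (monLt B j) := by
  have h := lexF_wf (keyF1 B j ++ keyF2 B j)
  simp only [← keyList_eq] at h
  exact h

lemma monLt_add {n p : ℕ} (B : Fin n → Fin p) (j : Fin p) (θ s t : WExp n)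
    (h : monLt B j s t) : monLt B j (θ + s) (θ + t) := by
  unfold monLt at *
  rw [keyList_eq, keyList_eq] at *
  exact lexF_add _ (keyF_add B j) θ s t h

lemma monLt_of_lt {n p : ℕ} (B : Fin n → Fin p) (j : Fin p) (s t : WExp n)
    (h : s.1 + s.2 < t.1 + t.2) : monLt B j s t := by
  unfold monLt
  rw [keyList_eq, keyList_eq]
  obtain ⟨hle, i, hi⟩ := Pi.lt_def.1 h
  have hk : ∀ k, kOrd B k s ≤ kOrd B k t := fun k => by
    unfold kOrd ordBlk
    exact Finset.sum_le_sum fun i _ => hle i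
  have hlt : kOrd B (B i) s < kOrd B (B i) t := by
    unfold kOrd ordBlk
    exact Finset.sum_lt_sum (fun i _ => hle i) ⟨i, by simp, hi⟩
  apply lexF_of_le
  · intro φ hφ
    simp only [keyF1, List.mem_cons, List.mem_map] at hφ
    rcases hφ with rfl | ⟨k, _, rfl⟩ <;> exact hk _
  · refine ⟨kOrd B (B i), ?_, hlt⟩
    simp only [keyF1, List.mem_cons, List.mem_map]
    by_cases hj : B i = j
    · left; rw [hj]
    · exact Or.inr ⟨B i, by simp [hj], rfl⟩

lemma termLt_wf {n p m : ℕ} (B : Fin n → Fin p) (j : Fin p) :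
    WellFounded (termLt (m := m) B j) := by
  refine Subrelation.wf (r := Prod.Lex (monLt B j) (· < ·)) ?_
    (WellFounded.prod_lex (monLt_wf B j) wellFounded_lt)
  intro s t h
  exact Prod.lex_def.2 h

/-- The key of a term. -/
def tkey {n p m : ℕ} (B : Fin n → Fin p) (j : Fin p) (s : WTerm n m) : List ℕ ×ₗ Fin m :=
  toLex (keyList B j s.1, s.2)

lemma termLt_iff {n p m : ℕ} (B : Fin n → Fin p) (j : Fin p) (s t : WTerm n m) :
    termLt B j s t ↔ tkey B j s < tkey B j t := by
  unfold termLt tkey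
  rw [Prod.Lex.toLex_lt_toLex]
  refine or_congr Iff.rfl (and_congr_left fun _ => ?_)
  exact ⟨fun h => by rw [h], keyList_inj B j _ _⟩

lemma tkey_inj {n p m : ℕ} (B : Fin n → Fin p) (j : Fin p) (s t : WTerm n m)
    (h : tkey B j s = tkey B j t) : s = t := by
  have h' := toLex.injective h
  simp only [Prod.mk.injEq] at h'
  exact Prod.ext (keyList_inj B j _ _ h'.1) h'.2

lemma exists_leader {n p m : ℕ} {K : Type} [Field K] (B : Fin n → Fin p) (j : Fin p)
    (c : WTerm n m →₀ K) (hc : c ≠ 0) : ∃ u, IsLeader B j c u := by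
  obtain ⟨u, hu, hmax⟩ := Finset.exists_max_image c.support (tkey B j)
    (Finsupp.support_nonempty_iff.2 hc)
  refine ⟨u, hu, fun t ht htu => (termLt_iff B j t u).2 ?_⟩
  exact lt_of_le_of_ne (hmax t ht) fun h => htu (tkey_inj B j _ _ h)

lemma leader_unique {n p m : ℕ} {K : Type} [Field K] (B : Fin n → Fin p) (j : Fin p)
    (c : WTerm n m →₀ K) (u v : WTerm n m) (hu : IsLeader B j c u) (hv : IsLeader B j c v) :
    u = v := by
  by_contra h
  have h1 := (termLt_iff B j _ _).1 (hu.2 v hv.1 (Ne.symm h))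
  have h2 := (termLt_iff B j _ _).1 (hv.2 u hu.1 h)
  exact lt_asymm h1 h2

lemma ordBlk_tquot {n p m : ℕ} (B : Fin n → Fin p) (j : Fin p) (w u : WTerm n m)
    (h : tdvd u w) :
    ordBlk B (tquot w u).1 (tquot w u).2 j + ordT B j u = ordT B j w := by
  simp only [ordT, ordBlk, ← Finset.sum_add_distrib, tquot]
  refine Finset.sum_congr rfl fun i _ => ?_
  have h1 : u.1.1 i ≤ w.1.1 i := h.2.1 i
  have h2 : u.1.2 i ≤ w.1.2 i := h.2.2 i
  simp only [Pi.sub_apply]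
  omega

lemma tquot_add {n m : ℕ} (w u : WTerm n m) (h : tdvd u w) :
    ((tquot w u + u.1, u.2) : WTerm n m) = w := by
  refine Prod.ext (Prod.ext ?_ ?_) h.1
  · exact tsub_add_cancel_of_le h.2.1
  · exact tsub_add_cancel_of_le h.2.2

end WeylOrder

section WeylMul

lemma list_mul_left {M : Type} [Monoid M] {ι : Type} [DecidableEq ι] (a : ι → M)
    (hc : ∀ i k, Commute (a i) (a k)) (i : ι) (α : ι → ℕ) (l : List ι) (hl : l.Nodup)
    (hi : i ∈ l) :
    a i * (l.map fun k => a k ^ α k).prod = (l.map fun k => a k ^ (α + Pi.single i 1 : ι → ℕ) k).prod := by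
  induction l with
  | nil => simp at hi
  | cons b l ih =>
    rw [List.nodup_cons] at hl
    simp only [List.map_cons, List.prod_cons]
    by_cases hb : b = i
    · subst hb
      have : (l.map fun k => a k ^ (α + Pi.single b 1 : ι → ℕ) k) = l.map fun k => a k ^ α k := by
        refine List.map_congr_left fun k hk => ?_
        have : k ≠ b := fun h => hl.1 (h ▸ hk)
        simp [this]
      rw [this, ← mul_assoc]
      simp [pow_succ']
    · have hi' : i ∈ l := by
        rcases List.mem_cons.1 hi with h | h
        · exact absurd h.symm hb
        · exact h
      rw [← ih hl.2 hi', ← mul_assoc, ((hc i b).pow_right (α b)).eq, mul_assoc]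
      simp [hb]

variable (n : ℕ) (K : Type) [Field K]

lemma pderiv_comm_aux (i k : Fin n) (f : MvPolynomial (Fin n) K) :
    pderiv i (pderiv k f) = pderiv k (pderiv i f) := by
  have h : ⁅(pderiv i : Derivation K (MvPolynomial (Fin n) K) (MvPolynomial (Fin n) K)),
      (pderiv k : Derivation K (MvPolynomial (Fin n) K) (MvPolynomial (Fin n) K))⁆ = 0 := by
    apply MvPolynomial.derivation_ext
    intro s
    rw [Derivation.commutator_apply]
    simp only [pderiv_X, Pi.single_apply]
    split_ifs <;> simp
  have h2 := congrArg (fun D => D f) h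
  simp only [Derivation.commutator_apply] at h2
  exact sub_eq_zero.1 h2

lemma pderiv_X_mul_ne (i k : Fin n) (h : k ≠ i) (f : MvPolynomial (Fin n) K) :
    pderiv i (X k * f) = X k * pderiv i f := by
  rw [pderiv_mul, pderiv_X_of_ne h, zero_mul, zero_add]

lemma pderiv_X_mul_self (i : Fin n) (f : MvPolynomial (Fin n) K) :
    pderiv i (X i * f) = X i * pderiv i f + f := by
  rw [pderiv_mul, pderiv_X_self, one_mul, add_comm]

lemma wx_comm (i k : Fin n) : Commute (wx n K i) (wx n K k) :=
  Subtype.ext (LinearMap.ext fun f => mul_left_comm (X i) (X k) f)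

lemma wd_comm (i k : Fin n) : Commute (wd n K i) (wd n K k) :=
  Subtype.ext (LinearMap.ext fun f => pderiv_comm_aux n K i k f)

lemma wd_wx_ne (i k : Fin n) (h : k ≠ i) : Commute (wd n K i) (wx n K k) :=
  Subtype.ext (LinearMap.ext fun f => pderiv_X_mul_ne n K i k h f)

lemma wd_wx_self (i : Fin n) : wd n K i * wx n K i = wx n K i * wd n K i + 1 :=
  Subtype.ext (LinearMap.ext fun f => pderiv_X_mul_self n K i f)

lemma wd_wx_pow (i : Fin n) (k : ℕ) :
    wd n K i * wx n K i ^ k = wx n K i ^ k * wd n K i + k • wx n K i ^ (k - 1) := by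
  induction k with
  | zero => simp
  | succ k ih =>
    rw [pow_succ, ← mul_assoc, ih, add_mul, mul_assoc, wd_wx_self, mul_add, mul_one, ← mul_assoc,
      add_assoc]
    congr 1
    rcases k with _ | k
    · simp
    · simp only [Nat.add_sub_cancel, smul_mul_assoc, ← pow_succ]
      rw [succ_nsmul (n := k + 1), add_comm]

lemma wd_list (i : Fin n) (α : Fin n → ℕ) (l : List (Fin n)) (hl : l.Nodup) :
    (i ∉ l → Commute (wd n K i) (l.map fun k => wx n K k ^ α k).prod) ∧
    (i ∈ l → wd n K i * (l.map fun k => wx n K k ^ α k).prod =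
      (l.map fun k => wx n K k ^ α k).prod * wd n K i +
      α i • (l.map fun k => wx n K k ^ (α - Pi.single i 1 : Fin n → ℕ) k).prod) := by
  induction l with
  | nil => simp
  | cons b l ih =>
    rw [List.nodup_cons] at hl
    obtain ⟨ih1, ih2⟩ := ih hl.2
    simp only [List.map_cons, List.prod_cons, List.mem_cons, not_or]
    constructor
    · rintro ⟨h1, h2⟩
      exact ((wd_wx_ne n K i b (Ne.symm h1)).pow_right _).mul_right (ih1 h2)
    · intro h
      by_cases hb : b = i
      · subst hb
        have : (l.map fun k => wx n K k ^ (α - Pi.single b 1 : Fin n → ℕ) k) = l.map fun k => wx n K k ^ α k := by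
          refine List.map_congr_left fun k hk => ?_
          have : k ≠ b := fun h => hl.1 (h ▸ hk)
          simp [this]
        rw [this, ← mul_assoc, wd_wx_pow, add_mul, mul_assoc, (ih1 hl.1).eq, mul_assoc]
        simp [smul_mul_assoc, mul_assoc]
      · have h' : i ∈ l := h.resolve_left (Ne.symm hb)
        rw [← mul_assoc, ((wd_wx_ne n K i b hb).pow_right _).eq, mul_assoc, ih2 h', mul_add,
          mul_assoc, mul_smul_comm]
        simp [hb]

lemma wMono_zero : wMono n K 0 0 = 1 := by
  simp [wMono]

lemma wx_mul_wMono (i : Fin n) (α β : Fin n → ℕ) :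
    wx n K i * wMono n K α β = wMono n K (α + Pi.single i 1) β := by
  unfold wMono
  rw [← mul_assoc, list_mul_left (wx n K) (wx_comm n K) i α _ (List.nodup_finRange n)
    (List.mem_finRange i)]

lemma wd_mul_wMono (i : Fin n) (α β : Fin n → ℕ) :
    wd n K i * wMono n K α β = wMono n K α (β + Pi.single i 1) +
      α i • wMono n K (α - Pi.single i 1) β := by
  unfold wMono
  rw [← mul_assoc, (wd_list n K i α _ (List.nodup_finRange n)).2 (List.mem_finRange i), add_mul,
    mul_assoc, list_mul_left (wd n K) (wd_comm n K) i β _ (List.nodup_finRange n)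
    (List.mem_finRange i), smul_mul_assoc]

/-- Span of the monomials of multidegree strictly below `δ`. -/
noncomputable def lowS (δ : Fin n → ℕ) : Submodule K (WeylAlg n K) :=
  Submodule.span K ((fun s : WExp n => wMono n K s.1 s.2) '' {s | s.1 + s.2 < δ})

lemma mem_lowS {δ : Fin n → ℕ} (α β : Fin n → ℕ) (h : α + β < δ) :
    wMono n K α β ∈ lowS n K δ :=
  Submodule.subset_span ⟨(α, β), h, rfl⟩

lemma pred_lt {n : ℕ} (i : Fin n) (α β : Fin n → ℕ) (h : α i ≠ 0) :
    (α - Pi.single i 1) + β < α + β + Pi.single i 1 := by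
  refine Pi.lt_def.2 ⟨fun k => ?_, i, ?_⟩
  · simp only [Pi.add_apply, Pi.sub_apply]; omega
  · simp only [Pi.add_apply, Pi.sub_apply, Pi.single_eq_same]; omega

lemma wx_mul_lowS (i : Fin n) (δ : Fin n → ℕ) (v : WeylAlg n K) (hv : v ∈ lowS n K δ) :
    wx n K i * v ∈ lowS n K (δ + Pi.single i 1) := by
  induction hv using Submodule.span_induction with
  | mem x hx =>
    obtain ⟨s, hs, rfl⟩ := hx
    simp only [wx_mul_wMono]
    apply mem_lowS
    have : s.1 + Pi.single i 1 + s.2 = s.1 + s.2 + Pi.single i 1 := by abel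
    rw [this]
    exact add_lt_add_left hs _
  | zero => simp
  | add x y _ _ hx hy => rw [mul_add]; exact add_mem hx hy
  | smul a x _ hx => rw [mul_smul_comm]; exact Submodule.smul_mem _ _ hx

lemma wd_mul_lowS (i : Fin n) (δ : Fin n → ℕ) (v : WeylAlg n K) (hv : v ∈ lowS n K δ) :
    wd n K i * v ∈ lowS n K (δ + Pi.single i 1) := by
  induction hv using Submodule.span_induction with
  | mem x hx =>
    obtain ⟨s, hs, rfl⟩ := hx
    have hs' : s.1 + s.2 + Pi.single i 1 < δ + Pi.single i 1 := add_lt_add_left hs _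
    simp only [wd_mul_wMono]
    apply add_mem
    · apply mem_lowS
      rw [← add_assoc]
      exact hs'
    · by_cases h : s.1 i = 0
      · rw [h, zero_smul]; exact zero_mem _
      · exact nsmul_mem (mem_lowS n K _ _ ((pred_lt i _ _ h).trans hs')) _
  | zero => simp
  | add x y _ _ hx hy => rw [mul_add]; exact add_mem hx hy
  | smul a x _ hx => rw [mul_smul_comm]; exact Submodule.smul_mem _ _ hx

lemma exists_pred {n : ℕ} (α : Fin n → ℕ) (i : Fin n) (hi : α i ≠ 0) :
    ∃ α' : Fin n → ℕ, α = α' + Pi.single i 1 := by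
  refine ⟨α - Pi.single i 1, ?_⟩
  ext k
  by_cases hk : k = i
  · subst hk
    simp only [Pi.add_apply, Pi.sub_apply, Pi.single_eq_same]
    omega
  · simp [hk]

lemma wMono_mul (θ s : WExp n) :
    ∃ r ∈ lowS n K ((θ + s).1 + (θ + s).2),
    wMono n K θ.1 θ.2 * wMono n K s.1 s.2 = wMono n K (θ + s).1 (θ + s).2 + r := by
  obtain ⟨α, β⟩ := θ
  obtain ⟨γ, δ⟩ := s
  simp only [Prod.mk_add_mk]
  induction hN : ∑ i, (α i + β i) using Nat.strong_induction_on generalizing α β with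
  | _ N ih =>
  subst hN
  by_cases hα : α = 0
  · by_cases hβ : β = 0
    · subst hα hβ
      refine ⟨0, zero_mem _, ?_⟩
      rw [wMono_zero, one_mul, zero_add, zero_add, add_zero]
    · subst hα
      obtain ⟨i, hi⟩ := Function.ne_iff.1 hβ
      obtain ⟨β', rfl⟩ := exists_pred β i hi
      obtain ⟨r, hr, h⟩ := ih _ (by
        refine Finset.sum_lt_sum (fun k _ => ?_) ⟨i, Finset.mem_univ _, ?_⟩
        · simp only [Pi.add_apply]; omega
        · simp only [Pi.add_apply, Pi.single_eq_same]; omega) 0 β' rfl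
      have h2 : wMono n K 0 (β' + Pi.single i 1) = wd n K i * wMono n K 0 β' := by
        rw [wd_mul_wMono]; simp
      have h3 := wd_mul_lowS n K i _ _ hr
      have e1 : 0 + γ + (β' + δ) + Pi.single i 1 = 0 + γ + (β' + Pi.single i 1 + δ) := by abel
      have e2 : β' + δ + Pi.single i 1 = β' + Pi.single i 1 + δ := by abel
      have h4 : (0 + γ : Fin n → ℕ) i • wMono n K (0 + γ - Pi.single i 1) (β' + δ) ∈
          lowS n K (0 + γ + (β' + δ) + Pi.single i 1) := by
        by_cases h : (0 + γ : Fin n → ℕ) i = 0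
        · rw [h, zero_smul]; exact zero_mem _
        · exact nsmul_mem (mem_lowS n K _ _ (pred_lt i _ _ h)) _
      rw [← e1]
      refine ⟨_, add_mem h4 h3, ?_⟩
      rw [h2, mul_assoc, h, mul_add, wd_mul_wMono, e2, add_assoc]
  · obtain ⟨i, hi⟩ := Function.ne_iff.1 hα
    obtain ⟨α', rfl⟩ := exists_pred α i hi
    obtain ⟨r, hr, h⟩ := ih _ (by
      refine Finset.sum_lt_sum (fun k _ => ?_) ⟨i, Finset.mem_univ _, ?_⟩
      · simp only [Pi.add_apply]; omega
      · simp only [Pi.add_apply, Pi.single_eq_same]; omega) α' β rfl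
    have h3 := wx_mul_lowS n K i _ _ hr
    have e1 : α' + γ + (β + δ) + Pi.single i 1 = α' + Pi.single i 1 + γ + (β + δ) := by abel
    have e2 : α' + γ + Pi.single i 1 = α' + Pi.single i 1 + γ := by abel
    rw [← e1]
    refine ⟨_, h3, ?_⟩
    rw [← wx_mul_wMono, mul_assoc, h, mul_add, wx_mul_wMono, e2]

lemma wMono_span (D : WeylAlg n K) :
    D ∈ Submodule.span K (Set.range fun s : WExp n => wMono n K s.1 s.2) := by
  set W := Submodule.span K (Set.range fun s : WExp n => wMono n K s.1 s.2) with hW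
  have hm : ∀ α β, wMono n K α β ∈ W := fun α β => Submodule.subset_span ⟨(α, β), rfl⟩
  have hx : ∀ i, ∀ v ∈ W, wx n K i * v ∈ W := by
    intro i v hv
    induction hv using Submodule.span_induction with
    | mem x hx =>
      obtain ⟨s, rfl⟩ := hx
      simp only [wx_mul_wMono]
      exact hm _ _
    | zero => simp
    | add x y _ _ hx hy => rw [mul_add]; exact add_mem hx hy
    | smul a x _ hx => rw [mul_smul_comm]; exact Submodule.smul_mem _ _ hx
  have hd : ∀ i, ∀ v ∈ W, wd n K i * v ∈ W := by
    intro i v hv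
    induction hv using Submodule.span_induction with
    | mem x hx =>
      obtain ⟨s, rfl⟩ := hx
      simp only [wd_mul_wMono]
      exact add_mem (hm _ _) (nsmul_mem (hm _ _) _)
    | zero => simp
    | add x y _ _ hx hy => rw [mul_add]; exact add_mem hx hy
    | smul a x _ hx => rw [mul_smul_comm]; exact Submodule.smul_mem _ _ hx
  have key : ∀ (x : Module.End K (MvPolynomial (Fin n) K)) (h : x ∈ WeylAlg n K),
      ∀ v ∈ W, (⟨x, h⟩ : WeylAlg n K) * v ∈ W := by
    intro x h
    induction h using Algebra.adjoin_induction with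
    | mem x hx' =>
      rcases hx' with ⟨i, rfl⟩ | ⟨i, rfl⟩
      · exact hx i
      · exact hd i
    | algebraMap r =>
      intro v hv
      have : (⟨algebraMap K _ r, Subalgebra.algebraMap_mem _ r⟩ : WeylAlg n K) * v = r • v := by
        apply Subtype.ext
        exact (Algebra.smul_def r (v : Module.End K (MvPolynomial (Fin n) K))).symm
      exact this ▸ Submodule.smul_mem _ _ hv
    | add x y hx hy h1 h2 =>
      intro v hv
      have : (⟨x + y, add_mem hx hy⟩ : WeylAlg n K) * v = ⟨x, hx⟩ * v + ⟨y, hy⟩ * v := by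
        rw [← add_mul]; rfl
      exact this ▸ add_mem (h1 v hv) (h2 v hv)
    | mul x y hx hy h1 h2 =>
      intro v hv
      have : (⟨x * y, mul_mem hx hy⟩ : WeylAlg n K) * v = ⟨x, hx⟩ * (⟨y, hy⟩ * v) := by
        rw [← mul_assoc]; rfl
      exact this ▸ h1 _ (h2 v hv)
  have := key D.1 D.2 1 (by rw [← wMono_zero]; exact hm _ _)
  simpa using this

end WeylMul

section WeylRed

variable {n p m : ℕ} {K : Type} [Field K]

lemma represents_iff (c : WTerm n m →₀ K) (f : Fin m → WeylAlg n K) :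
    Represents c f ↔ Finsupp.linearCombination K (termVal K) c = f := by
  rw [Finsupp.linearCombination_apply]
  exact eq_comm

lemma exists_represents (f : Fin m → WeylAlg n K) : ∃ c : WTerm n m →₀ K, Represents c f := by
  have h : f ∈ Submodule.span K (Set.range (termVal (n := n) (m := m) K)) := by
    have hf : f = ∑ i, Pi.single i (f i) := (Finset.univ_sum_single f).symm
    rw [hf]
    refine Submodule.sum_mem _ fun i _ => ?_
    have h1 := Submodule.mem_map_of_mem (f := LinearMap.single K (fun _ : Fin m => WeylAlg n K) i)
      (wMono_span n K (f i))
    rw [Submodule.map_span] at h1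
    refine Submodule.span_mono ?_ h1
    rintro _ ⟨_, ⟨s, rfl⟩, rfl⟩
    exact ⟨(s, i), rfl⟩
  obtain ⟨c, hc⟩ := (Finsupp.mem_span_range_iff_exists_finsupp).1 h
  exact ⟨c, hc.symm⟩

/-- Span of the terms below `w`. -/
noncomputable def lowE (K : Type) [Field K] (B : Fin n → Fin p) (j : Fin p) (w : WTerm n m) :
    Submodule K (Fin m → WeylAlg n K) :=
  Submodule.span K (termVal K '' {t | termLt B j t w})

lemma sub_lead_mem (B : Fin n → Fin p) (j : Fin p) (c : WTerm n m →₀ K) (u : WTerm n m)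
    (hu : IsLeader B j c u) (f : Fin m → WeylAlg n K) (hc : Represents c f) :
    ∃ r ∈ lowE K B j u, f = c u • termVal K u + r := by
  rw [represents_iff] at hc
  refine ⟨Finsupp.linearCombination K (termVal K) (c.erase u), ?_, ?_⟩
  · refine (Finsupp.mem_span_image_iff_linearCombination K).2 ⟨_, ?_, rfl⟩
    rw [Finsupp.mem_supported]
    intro t ht
    rw [Finset.mem_coe, Finsupp.support_erase, Finset.mem_erase] at ht
    exact hu.2 t ht.2 ht.1
  · rw [← hc]
    conv_lhs => rw [← Finsupp.single_add_erase u c]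
    rw [map_add, Finsupp.linearCombination_single]

/-- Left multiplication by a monomial. -/
noncomputable def mulθ (K : Type) [Field K] (θ : WExp n) :
    (Fin m → WeylAlg n K) →ₗ[K] (Fin m → WeylAlg n K) :=
  (LinearMap.mulLeft K (wMono n K θ.1 θ.2)).compLeft (Fin m)

lemma mulθ_apply (θ : WExp n) (f : Fin m → WeylAlg n K) :
    mulθ K θ f = fun j => wMono n K θ.1 θ.2 * f j := rfl

lemma termLt_trans (B : Fin n → Fin p) (j : Fin p) {s t u : WTerm n m}
    (h : termLt B j s t) (h' : termLt B j t u) : termLt B j s u := by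
  rw [termLt_iff] at *
  exact h.trans h'

lemma termLt_add (B : Fin n → Fin p) (j : Fin p) (θ : WExp n) {s t : WTerm n m}
    (h : termLt B j s t) : termLt B j (θ + s.1, s.2) (θ + t.1, t.2) := by
  rcases h with h | ⟨h1, h2⟩
  · exact Or.inl (monLt_add B j θ _ _ h)
  · exact Or.inr ⟨by simp [h1], h2⟩

lemma mulθ_term (B : Fin n → Fin p) (j : Fin p) (θ : WExp n) (s : WTerm n m) :
    ∃ r ∈ lowE K B j (θ + s.1, s.2),
      mulθ K θ (termVal K s) = termVal K (θ + s.1, s.2) + r := by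
  obtain ⟨r, hr, h⟩ := wMono_mul n K θ s.1
  have h1 := Submodule.mem_map_of_mem
    (f := LinearMap.single K (fun _ : Fin m => WeylAlg n K) s.2) hr
  unfold lowS at h1
  rw [Submodule.map_span] at h1
  refine ⟨_, Submodule.span_mono ?_ h1, ?_⟩
  · rintro _ ⟨_, ⟨v, hv, rfl⟩, rfl⟩
    exact ⟨(v, s.2), Or.inl (monLt_of_lt B j _ _ hv), rfl⟩
  · rw [mulθ_apply]
    ext1 k
    simp only [termVal, LinearMap.single_apply, Pi.add_apply]
    by_cases hk : k = s.2
    · subst hk; simp only [Pi.single_eq_same]; exact h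
    · simp [Pi.single_eq_of_ne hk]

lemma lowE_mono (B : Fin n → Fin p) (j : Fin p) {s w : WTerm n m} (h : termLt B j s w) :
    lowE K B j s ≤ lowE K B j w :=
  Submodule.span_mono (Set.image_mono fun _ ht => termLt_trans B j ht h)

lemma mulθ_low (B : Fin n → Fin p) (j : Fin p) (θ : WExp n) (u : WTerm n m)
    (f : Fin m → WeylAlg n K) (hf : f ∈ lowE K B j u) :
    mulθ K θ f ∈ lowE K B j (θ + u.1, u.2) := by
  induction hf using Submodule.span_induction with
  | mem x hx =>
    obtain ⟨s, hs, rfl⟩ := hx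
    have h := termLt_add B j θ hs
    obtain ⟨r, hr, e⟩ := mulθ_term (K := K) B j θ s
    have h1 := lowE_mono (K := K) B j h hr
    have h2 : termVal K (θ + s.1, s.2) ∈ lowE K B j (θ + u.1, u.2) :=
      Submodule.subset_span ⟨_, h, rfl⟩
    rw [e]
    exact add_mem h2 h1
  | zero => simp
  | add x y _ _ hx hy => rw [map_add]; exact add_mem hx hy
  | smul a x _ hx => rw [map_smul]; exact Submodule.smul_mem _ _ hx

lemma E_sub (f z : Fin m → WeylAlg n K) : f - z = f + (-1 : K) • z := by
  funext k
  refine Subtype.ext (LinearMap.ext fun v => ?_)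
  have h : ∀ a b : MvPolynomial (Fin n) K, a - b = a + (-1 : K) • b := by
    intro a b
    rw [neg_one_smul, sub_eq_add_neg]
  exact h ((f k).1 v) ((z k).1 v)

lemma comb_aux {M : Type} [AddCommMonoid M] [Module K M] (a l : K) (hl : l ≠ 0) (T r1 r2 : M) :
    a • T + r1 + (-1 : K) • ((a * l⁻¹) • (l • T + r2)) = r1 + (-(a * l⁻¹)) • r2 := by
  have h : a • T + (-a) • T = 0 := by rw [← add_smul, add_neg_cancel, zero_smul]
  have e : a * l⁻¹ * l = a := by field_simp
  rw [smul_smul, smul_add, smul_smul, neg_one_mul, neg_mul, e]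
  calc a • T + r1 + ((-a) • T + (-(a * l⁻¹)) • r2)
      = (a • T + (-a) • T) + (r1 + (-(a * l⁻¹)) • r2) := by abel
    _ = _ := by rw [h, zero_add]

lemma red_low (B : Fin n → Fin p) (j : Fin p) (cf cg : WTerm n m →₀ K) (w u : WTerm n m)
    (f g : Fin m → WeylAlg n K) (hf : Represents cf f) (hg : Represents cg g)
    (hw : IsLeader B j cf w) (hu : IsLeader B j cg u) (hd : tdvd u w) :
    f + (-1 : K) • ((cf w * (cg u)⁻¹) • mulθ K (tquot w u) g) ∈ lowE K B j w := by
  obtain ⟨r1, h1, e1⟩ := sub_lead_mem B j cf w hw f hf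
  obtain ⟨r2, h2', e2⟩ := sub_lead_mem B j cg u hu g hg
  have h2 := mulθ_low B j (tquot w u) u _ h2'
  obtain ⟨r3, h3, e3⟩ := mulθ_term (K := K) B j (tquot w u) u
  rw [tquot_add w u hd] at h2 h3 e3
  have hc : cg u ≠ 0 := Finsupp.mem_support_iff.1 hu.1
  have e4 : mulθ K (tquot w u) g =
      cg u • termVal K w + (cg u • r3 + mulθ K (tquot w u) r2) := by
    conv_lhs => rw [e2]
    rw [map_add, map_smul, e3, smul_add, add_assoc]
  have e5 : f + (-1 : K) • ((cf w * (cg u)⁻¹) • mulθ K (tquot w u) g) =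
      r1 + (-(cf w * (cg u)⁻¹)) • (cg u • r3 + mulθ K (tquot w u) r2) := by
    rw [e4, ← comb_aux (cf w) (cg u) hc (termVal K w)]
    conv_lhs => rw [e1]
  rw [e5]
  exact add_mem h1 (Submodule.smul_mem _ _ (add_mem (Submodule.smul_mem _ _ h3) h2))

lemma sub_mem_N (N : Submodule (WeylAlg n K) (Fin m → WeylAlg n K))
    (f z : Fin m → WeylAlg n K) (hf : f ∈ N) (hz : z ∈ N) : f + (-1 : K) • z ∈ N := by
  refine add_mem hf ?_
  have h : (-1 : K) • z = ((-1 : K) • (1 : WeylAlg n K)) • z := by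
    ext1 k
    simp only [Pi.smul_apply, smul_eq_mul, smul_mul_assoc, one_mul]
  rw [h]
  exact N.smul_mem _ hz

lemma add_back {M : Type} [AddCommMonoid M] [Module K M] (f z : M) :
    f + (-1 : K) • z + z = f := by
  have h : (-1 : K) • z + z = 0 := by
    nth_rw 2 [← one_smul K z]
    rw [← add_smul, neg_add_cancel, zero_smul]
  rw [add_assoc, h, add_zero]

lemma smul_mulθ_mem (N : Submodule (WeylAlg n K) (Fin m → WeylAlg n K)) (a : K) (θ : WExp n)
    (g : Fin m → WeylAlg n K) (hg : g ∈ N) : a • mulθ K θ g ∈ N := by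
  have h : a • mulθ K θ g = (a • wMono n K θ.1 θ.2) • g := by
    rw [mulθ_apply]
    ext1 k
    simp only [Pi.smul_apply, smul_eq_mul, smul_mul_assoc]
  rw [h]
  exact N.smul_mem _ hg

end WeylRed

theorem statement_13 (n p m t : ℕ) (hp : 0 < p) (K : Type) [Field K] [CharZero K]
    (nn : Fin p → ℕ) (hn : ∑ j, nn j = n)
    (B : Fin n → Fin p) (hBmono : Monotone B)
    (hBcard : ∀ j, (Finset.univ.filter fun i => B i = j).card = nn j)
    (N : Submodule (WeylAlg n K) (Fin m → WeylAlg n K))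
    (g : Fin t → Fin m → WeylAlg n K) (hgN : ∀ i, g i ∈ N) (hg0 : ∀ i, g i ≠ 0)
    (cg : Fin t → (WTerm n m →₀ K)) (ug : Fin t → Fin p → WTerm n m)
    (hrep : ∀ i, Represents (cg i) (g i))
    (hlead : ∀ i j, IsLeader B j (cg i) (ug i j))
    (hGB : ∀ f ∈ N, f ≠ 0 → ∀ (cf : WTerm n m →₀ K) (uf : Fin p → WTerm n m),
      Represents cf f → (∀ j, IsLeader B j cf (uf j)) →
      ∃ i, rhoDvd B hp (ug i) uf) :
    (∀ f : Fin m → WeylAlg n K,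
      f ∈ N ↔
        Relation.ReflTransGen
          (fun x y => ∃ i, RedStep B ⟨0, hp⟩ ((List.finRange p).tail)
            (g i) (cg i) (ug i) x y) f 0) ∧
    (∀ f ∈ N, ∀ cf : WTerm n m →₀ K, Represents cf f →
      (∀ i, ReducedWrt B ⟨0, hp⟩ ((List.finRange p).tail) cf (ug i)) → f = 0) := by
  set o : Fin p := ⟨0, hp⟩ with ho
  have hcond : ∀ (cf : WTerm n m →₀ K) (uf : Fin p → WTerm n m) (i : Fin t),
      (∀ j, IsLeader B j cf (uf j)) → rhoDvd B hp (ug i) uf →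
      ∀ j v, IsLeader B j cf v →
        ordBlk B (tquot (uf o) (ug i o)).1 (tquot (uf o) (ug i o)).2 j + ordT B j (ug i j) ≤
          ordT B j v := by
    intro cf uf i hl hr j v hv
    obtain rfl := leader_unique B j cf _ _ (hl j) hv
    have h1 := ordBlk_tquot B j _ _ hr.1
    have h2 := hr.2 j
    rw [← ho] at h1 h2
    omega
  have hlc : ∀ (cf : WTerm n m →₀ K) (f : Fin m → WeylAlg n K), Represents cf f → f ≠ 0 →
      ∃ uf : Fin p → WTerm n m, ∀ j, IsLeader B j cf (uf j) := by
    intro cf f hf hf0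
    have : cf ≠ 0 := by
      rintro rfl
      exact hf0 (by simpa [Represents] using hf)
    choose uf huf using fun j => exists_leader B j cf this
    exact ⟨uf, huf⟩
  refine ⟨fun f => ⟨fun hf => ?_, fun hf => ?_⟩, ?_⟩
  · have key : ∀ w : WTerm n m, ∀ c : WTerm n m →₀ K, ∀ f, Represents c f → f ∈ N →
        IsLeader B o c w →
        Relation.ReflTransGen
          (fun x y => ∃ i, RedStep B o ((List.finRange p).tail)
            (g i) (cg i) (ug i) x y) f 0 := by
      intro w
      induction w using (termLt_wf B o).induction with
      | _ w ih =>
      intro c f hc hfN hw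
      by_cases hf0 : f = 0
      · rw [hf0]
      obtain ⟨uf, huf⟩ := hlc c f hc hf0
      obtain ⟨i, hi⟩ := hGB f hfN hf0 c uf hc huf
      obtain rfl := leader_unique B o c _ _ hw (huf o)
      set h := f + (-1 : K) • ((c (uf o) * (cg i (ug i o))⁻¹) •
        mulθ K (tquot (uf o) (ug i o)) (g i)) with hh
      have hhN : h ∈ N := sub_mem_N N _ _ hfN (smul_mulθ_mem N _ _ _ (hgN i))
      have hlow : h ∈ lowE K B o (uf o) :=
        red_low B o c (cg i) _ _ f (g i) hc (hrep i) hw (hlead i o) hi.1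
      refine Relation.ReflTransGen.head (b := h) ⟨i, c, hc, uf o, hw.1, hi.1, ?_,
        (E_sub _ _).symm⟩ ?_
      · intro j _ v hv
        exact hcond c uf i huf hi j v hv
      · obtain ⟨ch, hch1, hch2⟩ := (Finsupp.mem_span_image_iff_linearCombination K).1 hlow
        have hch3 : Represents ch h := (represents_iff _ _).2 hch2
        by_cases hh0 : h = 0
        · rw [hh0]
        obtain ⟨uh, huh⟩ := hlc ch h hch3 hh0
        refine ih (uh o) ?_ ch h hch3 hhN (huh o)
        exact hch1 (huh o).1
    by_cases hf0 : f = 0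
    · rw [hf0]
    obtain ⟨c, hc⟩ := exists_represents f
    obtain ⟨uf, huf⟩ := hlc c f hc hf0
    exact key _ c f hc hf (huf o)
  · induction hf using Relation.ReflTransGen.head_induction_on with
    | refl => exact zero_mem _
    | head h _ ih =>
      obtain ⟨i, cf, _, w, _, _, _, he⟩ := h
      rw [he, E_sub] at ih
      have := add_mem ih (smul_mulθ_mem N (cf w * (cg i (ug i o))⁻¹) (tquot w (ug i o)) _ (hgN i))
      rw [mulθ_apply, add_back] at this
      exact this
  · intro f hf cf hcf hred
    by_contra hf0
    obtain ⟨uf, huf⟩ := hlc cf f hcf hf0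
    obtain ⟨i, hi⟩ := hGB f hf hf0 cf uf hcf huf
    obtain ⟨j, _, v, hv, hlt⟩ := hred i (uf o) (huf o).1 hi.1
    exact absurd (hcond cf uf i huf hi j v hv) (not_le.2 hlt)
end

section
/- Let K be a field of characteristic zero, A_n(K) the Weyl algebra with a fixed partition of {1,…,n} into blocks of sizes n_1,…,n_p, E a free left A_n(K)-module with free generators e_1,…,e_m, N an A_n(K)-submodule of E, and G = {g_1,…,g_t} ⊆ N. Suppose G is a Gröbner basis of N with respect to each of the sequences of orders <_p; <_{p-1},<_p; …; <_{r+1},…,<_p (for some 1 ≤ r ≤ p−1), and suppose that for all g_i, g_j ∈ G the S-polynomial S_r(g_i,g_j) (<_r,<_{r+1},…,<_p)-reduces to 0 modulo G. Then G is a Gröbner basis of N with respect to the sequence of orders <_r,<_{r+1},…,<_p. -/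
set_option synthInstance.maxHeartbeats 400000
set_option maxHeartbeats 1000000

open MvPolynomial

/-- `G` (given by leaders `ug`) is a Gröbner basis of `N` with respect to the sequence of
orders `<_r, <_{r+1}, …, <_p`. -/
def IsGBseq {n p m t : ℕ} {K : Type} [Field K] (B : Fin n → Fin p) (r : Fin p)
    (N : Submodule (WeylAlg n K) (Fin m → WeylAlg n K))
    (ug : Fin t → Fin p → WTerm n m) : Prop :=
  ∀ f ∈ N, f ≠ 0 → ∀ (cf : WTerm n m →₀ K) (uf : Fin p → WTerm n m),
    Represents cf f → (∀ j, IsLeader B j cf (uf j)) →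
    ∃ i, tdvd (ug i r) (uf r) ∧ ∀ j, r < j →
      ordBlk B (tquot (uf r) (ug i r)).1 (tquot (uf r) (ug i r)).2 j +
          ordT B j (ug i j) ≤ ordT B j (uf j)

/-- The `r`-th S-polynomial of `f` and `g` (with expansions `cf`, `cg` and leaders
`uf`, `ug`); it is `0` if the `r`-th leaders involve different free generators. -/
noncomputable def Spoly {n p m : ℕ} {K : Type} [Field K] (r : Fin p)
    (f g : Fin m → WeylAlg n K) (cf cg : WTerm n m →₀ K)
    (uf ug : Fin p → WTerm n m) : Fin m → WeylAlg n K :=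
  if (uf r).2 = (ug r).2 then
    ((cf (uf r))⁻¹ •
      fun j => wMono n K (fun i => max ((uf r).1.1 i) ((ug r).1.1 i) - (uf r).1.1 i)
        (fun i => max ((uf r).1.2 i) ((ug r).1.2 i) - (uf r).1.2 i) * f j) -
    ((cg (ug r))⁻¹ •
      fun j => wMono n K (fun i => max ((uf r).1.1 i) ((ug r).1.1 i) - (ug r).1.1 i)
        (fun i => max ((uf r).1.2 i) ((ug r).1.2 i) - (ug r).1.2 i) * g j)
  else 0


namespace WeylGB

theorem pi_ind {n : ℕ} {P : (Fin n → ℕ) → Prop} (h0 : P 0)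
    (hs : ∀ a i, P a → P (a + Pi.single i 1)) : ∀ a, P a := by
  intro a
  induction hk : ∑ i, a i generalizing a with
  | zero =>
    have : a = 0 := by
      funext i
      have := (Finset.sum_eq_zero_iff.1 hk) i (Finset.mem_univ i)
      simpa using this
    rw [this]; exact h0
  | succ k ih =>
    have : ∃ i, a i ≠ 0 := by
      by_contra hcon
      push Not at hcon
      simp [hcon] at hk
    obtain ⟨i, hi⟩ := this
    have hle : Pi.single i 1 ≤ a := by
      intro k
      by_cases h : k = i
      · subst h; simp; omega
      · simp [h]
    have he : a = (a - Pi.single i 1) + Pi.single i 1 := (tsub_add_cancel_of_le hle).symm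
    rw [he]
    apply hs
    apply ih
    rw [he] at hk
    simp only [Pi.add_apply, Finset.sum_add_distrib, Finset.sum_pi_single', Finset.mem_univ, if_true] at hk
    omega

/-- ordered products of powers -/
def lp {n : ℕ} {A : Type*} [Monoid A] (y : Fin n → A) (l : List (Fin n)) (a : Fin n → ℕ) : A :=
  (l.map fun i => y i ^ a i).prod

theorem lp_not_mem {n : ℕ} {A : Type*} [Monoid A] (y : Fin n → A) (l : List (Fin n)) (a : Fin n → ℕ)
    (i : Fin n) (hi : i ∉ l) : lp y l (a + Pi.single i 1) = lp y l a := by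
  unfold lp
  congr 1
  apply List.map_congr_left
  intro k hk
  have : k ≠ i := fun h => hi (h ▸ hk)
  simp [this]

theorem lp_comm {n : ℕ} {A : Type*} [Monoid A] (y : Fin n → A) (hy : ∀ i j, Commute (y i) (y j))
    (l : List (Fin n)) (a : Fin n → ℕ) (i : Fin n) : Commute (y i) (lp y l a) := by
  unfold lp
  apply Commute.list_prod_right
  intro x hx
  simp only [List.mem_map] at hx
  obtain ⟨k, _, rfl⟩ := hx
  exact (hy i k).pow_right _

theorem lp_add {n : ℕ} {A : Type*} [Monoid A] (y : Fin n → A) (hy : ∀ i j, Commute (y i) (y j))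
    (l : List (Fin n)) (hl : l.Nodup) (a : Fin n → ℕ) (i : Fin n) (hi : i ∈ l) :
    lp y l (a + Pi.single i 1) = y i * lp y l a := by
  induction l with
  | nil => simp at hi
  | cons k l ih =>
    rw [List.nodup_cons] at hl
    have h1 : ∀ b, lp y (k :: l) b = y k ^ b k * lp y l b := fun b => by simp [lp]
    rw [h1, h1]
    by_cases h : i = k
    · subst h
      rw [lp_not_mem _ _ _ _ hl.1]
      simp [pow_succ', mul_assoc]
    · have hil : i ∈ l := by simpa [h] using hi
      rw [ih hl.2 hil]
      have : (a + Pi.single i 1 : Fin n → ℕ) k = a k := by simp [Ne.symm h]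
      rw [this, ← mul_assoc, ← mul_assoc, ((hy k i).pow_left _).eq]


section abstract
variable {n : ℕ} {K : Type} [Field K] {A : Type} [Ring A] [Algebra K A]

theorem lp_zero {n : ℕ} {A : Type*} [Monoid A] (y : Fin n → A) (l : List (Fin n)) : lp y l 0 = 1 := by
  simp [lp]

/-- monomial attached to an exponent pair -/
def am {A : Type} [Semiring A] (x d : Fin n → A) (c : WExp n) : A :=
  lp x (List.finRange n) c.1 * lp d (List.finRange n) c.2

/-- span of smaller monomials -/
def low (K : Type) [Field K] [Algebra K A] (x d : Fin n → A) (a : WExp n) : Submodule K A :=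
  Submodule.span K (am x d '' {c | c < a})

variable {x d : Fin n → A} 

theorem x_mul (hx : ∀ i j, Commute (x i) (x j)) (a b : Fin n → ℕ) (i : Fin n) :
    x i * am x d (a, b) = am x d (a + Pi.single i 1, b) := by
  unfold am
  rw [lp_add _ hx _ (List.nodup_finRange n) _ _ (List.mem_finRange i), mul_assoc]

theorem d_mul_zero (hd : ∀ i j, Commute (d i) (d j)) (b : Fin n → ℕ) (i : Fin n) :
    d i * am x d (0, b) = am x d (0, b + Pi.single i 1) := by
  unfold am
  rw [lp_add _ hd _ (List.nodup_finRange n) _ _ (List.mem_finRange i), lp_zero,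
    one_mul, one_mul]

theorem mul_low (z : A) (s : WExp n) 
    (hz : ∀ c, z * am x d c - am x d (c + s) ∈ low K x d (c + s)) (a : WExp n)
    (y : A) (hx : y ∈ low K x d a) : z * y ∈ low K x d (a + s) := by
  unfold low at hx
  induction hx using Submodule.span_induction with
  | mem y hx =>
    obtain ⟨c, hc, rfl⟩ := hx
    have hc : c < a := hc
    have h1 : low K x d (c + s) ≤ low K x d (a + s) := by
      apply Submodule.span_mono
      apply Set.image_mono
      intro e he
      exact lt_trans (show e < c + s from he) (by gcongr)
    rw [← sub_add_cancel (z * am x d c) (am x d (c+s))]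
    apply Submodule.add_mem _ (h1 (hz c))
    apply Submodule.subset_span
    exact ⟨c + s, show c + s < a + s by gcongr, rfl⟩
  | zero => simp
  | add y y2 _ _ hx hy => rw [mul_add]; exact Submodule.add_mem _ hx hy
  | smul k y _ hx => rw [mul_smul_comm]; exact Submodule.smul_mem _ _ hx

theorem x_low (hx : ∀ i j, Commute (x i) (x j)) (i : Fin n) (c : WExp n) :
    x i * am x d c - am x d (c + (Pi.single i 1, 0)) ∈ low K x d (c + (Pi.single i 1, 0)) := by
  have : x i * am x d c = am x d (c + (Pi.single i 1, 0)) := by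
    obtain ⟨a, b⟩ := c
    rw [x_mul hx]; simp
  rw [this, sub_self]; exact Submodule.zero_mem _

theorem single_pos (i : Fin n) : (0 : Fin n → ℕ) < Pi.single i 1 := by
  refine lt_of_le_of_ne (fun _ => Nat.zero_le _) ?_
  intro h
  have := congrFun h i
  simp at this

theorem d_low (hx : ∀ i j, Commute (x i) (x j)) (hd : ∀ i j, Commute (d i) (d j))
    (hdx : ∀ i j, d i * x j = x j * d i + if i = j then 1 else 0)  (i : Fin n) (c : WExp n) :
    d i * am x d c - am x d (c + (0, Pi.single i 1)) ∈ low K x d (c + (0, Pi.single i 1)) := by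
  obtain ⟨a, b⟩ := c
  induction a using pi_ind generalizing b with
  | h0 =>
    have : d i * am x d (0, b) = am x d ((0, b) + (0, Pi.single i 1)) := by
      rw [d_mul_zero hd]; simp
    rw [this, sub_self]; exact Submodule.zero_mem _
  | hs a k ih =>
    have e1 : am x d (a + Pi.single k 1, b) = x k * am x d (a, b) := by
      rw [x_mul hx]
    have e2 : am x d ((a + Pi.single k 1, b) + (0, Pi.single i 1))
        = x k * am x d ((a, b) + (0, Pi.single i 1)) := by
      rw [x_mul hx]; simp
    rw [e1, e2, ← mul_assoc, hdx, add_mul, mul_assoc, add_sub_right_comm, ← mul_sub]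
    have hs : ((a + Pi.single k 1, b) + (0, Pi.single i 1) : WExp n) = 
      (a, b) + (0, Pi.single i 1) + (Pi.single k 1, 0) := by simp
    apply Submodule.add_mem
    · rw [hs]
      exact mul_low _ _ (x_low hx k) _ _ (ih b)
    · split_ifs with h
      · rw [one_mul]
        apply Submodule.subset_span
        refine ⟨(a,b), ?_, rfl⟩
        show ((a, b) : WExp n) < _
        rw [Prod.mk_add_mk, Prod.mk_lt_mk]
        left
        constructor
        · simp [single_pos k]
        · simp
      · simp

theorem gen_step (z : A) (s : WExp n)
    (hz : ∀ c, z * am x d c - am x d (c + s) ∈ low K x d (c + s)) (c b : WExp n)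
    (hc : z * am x d c = am x d (c + s))
    (ih : am x d c * am x d b - am x d (c + b) ∈ low K x d (c + b)) :
    am x d (c + s) * am x d b - am x d (c + s + b) ∈ low K x d (c + s + b) := by
  rw [← hc, mul_assoc]
  have h1 := mul_low z s hz _ _ ih
  have h2 := hz (c + b)
  rw [mul_sub] at h1
  rw [add_right_comm]
  have := Submodule.add_mem _ h1 h2
  rwa [sub_add_sub_cancel] at this

theorem am_zero : am x d (0 : WExp n) = 1 := by
  simp [am, lp_zero]

theorem am_mul (hx : ∀ i j, Commute (x i) (x j)) (hd : ∀ i j, Commute (d i) (d j))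
    (hdx : ∀ i j, d i * x j = x j * d i + if i = j then 1 else 0)  (a b : WExp n) : am x d a * am x d b - am x d (a + b) ∈ low K x d (a + b) := by
  obtain ⟨a1, a2⟩ := a
  induction a1 using pi_ind with
  | h0 =>
    induction a2 using pi_ind with
    | h0 =>
      have : ((0, 0) : WExp n) = 0 := rfl
      rw [this, am_zero, zero_add, one_mul, sub_self]; exact Submodule.zero_mem _
    | hs a2 k ih =>
      have : ((0, a2 + Pi.single k 1) : WExp n) = (0, a2) + (0, Pi.single k 1) := by simp
      rw [this]
      apply gen_step (d k) _ (d_low hx hd hdx k) _ _ _ ih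
      rw [d_mul_zero hd]; simp
  | hs a1 k ih =>
    have : ((a1 + Pi.single k 1, a2) : WExp n) = (a1, a2) + (Pi.single k 1, 0) := by simp
    rw [this]
    apply gen_step (x k) _ (x_low hx k) _ _ _ ih
    rw [x_mul hx]; simp


theorem am_mul' {A : Type} [Semiring A] [Algebra K A] {x d : Fin n → A}
    (hx : ∀ i j, Commute (x i) (x j)) (hd : ∀ i j, Commute (d i) (d j))
    (hdx : ∀ i j, d i * x j = x j * d i + if i = j then 1 else 0) (a b : WExp n) :
    ∃ y ∈ Submodule.span K (am x d '' {c : WExp n | c < a + b}), am x d a * am x d b = am x d (a + b) + y := by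
  let : Ring A := Algebra.semiringToRing K
  exact ⟨_, am_mul (K := K) hx hd hdx a b, (add_sub_cancel _ _).symm⟩

theorem linInd_of {ι V : Type} [AddCommMonoid V] [Module K V] (f : ι → V)
    (h : ∀ l : ι →₀ K, Finsupp.linearCombination K f l = 0 → l = 0) : LinearIndependent K f := by
  let : AddCommGroup V := Module.addCommMonoidToAddCommGroup K
  exact linearIndependent_iff.2 h

end abstract

variable {n : ℕ} {K : Type} [Field K]
theorem wx_comm (i j : Fin n) : Commute (wx n K i) (wx n K j) := by
  apply Subtype.ext
  apply LinearMap.ext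
  intro q
  simp [wx, mul_left_comm]

theorem wd_comm (i j : Fin n) : Commute (wd n K i) (wd n K j) := by
  apply Subtype.ext
  apply MvPolynomial.linearMap_ext
  intro s
  ext1
  change pderiv i (pderiv j (monomial s (1 : K))) = pderiv j (pderiv i (monomial s (1 : K)))
  simp only [MvPolynomial.pderiv_monomial]
  by_cases h : i = j
  · subst h; rfl
  · rw [tsub_right_comm]
    congr 1
    simp [h, Ne.symm h]
    ring

theorem wd_wx (i j : Fin n) : wd n K i * wx n K j = wx n K j * wd n K i + if i = j then 1 else 0 := by
  apply Subtype.ext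
  apply LinearMap.ext
  intro q
  have : ((if i = j then 1 else 0 : WeylAlg n K) : Module.End K (MvPolynomial (Fin n) K)) = if i = j then 1 else 0 := by
    split_ifs <;> rfl
  simp only [wd, wx, Subalgebra.coe_mul, Subalgebra.coe_add, this, Module.End.mul_apply, LinearMap.mulLeft_apply,
    Derivation.coeFn_coe, Derivation.leibniz, LinearMap.add_apply, MvPolynomial.pderiv_X, smul_eq_mul]
  by_cases h : i = j
  · subst h; simp
  · simp [h, Ne.symm h]

theorem wMono_eq (a b : Fin n → ℕ) :
    wMono n K a b = lp (wx n K) (List.finRange n) a * lp (wd n K) (List.finRange n) b := rfl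

/-- monomial attached to an exponent pair -/
noncomputable def wm (K : Type) [Field K] (c : WExp n) : WeylAlg n K := wMono n K c.1 c.2

theorem wm_mul (a b : WExp n) : ∃ y ∈ Submodule.span K (wm K '' {c : WExp n | c < a + b}),
    wm K a * wm K b = wm K (a + b) + y :=
  am_mul' (K := K) wx_comm wd_comm wd_wx a b

/-! linear independence -/

theorem lpx_apply (a : Fin n → ℕ) (q : MvPolynomial (Fin n) K) :
    ((lp (wx n K) (List.finRange n) a : WeylAlg n K) : Module.End K (MvPolynomial (Fin n) K)) q =
      monomial (Finsupp.equivFunOnFinite.symm a) 1 * q := by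
  induction a using pi_ind with
  | h0 =>
    rw [lp_zero]
    have : Finsupp.equivFunOnFinite.symm (0 : Fin n → ℕ) = 0 := by ext; simp
    rw [this]; simp
  | hs a k ih =>
    rw [lp_add _ wx_comm _ (List.nodup_finRange n) _ _ (List.mem_finRange k)]
    have : Finsupp.equivFunOnFinite.symm (a + Pi.single k 1) =
        Finsupp.single k 1 + Finsupp.equivFunOnFinite.symm a := by
      ext j; by_cases h : j = k
      · subst h; simp [add_comm]
      · simp [h]
    rw [this, Subalgebra.coe_mul, Module.End.mul_apply, ih]
    simp only [wx, LinearMap.mulLeft_apply]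
    rw [← mul_assoc, X, monomial_mul, one_mul]

theorem lpd_apply [CharZero K] (b : Fin n → ℕ) (s : Fin n →₀ ℕ) :
    ∃ c : K, (c ≠ 0 ↔ b ≤ s) ∧
    ((lp (wd n K) (List.finRange n) b : WeylAlg n K) : Module.End K (MvPolynomial (Fin n) K)) (monomial s 1) =
      monomial (s - Finsupp.equivFunOnFinite.symm b) c := by
  induction b using pi_ind with
  | h0 =>
    refine ⟨1, ?_, ?_⟩
    · simp
    rw [lp_zero]
    have : Finsupp.equivFunOnFinite.symm (0 : Fin n → ℕ) = 0 := by ext; simp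
    rw [this]; simp
  | hs b k ih =>
    obtain ⟨c, hc, h⟩ := ih
    refine ⟨c * ((s k - b k : ℕ) : K), ?_, ?_⟩
    · rw [mul_ne_zero_iff, hc, Nat.cast_ne_zero]
      constructor
      · rintro ⟨h1, h2⟩ j
        have := h1 j
        by_cases hj : j = k
        · subst hj; simp; omega
        · simpa [hj] using this
      · intro h1
        refine ⟨fun j => le_trans (by simp) (h1 j), ?_⟩
        have := h1 k
        simp at this
        omega
    · rw [lp_add _ wd_comm _ (List.nodup_finRange n) _ _ (List.mem_finRange k)]
      rw [Subalgebra.coe_mul, Module.End.mul_apply, h]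
      simp only [wd, Derivation.coeFn_coe, MvPolynomial.pderiv_monomial]
      have : s - Finsupp.equivFunOnFinite.symm (b + Pi.single k 1) =
        s - Finsupp.equivFunOnFinite.symm b - Finsupp.single k 1 := by
        ext j; by_cases h : j = k
        · subst h; simp; omega
        · simp [h]
      rw [this]
      simp

theorem wm_linInd [CharZero K] : LinearIndependent K (wm K : WExp n → WeylAlg n K) := by
  classical
  apply linInd_of
  intro l hl
  by_contra hne
  obtain ⟨u, hu, hmin⟩ := Finset.exists_min_image l.support (fun c => ∑ i, c.2 i)
    (Finsupp.support_nonempty_iff.2 hne)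
  have key : (((Finsupp.linearCombination K (wm K)) l : WeylAlg n K) : 
     Module.End K (MvPolynomial (Fin n) K)) (monomial (Finsupp.equivFunOnFinite.symm u.2) 1) = 0 := by
    rw [hl]; simp
  obtain ⟨c0, hc0, h0⟩ := lpd_apply (K := K) u.2 (Finsupp.equivFunOnFinite.symm u.2)
  have hc0 : c0 ≠ 0 := hc0.2 (by simp)
  rw [tsub_self] at h0
  have key2 := congrArg (coeff (Finsupp.equivFunOnFinite.symm u.1)) key
  rw [Finsupp.linearCombination_apply, Finsupp.sum, AddSubmonoidClass.coe_finsetSum, LinearMap.sum_apply,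
    coeff_sum, Finset.sum_eq_single u] at key2
  · simp only [wm, wMono_eq, Subalgebra.coe_smul, LinearMap.smul_apply, Subalgebra.coe_mul, Module.End.mul_apply,
      h0, lpx_apply, coeff_smul, monomial_mul, add_zero, one_mul, coeff_monomial, if_true, coeff_zero] at key2
    have : l u ≠ 0 := Finsupp.mem_support_iff.1 hu
    simp_all
  · intro v hv hvu
    simp only [wm, wMono_eq, Subalgebra.coe_smul, LinearMap.smul_apply, Subalgebra.coe_mul, Module.End.mul_apply,
      coeff_smul]
    obtain ⟨c, hc, h⟩ := lpd_apply (K := K) v.2 (Finsupp.equivFunOnFinite.symm u.2)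
    rw [h, lpx_apply, monomial_mul, coeff_monomial]
    by_cases hcc : c = 0
    · simp [hcc]
    · have h2 := hc.1 hcc
      have h3 : v.2 ≤ u.2 := by simpa using h2
      have h4 : v.2 = u.2 := by
        have h5 := hmin v hv
        have h6 := (Finset.sum_eq_sum_iff_of_le (s := Finset.univ) (fun i _ => h3 i)).1
          (le_antisymm (Finset.sum_le_sum fun i _ => h3 i) h5)
        funext i; exact h6 i (Finset.mem_univ _)
      rw [h4, tsub_self, add_zero, if_neg, smul_zero]
      intro h7
      apply hvu
      exact Prod.ext (Finsupp.equivFunOnFinite.symm.injective h7) h4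
  · intro h; exact absurd hu h

end WeylGB

namespace WeylGB

section order
variable {n p m : ℕ} (B : Fin n → Fin p)

/-- list of additive functionals underlying `keyList` -/
def funs (j : Fin p) : List (WExp n → ℕ) :=
  [fun t => ordBlk B t.1 t.2 j] ++
  (((List.finRange p).filter fun k => k ≠ j).map fun k t => ordBlk B t.1 t.2 k) ++
  (((List.finRange n).filter fun i => B i = j).map fun i t => t.1 i) ++
  (((List.finRange n).filter fun i => B i = j).map fun i t => t.2 i) ++
  ((((List.finRange n).filter fun i => B i ≠ j).map fun i => [fun t => t.1 i, fun t => t.2 i]).flatten)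

theorem keyList_eq (j : Fin p) (t : WExp n) : keyList B j t = (funs B j).map (fun φ => φ t) := by
  unfold keyList funs
  simp [List.map_flatten, Function.comp_def]

theorem ordBlk_add (a b : WExp n) (j : Fin p) :
    ordBlk B (a + b).1 (a + b).2 j = ordBlk B a.1 a.2 j + ordBlk B b.1 b.2 j := by
  unfold ordBlk
  rw [← Finset.sum_add_distrib]
  apply Finset.sum_congr rfl
  intro i _
  simp; ring

theorem ordBlk_mono {a b : WExp n} (h : a ≤ b) (j : Fin p) :
    ordBlk B a.1 a.2 j ≤ ordBlk B b.1 b.2 j := by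
  apply Finset.sum_le_sum
  intro i _
  exact add_le_add (h.1 i) (h.2 i)

theorem funs_add (j : Fin p) (φ : WExp n → ℕ) (hφ : φ ∈ funs B j) (a b : WExp n) :
    φ (a + b) = φ a + φ b := by
  simp only [funs, List.mem_append, List.mem_singleton, List.mem_map, List.mem_flatten] at hφ
  rcases hφ with (((h | ⟨k, _, h⟩) | ⟨k, _, h⟩) | ⟨k, _, h⟩) | ⟨l, ⟨k, _, hl⟩, h⟩
  · subst h; exact ordBlk_add B a b _
  · subst h; exact ordBlk_add B a b _
  · subst h; rfl
  · subst h; rfl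
  · subst hl
    simp only [List.mem_cons, List.not_mem_nil, or_false] at h
    rcases h with h | h <;> subst h <;> rfl

theorem keyList_inj (j : Fin p) {a b : WExp n} (h : keyList B j a = keyList B j b) : a = b := by
  rw [keyList_eq, keyList_eq, List.map_inj_left] at h
  have h1 : ∀ i, (fun t : WExp n => t.1 i) ∈ funs B j := by
    intro i
    by_cases hi : B i = j
    · simp only [funs, List.mem_append, List.mem_map]
      left; left; right
      exact ⟨i, by simp [hi], rfl⟩
    · simp only [funs, List.mem_append, List.mem_flatten, List.mem_map]
      right
      exact ⟨_, ⟨i, by simp [hi], rfl⟩, by simp⟩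
  have h2 : ∀ i, (fun t : WExp n => t.2 i) ∈ funs B j := by
    intro i
    by_cases hi : B i = j
    · simp only [funs, List.mem_append, List.mem_map]
      left; right
      exact ⟨i, by simp [hi], rfl⟩
    · simp only [funs, List.mem_append, List.mem_flatten, List.mem_map]
      right
      exact ⟨_, ⟨i, by simp [hi], rfl⟩, by simp⟩
  apply Prod.ext <;> funext i
  · exact h _ (h1 i)
  · exact h _ (h2 i)

theorem map_lt (F : List (WExp n → ℕ)) (hF : ∀ φ ∈ F, ∀ a b, φ (a + b) = φ a + φ b) (a b c : WExp n)
    (h : F.map (fun φ => φ a) < F.map (fun φ => φ b)) :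
    F.map (fun φ => φ (c + a)) < F.map (fun φ => φ (c + b)) := by
  induction F with
  | nil => simp at h
  | cons φ F ih =>
    simp only [List.map_cons, List.cons_lt_cons_iff] at h ⊢
    have := hF φ (by simp)
    rw [this, this]
    rcases h with h | ⟨h, h'⟩
    · left; omega
    · right; exact ⟨by omega, ih (fun ψ hψ => hF ψ (by simp [hψ])) h'⟩

theorem map_not_lt (F : List (WExp n → ℕ)) (hF : ∀ φ ∈ F, ∀ a b, φ (a + b) = φ a + φ b) (a b : WExp n)
    (hab : a ≤ b) :
    ¬ F.map (fun φ => φ b) < F.map (fun φ => φ a) := by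
  induction F with
  | nil => simp
  | cons φ F ih =>
    simp only [List.map_cons, List.cons_lt_cons_iff]
    have := hF φ (by simp) a (b - a)
    rw [add_tsub_cancel_of_le hab] at this
    rintro (h | ⟨h, h'⟩)
    · omega
    · exact ih (fun ψ hψ => hF ψ (by simp [hψ])) h'

theorem monLt_iff (j : Fin p) (s t : WExp n) : monLt B j s t ↔ keyList B j s < keyList B j t := Iff.rfl

/-- sorting key of terms -/
def tkey (j : Fin p) (t : WTerm n m) : List ℕ ×ₗ Fin m := toLex (keyList B j t.1, t.2)

theorem termLt_iff (j : Fin p) (s t : WTerm n m) : termLt B j s t ↔ tkey B j s < tkey B j t := by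
  unfold termLt tkey
  rw [Prod.Lex.toLex_lt_toLex, monLt_iff]
  constructor
  · rintro (h | ⟨h, h'⟩)
    · exact Or.inl h
    · exact Or.inr ⟨by rw [h], h'⟩
  · rintro (h | ⟨h, h'⟩)
    · exact Or.inl h
    · exact Or.inr ⟨keyList_inj B j h, h'⟩

theorem tkey_inj (j : Fin p) {s t : WTerm n m} (h : tkey B j s = tkey B j t) : s = t := by
  unfold tkey at h
  have := toLex.injective h
  rw [Prod.mk.injEq] at this
  exact Prod.ext (keyList_inj B j this.1) this.2

theorem termLt_ord {j : Fin p} {s t : WTerm n m} (h : termLt B j s t) : ordT B j s ≤ ordT B j t := by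
  rcases h with h | ⟨h, _⟩
  · rw [monLt_iff, keyList_eq, keyList_eq] at h
    simp only [funs, List.append_assoc, List.cons_append, List.nil_append, List.map_cons, List.cons_lt_cons_iff] at h
    unfold ordT
    omega
  · unfold ordT; rw [h]

theorem termLt_add {j : Fin p} {s t : WTerm n m} (c : WExp n) (h : termLt B j s t) :
    termLt B j (c + s.1, s.2) (c + t.1, t.2) := by
  rcases h with h | ⟨h, h'⟩
  · left
    rw [monLt_iff, keyList_eq, keyList_eq] at h ⊢
    exact map_lt _ (funs_add B j) _ _ _ h
  · right; exact ⟨by rw [h], h'⟩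

theorem termLt_of_lt (j : Fin p) {a b : WExp n} (h : a < b) (i : Fin m) :
    termLt B j (a, i) (b, i) := by
  left
  rw [monLt_iff]
  rcases lt_trichotomy (keyList B j a) (keyList B j b) with h' | h' | h'
  · exact h'
  · exact absurd (keyList_inj B j h') h.ne
  · rw [keyList_eq, keyList_eq] at h'
    exact absurd h' (map_not_lt _ (funs_add B j) _ _ h.le)

theorem termLt_wf (j : Fin p) : WellFounded (termLt B j : WTerm n m → WTerm n m → Prop) := by
  rw [wellFounded_iff_isEmpty_descending_chain]
  constructor
  rintro ⟨f, hf⟩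
  have hw : WellQuasiOrdered (fun s t : WTerm n m => s.1 ≤ t.1 ∧ s.2 = t.2) := by
    have h1 : WellQuasiOrdered ((· ≤ ·) : WExp n → WExp n → Prop) := wellQuasiOrdered_le
    have h2 : WellQuasiOrdered ((· = ·) : Fin m → Fin m → Prop) := Finite.wellQuasiOrdered _
    exact h1.prod h2
  obtain ⟨a, b, hab, h1, h2⟩ := hw f
  have hanti : StrictAnti fun k => tkey B j (f k) := 
    strictAnti_nat_of_succ_lt fun k => (termLt_iff B j _ _).1 (hf k)
  have h3 : termLt B j (f b) (f a) := (termLt_iff B j _ _).2 (hanti hab)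
  rcases h1.lt_or_eq with h | h
  · have := termLt_of_lt B j h (f a).2
    have h4 : ((f b).1, (f a).2) = f b := Prod.ext rfl h2
    rw [h4, termLt_iff] at this
    rw [termLt_iff] at h3
    exact lt_asymm h3 this
  · have : f a = f b := Prod.ext h h2
    rw [this, termLt_iff] at h3
    exact lt_irrefl _ h3

theorem exists_leader {K : Type} [Field K] (j : Fin p) (c : WTerm n m →₀ K) (hc : c ≠ 0) :
    ∃ u, IsLeader B j c u := by
  obtain ⟨u, hu, hmax⟩ := Finset.exists_max_image c.support (tkey B j) (Finsupp.support_nonempty_iff.2 hc)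
  refine ⟨u, hu, fun t ht htu => ?_⟩
  rw [termLt_iff]
  exact lt_of_le_of_ne (hmax t ht) (fun h => htu (tkey_inj B j h))

theorem leader_ord {K : Type} [Field K] {j : Fin p} {c : WTerm n m →₀ K} {u t : WTerm n m}
    (hu : IsLeader B j c u) (ht : t ∈ c.support) : ordT B j t ≤ ordT B j u := by
  by_cases h : t = u
  · rw [h]
  · exact termLt_ord B (hu.2 t ht h)

end order

end WeylGB

namespace WeylGB

section main
variable {n p m t : ℕ} {K : Type} [Field K] {E : Type} [AddCommGroup E] [Module K E]

/-- shift of a term -/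
def sh (c : WExp n) (u : WTerm n m) : WTerm n m := (c + u.1, u.2)

/-- span of a set of terms -/
def TS (K : Type) [Field K] [Module K E] (tv : WTerm n m → E) (S : Set (WTerm n m)) : Submodule K E :=
  Submodule.span K (tv '' S)

theorem mem_TS {tv : WTerm n m → E} (hli : LinearIndependent K tv) (S : Set (WTerm n m))
    (c : WTerm n m →₀ K) : Finsupp.linearCombination K tv c ∈ TS K tv S ↔ ↑c.support ⊆ S := by
  unfold TS
  rw [Finsupp.mem_span_image_iff_linearCombination]
  constructor
  · rintro ⟨l, hl, h⟩
    have : l = c := hli h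
    rw [← this]
    exact hl
  · intro h
    exact ⟨c, h, rfl⟩

theorem exists_rep {tv : WTerm n m → E} (S : Set (WTerm n m)) (x : E) (hx : x ∈ TS K tv S) :
    ∃ c : WTerm n m →₀ K, x = Finsupp.linearCombination K tv c := by
  unfold TS at hx
  rw [Finsupp.mem_span_image_iff_linearCombination] at hx
  obtain ⟨l, _, h⟩ := hx
  exact ⟨l, h.symm⟩

theorem TS_mono {tv : WTerm n m → E} {S S' : Set (WTerm n m)} (h : S ⊆ S') : TS K tv S ≤ TS K tv S' :=
  Submodule.span_mono (Set.image_mono h)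

theorem TS_inter {tv : WTerm n m → E} (hli : LinearIndependent K tv) {S S' : Set (WTerm n m)} {x : E}
    (h : x ∈ TS K tv S) (h' : x ∈ TS K tv S') : x ∈ TS K tv (S ∩ S') := by
  obtain ⟨c, rfl⟩ := exists_rep S x h
  rw [mem_TS hli] at *
  exact Set.subset_inter h h'

theorem L_TS {tv : WTerm n m → E} {L : WExp n → E →ₗ[K] E}
    (hL : ∀ θ u, ∃ y ∈ TS K tv {s | s.2 = u.2 ∧ s.1 < θ + u.1}, L θ (tv u) = tv (sh θ u) + y)
    (θ : WExp n) (S S' : Set (WTerm n m)) (h : ∀ u ∈ S', ∀ c ≤ θ + u.1, (c, u.2) ∈ S)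
    (x : E) (hx : x ∈ TS K tv S') : L θ x ∈ TS K tv S := by
  have : TS K tv S' ≤ (TS K tv S).comap (L θ) := by
    apply Submodule.span_le.2
    rintro _ ⟨u, hu, rfl⟩
    obtain ⟨y, hy, hh⟩ := hL θ u
    rw [SetLike.mem_coe, Submodule.mem_comap, hh]
    apply Submodule.add_mem
    · exact Submodule.subset_span ⟨_, h u hu _ le_rfl, rfl⟩
    · refine TS_mono ?_ hy
      rintro ⟨s1, s2⟩ ⟨h1, h2⟩
      simp only at h1 h2
      rw [h1]
      exact h u hu _ h2.le
  exact this hx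

variable (B : Fin n → Fin p)

theorem g_ord {tv : WTerm n m → E} (hli : LinearIndependent K tv) {L : WExp n → E →ₗ[K] E}
    (hL : ∀ θ u, ∃ y ∈ TS K tv {s | s.2 = u.2 ∧ s.1 < θ + u.1}, L θ (tv u) = tv (sh θ u) + y)
    (c : WTerm n m →₀ K) (u : Fin p → WTerm n m) (hu : ∀ j, IsLeader B j c (u j)) (θ : WExp n) :
    L θ (Finsupp.linearCombination K tv c) ∈
      TS K tv {s | ∀ j, ordT B j s ≤ ordBlk B θ.1 θ.2 j + ordT B j (u j)} := by
  apply L_TS hL θ _ _ _ _ ((mem_TS hli ↑c.support c).2 subset_rfl)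
  intro s hs e he j
  have h1 := leader_ord B (hu j) hs
  have h2 := ordBlk_mono B he j
  rw [ordBlk_add] at h2
  unfold ordT at *
  simp only
  omega

theorem termLe (j : Fin p) {a b : WExp n} (h : a ≤ b) (i : Fin m) :
    tkey B j (a, i) ≤ tkey B j (b, i) := by
  rcases h.lt_or_eq with h | h
  · exact ((termLt_iff B j _ _).1 (termLt_of_lt B j h i)).le
  · rw [h]

theorem lead_split {tv : WTerm n m → E} (hli : LinearIndependent K tv)
    (c : WTerm n m →₀ K) (j : Fin p) (u : WTerm n m) (hu : IsLeader B j c u) :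
    Finsupp.linearCombination K tv c - c u • tv u ∈ TS K tv {s | termLt B j s u} := by
  classical
  have h1 : Finsupp.linearCombination K tv c =
      c u • tv u + Finsupp.linearCombination K tv (c.erase u) := by
    conv_lhs => rw [← Finsupp.single_add_erase u c]
    simp
  rw [h1, add_sub_cancel_left, mem_TS hli]
  intro s hs
  simp only [Finsupp.support_erase, Finset.coe_erase, Set.mem_sdiff, Finset.mem_coe,
    Set.mem_singleton_iff] at hs
  exact hu.2 s hs.1 hs.2

theorem g_lead {tv : WTerm n m → E} (hli : LinearIndependent K tv) {L : WExp n → E →ₗ[K] E}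
    (hL : ∀ θ u, ∃ y ∈ TS K tv {s | s.2 = u.2 ∧ s.1 < θ + u.1}, L θ (tv u) = tv (sh θ u) + y)
    (c : WTerm n m →₀ K) (j : Fin p) (u : WTerm n m) (hu : IsLeader B j c u) (θ : WExp n) :
    L θ (Finsupp.linearCombination K tv c) - c u • tv (sh θ u) ∈
      TS K tv {s | termLt B j s (sh θ u)} := by
  classical
  have h1 : Finsupp.linearCombination K tv c =
      c u • tv u + Finsupp.linearCombination K tv (c.erase u) := by
    conv_lhs => rw [← Finsupp.single_add_erase u c]
    simp
  have h2 : Finsupp.linearCombination K tv (c.erase u) ∈ TS K tv {s | termLt B j s u} := by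
    rw [mem_TS hli]
    intro s hs
    simp only [Finsupp.support_erase, Finset.coe_erase, Set.mem_sdiff, Finset.mem_coe,
      Set.mem_singleton_iff] at hs
    exact hu.2 s hs.1 hs.2
  have h3 : L θ (Finsupp.linearCombination K tv (c.erase u)) ∈ TS K tv {s | termLt B j s (sh θ u)} := by
    apply L_TS hL θ _ _ _ _ h2
    intro s hs e he
    have := termLt_add B θ (show termLt B j s u from hs)
    simp only [Set.mem_ofPred_eq]
    rw [termLt_iff] at *
    exact lt_of_le_of_lt (termLe B j he s.2) this
  obtain ⟨y, hy, hh⟩ := hL θ u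
  rw [h1, map_add, map_smul, hh, smul_add]
  have : c u • tv (sh θ u) + c u • y + L θ (Finsupp.linearCombination K tv (c.erase u)) - c u • tv (sh θ u)
     = c u • y + L θ (Finsupp.linearCombination K tv (c.erase u)) := by abel
  rw [this]
  apply Submodule.add_mem _ (Submodule.smul_mem _ _ _) h3
  refine TS_mono ?_ hy
  rintro ⟨s1, s2⟩ ⟨h1, h2⟩
  simp only at h1 h2
  rw [h1]
  exact termLt_of_lt B j h2 u.2

/-- span of admissible multiples of the generators -/
def PP (r : Fin p) (L : WExp n → E →ₗ[K] E) (g : Fin t → E) (ug : Fin t → Fin p → WTerm n m)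
    (d : Fin p → ℕ) (S : Set (WTerm n m)) : Submodule K E :=
  Submodule.span K {x | ∃ θ i, (∀ j, r < j → ordBlk B θ.1 θ.2 j + ordT B j (ug i j) ≤ d j) ∧
    sh θ (ug i r) ∈ S ∧ x = L θ (g i)}

variable {B}

theorem PP_mono {r : Fin p} {L : WExp n → E →ₗ[K] E} {g : Fin t → E} {ug : Fin t → Fin p → WTerm n m}
    {d : Fin p → ℕ} {S S' : Set (WTerm n m)} (h : S ⊆ S') : PP B r L g ug d S ≤ PP B r L g ug d S' := by
  apply Submodule.span_mono
  rintro _ ⟨θ, i, h1, h2, h3⟩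
  exact ⟨θ, i, h1, h h2, h3⟩

theorem PP_sub_TS {tv : WTerm n m → E} (hli : LinearIndependent K tv) {L : WExp n → E →ₗ[K] E}
    (hL : ∀ θ u, ∃ y ∈ TS K tv {s | s.2 = u.2 ∧ s.1 < θ + u.1}, L θ (tv u) = tv (sh θ u) + y)
    (g : Fin t → E) (cg : Fin t → (WTerm n m →₀ K)) (ug : Fin t → Fin p → WTerm n m)
    (hrep : ∀ i, g i = Finsupp.linearCombination K tv (cg i))
    (hlead : ∀ i j, IsLeader B j (cg i) (ug i j)) (r : Fin p) (d : Fin p → ℕ) (S : Set (WTerm n m))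
    (hS : ∀ s ∈ S, ∀ s', termLt B r s' s → s' ∈ S) :
    PP B r L g ug d S ≤ TS K tv S := by
  apply Submodule.span_le.2
  rintro _ ⟨θ, i, h1, h2, rfl⟩
  have := g_lead B hli hL (cg i) r _ (hlead i r) θ
  rw [← hrep] at this
  rw [← sub_add_cancel (L θ (g i)) (cg i (ug i r) • tv (sh θ (ug i r)))]
  apply Submodule.add_mem
  · exact TS_mono (fun s' hs' => hS _ h2 s' hs') this
  · exact Submodule.smul_mem _ _ (Submodule.subset_span ⟨_, h2, rfl⟩)

/-- a span over a set without maximum is exhausted by principal ones -/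
theorem PP_bound (r : Fin p) (L : WExp n → E →ₗ[K] E) (g : Fin t → E) (ug : Fin t → Fin p → WTerm n m)
    (d : Fin p → ℕ) (S : Set (WTerm n m)) (f : E) (hf : f ∈ PP B r L g ug d S) :
    f = 0 ∨ ∃ v ∈ S, f ∈ PP B r L g ug d {s | tkey B r s ≤ tkey B r v} := by
  unfold PP at hf
  induction hf using Submodule.span_induction with
  | mem x hx =>
    obtain ⟨θ, i, h1, h2, h3⟩ := hx
    right
    exact ⟨_, h2, Submodule.subset_span ⟨θ, i, h1, le_refl (tkey B r (sh θ (ug i r))), h3⟩⟩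
  | zero => left; rfl
  | add x y _ _ hx hy =>
    rcases hx with rfl | ⟨v, hv, hx⟩
    · rw [zero_add]; exact hy
    rcases hy with rfl | ⟨w, hw, hy⟩
    · rw [add_zero]; exact Or.inr ⟨v, hv, hx⟩
    right
    rcases le_total (tkey B r v) (tkey B r w) with h | h
    · refine ⟨w, hw, Submodule.add_mem _ (PP_mono ?_ hx) hy⟩
      intro s hs; exact le_trans hs h
    · refine ⟨v, hv, Submodule.add_mem _ hx (PP_mono ?_ hy)⟩
      intro s hs; exact le_trans hs h
  | smul k x _ hx =>
    rcases hx with rfl | ⟨v, hv, hx⟩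
    · left; simp
    · exact Or.inr ⟨v, hv, Submodule.smul_mem _ _ hx⟩

/-- Claim D: reduction to zero gives an admissible expression. -/
theorem red_PP {tv : WTerm n m → E} (hli : LinearIndependent K tv) {L : WExp n → E →ₗ[K] E}
    (hL : ∀ θ u, ∃ y ∈ TS K tv {s | s.2 = u.2 ∧ s.1 < θ + u.1}, L θ (tv u) = tv (sh θ u) + y)
    (g : Fin t → E) (cg : Fin t → (WTerm n m →₀ K)) (ug : Fin t → Fin p → WTerm n m)
    (hrep : ∀ i, g i = Finsupp.linearCombination K tv (cg i))
    (hlead : ∀ i j, IsLeader B j (cg i) (ug i j)) (r : Fin p) (d : Fin p → ℕ) (v : WTerm n m)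
    (R : E → E → Prop)
    (hR : ∀ x y, R x y → ∃ i, ∃ cf : WTerm n m →₀ K, x = Finsupp.linearCombination K tv cf ∧
      ∃ w ∈ cf.support, tdvd (ug i r) w ∧
      (∀ j, r < j → ∀ uf : WTerm n m, IsLeader B j cf uf →
        ordBlk B (tquot w (ug i r)).1 (tquot w (ug i r)).2 j + ordT B j (ug i j) ≤ ordT B j uf) ∧
      ∃ a : K, y = x - a • L (tquot w (ug i r)) (g i))
    (x : E) (hx : Relation.ReflTransGen R x 0)
    (hxT : x ∈ TS K tv {s | (∀ j, r < j → ordT B j s ≤ d j) ∧ termLt B r s v}) :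
    x ∈ PP B r L g ug d {s | termLt B r s v} := by
  induction hx using Relation.ReflTransGen.head_induction_on with
  | refl => exact Submodule.zero_mem _
  | head h htail ih =>
    rename_i x y
    obtain ⟨i, cf, hcf, w, hw, hdv, hord, a, rfl⟩ := hR _ _ h
    have hsupp := hxT
    rw [hcf, mem_TS hli] at hsupp
    have hcf0 : cf ≠ 0 := by rintro rfl; simp at hw
    set θ := tquot w (ug i r) with hθ
    have hsh : sh θ (ug i r) = w := by
      apply Prod.ext
      · apply Prod.ext
        · exact tsub_add_cancel_of_le hdv.2.1
        · exact tsub_add_cancel_of_le hdv.2.2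
      · exact hdv.1
    have hadm : ∀ j, r < j → ordBlk B θ.1 θ.2 j + ordT B j (ug i j) ≤ d j := by
      intro j hj
      obtain ⟨uf, huf⟩ := exists_leader B j cf hcf0
      exact le_trans (hord j hj uf huf) ((hsupp huf.1).1 j hj)
    have hwv : termLt B r w v := (hsupp hw).2
    have hP : L θ (g i) ∈ PP B r L g ug d {s | termLt B r s v} :=
      Submodule.subset_span ⟨θ, i, hadm, by rw [hsh]; exact hwv, rfl⟩
    have hlow : ∀ s ∈ {s | termLt B r s v}, ∀ s', termLt B r s' s → s' ∈ {s | termLt B r s v} := by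
      intro s hs s' hs'
      simp only [Set.mem_ofPred_eq, termLt_iff] at *
      exact hs'.trans hs
    have hT1 := PP_sub_TS hli hL g cg ug hrep hlead r d _ hlow hP
    have hT2 : L θ (g i) ∈ TS K tv {s | ∀ j, r < j → ordT B j s ≤ d j} := by
      rw [hrep]
      refine TS_mono ?_ (g_ord B hli hL (cg i) (ug i) (hlead i) θ)
      intro s hs j hj
      exact le_trans (hs j) (hadm j hj)
    have hT := TS_inter hli hT2 hT1
    have := ih (Submodule.sub_mem _ hxT (Submodule.smul_mem _ a hT))
    rw [← sub_add_cancel x (a • L θ (g i))]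
    exact Submodule.add_mem _ this (Submodule.smul_mem _ _ hP)

theorem low_PP (r : Fin p) (L : WExp n → E →ₗ[K] E) (g : Fin t → E) (ug : Fin t → Fin p → WTerm n m)
    (d : Fin p → ℕ) (v : WTerm n m) (θ : WExp n) (i : Fin t) 
    (hadm : ∀ j, r < j → ordBlk B θ.1 θ.2 j + ordT B j (ug i j) ≤ d j)
    (hv : tkey B r (sh θ (ug i r)) ≤ tkey B r v) (y : E)
    (hy : y ∈ Submodule.span K ((fun c => L c (g i)) '' {c | c < θ})) :
    y ∈ PP B r L g ug d {s | termLt B r s v} := by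
  have : Submodule.span K ((fun c => L c (g i)) '' {c | c < θ}) ≤ PP B r L g ug d {s | termLt B r s v} := by
    apply Submodule.span_mono
    rintro _ ⟨c, hc, rfl⟩
    have hc : c < θ := hc
    refine ⟨c, i, ?_, ?_, rfl⟩
    · intro j hj
      have := ordBlk_mono B hc.le j
      have := hadm j hj
      omega
    · rw [Set.mem_ofPred_eq, termLt_iff]
      refine lt_of_lt_of_le ?_ hv
      rw [← termLt_iff]
      exact termLt_of_lt B r (by gcongr) _
  exact this hy

/-- multiplication by a monomial -/
theorem mul_PP (r : Fin p) (L : WExp n → E →ₗ[K] E)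
    (hLL : ∀ γ θ x, ∃ y ∈ Submodule.span K ((fun c => L c x) '' {c | c < γ + θ}),
      L γ (L θ x) = L (γ + θ) x + y)
    (g : Fin t → E) (ug : Fin t → Fin p → WTerm n m)
    (d d' : Fin p → ℕ) (v : WTerm n m) (γ : WExp n)
    (hd : ∀ j, r < j → ordBlk B γ.1 γ.2 j + d' j ≤ d j)
    (x : E) (hx : x ∈ PP B r L g ug d' {s | termLt B r s v}) :
    L γ x ∈ PP B r L g ug d {s | termLt B r s (sh γ v)} := by
  have : PP B r L g ug d' {s | termLt B r s v} ≤
      (PP B r L g ug d {s | termLt B r s (sh γ v)}).comap (L γ) := by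
    apply Submodule.span_le.2
    rintro _ ⟨θ, i, h1, h2, rfl⟩
    obtain ⟨y, hy, h⟩ := hLL γ θ (g i)
    have hadm : ∀ j, r < j → ordBlk B (γ + θ).1 (γ + θ).2 j + ordT B j (ug i j) ≤ d j := by
      intro j hj
      rw [ordBlk_add]
      have := h1 j hj
      have := hd j hj
      omega
    have hlt : termLt B r (sh (γ + θ) (ug i r)) (sh γ v) := by
      have := termLt_add B γ (show termLt B r (sh θ (ug i r)) v from h2)
      unfold sh at *
      rwa [add_assoc]
    rw [SetLike.mem_coe, Submodule.mem_comap, h]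
    apply Submodule.add_mem
    · exact Submodule.subset_span ⟨γ + θ, i, hadm, hlt, rfl⟩
    · exact low_PP r L g ug d _ _ i hadm ((termLt_iff B r _ _).1 hlt).le y hy
  exact this hx

end main

end WeylGB

namespace WeylGB

section main2
variable {n p m t : ℕ} {K : Type} [Field K] {E : Type} [AddCommGroup E] [Module K E]
variable {B : Fin n → Fin p}

/-- Claim C -/
theorem spoly_PP {tv : WTerm n m → E} (hli : LinearIndependent K tv) {L : WExp n → E →ₗ[K] E}
    (hL : ∀ θ u, ∃ y ∈ TS K tv {s | s.2 = u.2 ∧ s.1 < θ + u.1}, L θ (tv u) = tv (sh θ u) + y)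
    (hLL : ∀ γ θ x, ∃ y ∈ Submodule.span K ((fun c => L c x) '' {c | c < γ + θ}),
      L γ (L θ x) = L (γ + θ) x + y)
    (g : Fin t → E) (cg : Fin t → (WTerm n m →₀ K)) (ug : Fin t → Fin p → WTerm n m)
    (hrep : ∀ i, g i = Finsupp.linearCombination K tv (cg i))
    (hlead : ∀ i j, IsLeader B j (cg i) (ug i j)) (r : Fin p) (d : Fin p → ℕ) (v : WTerm n m)
    (R : E → E → Prop)
    (hR : ∀ x y, R x y → ∃ i, ∃ cf : WTerm n m →₀ K, x = Finsupp.linearCombination K tv cf ∧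
      ∃ w ∈ cf.support, tdvd (ug i r) w ∧
      (∀ j, r < j → ∀ uf : WTerm n m, IsLeader B j cf uf →
        ordBlk B (tquot w (ug i r)).1 (tquot w (ug i r)).2 j + ordT B j (ug i j) ≤ ordT B j uf) ∧
      ∃ a : K, y = x - a • L (tquot w (ug i r)) (g i))
    (hS : ∀ i j, (ug i r).2 = (ug j r).2 → Relation.ReflTransGen R
      ((cg i (ug i r))⁻¹ • L (((ug i r).1 ⊔ (ug j r).1) - (ug i r).1) (g i) -
       (cg j (ug j r))⁻¹ • L (((ug i r).1 ⊔ (ug j r).1) - (ug j r).1) (g j)) 0)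
    (θ θ' : WExp n) (i i' : Fin t)
    (hadm : ∀ j, r < j → ordBlk B θ.1 θ.2 j + ordT B j (ug i j) ≤ d j)
    (hadm' : ∀ j, r < j → ordBlk B θ'.1 θ'.2 j + ordT B j (ug i' j) ≤ d j)
    (hv : sh θ (ug i r) = v) (hv' : sh θ' (ug i' r) = v) :
    (cg i (ug i r))⁻¹ • L θ (g i) - (cg i' (ug i' r))⁻¹ • L θ' (g i') ∈
      PP B r L g ug d {s | termLt B r s v} := by
  have hk : (ug i r).2 = v.2 := by rw [← hv]; rfl
  have hk' : (ug i' r).2 = v.2 := by rw [← hv']; rfl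
  have hv1 : θ + (ug i r).1 = v.1 := by rw [← hv]; rfl
  have hv1' : θ' + (ug i' r).1 = v.1 := by rw [← hv']; rfl
  have hred := hS i i' (hk.trans hk'.symm)
  set u := ug i r with hu
  set u' := ug i' r with hu'
  set ℓ : WExp n := u.1 ⊔ u'.1 with hℓ
  set a := (cg i u)⁻¹ with ha
  set a' := (cg i' u')⁻¹ with ha'
  have hc : a * cg i u = 1 := inv_mul_cancel₀ (Finsupp.mem_support_iff.1 (hlead i r).1)
  have hc' : a' * cg i' u' = 1 := inv_mul_cancel₀ (Finsupp.mem_support_iff.1 (hlead i' r).1)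
  have hℓv : ℓ ≤ v.1 := sup_le (hv1 ▸ le_add_self) (hv1' ▸ le_add_self)
  obtain ⟨γ, hγ⟩ : ∃ γ : WExp n, γ + ℓ = v.1 := ⟨v.1 - ℓ, tsub_add_cancel_of_le hℓv⟩
  set τ : WExp n := ℓ - u.1 with hτ
  set τ' : WExp n := ℓ - u'.1 with hτ'
  have h1 : τ + u.1 = ℓ := tsub_add_cancel_of_le le_sup_left
  have h1' : τ' + u'.1 = ℓ := tsub_add_cancel_of_le le_sup_right
  have hθ : γ + τ = θ := by
    apply add_right_cancel (b := u.1)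
    rw [add_assoc, h1, hγ, hv1]
  have hθ' : γ + τ' = θ' := by
    apply add_right_cancel (b := u'.1)
    rw [add_assoc, h1', hγ, hv1']
  have hs : sh τ u = (ℓ, v.2) := Prod.ext h1 hk
  have hs' : sh τ' u' = (ℓ, v.2) := Prod.ext h1' hk'
  have hsv : sh γ (ℓ, v.2) = v := Prod.ext hγ rfl
  let d' : Fin p → ℕ := fun j => max (ordBlk B τ.1 τ.2 j + ordT B j (ug i j))
    (ordBlk B τ'.1 τ'.2 j + ordT B j (ug i' j))
  have hT1 : a • L τ (g i) - a' • L τ' (g i') ∈ TS K tv {s | ∀ j, r < j → ordT B j s ≤ d' j} := by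
    apply Submodule.sub_mem <;> apply Submodule.smul_mem <;> rw [hrep]
    · refine TS_mono ?_ (g_ord B hli hL (cg i) (ug i) (hlead i) τ)
      intro s hs j _
      exact le_trans (hs j) (le_max_left _ _)
    · refine TS_mono ?_ (g_ord B hli hL (cg i') (ug i') (hlead i') τ')
      intro s hs j _
      exact le_trans (hs j) (le_max_right _ _)
  have hT2 : a • L τ (g i) - a' • L τ' (g i') ∈ TS K tv {s | termLt B r s (ℓ, v.2)} := by
    have e1 := g_lead B hli hL (cg i) r u (hlead i r) τ
    have e2 := g_lead B hli hL (cg i') r u' (hlead i' r) τ'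
    rw [← hrep, hs] at e1
    rw [← hrep, hs'] at e2
    have e3 := Submodule.sub_mem _ (Submodule.smul_mem _ a e1) (Submodule.smul_mem _ a' e2)
    rwa [smul_sub, smul_sub, smul_smul, smul_smul, hc, hc', sub_sub_sub_cancel_right] at e3
  have hP := red_PP hli hL g cg ug hrep hlead r d' (ℓ, v.2) R hR _ hred (TS_inter hli hT1 hT2)
  have hP2 := mul_PP r L hLL g ug d d' (ℓ, v.2) γ ?_ _ hP
  · rw [hsv] at hP2
    obtain ⟨y, hy, e⟩ := hLL γ τ (g i)
    obtain ⟨y', hy', e'⟩ := hLL γ τ' (g i')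
    rw [map_sub, map_smul, map_smul, e, e', hθ, hθ'] at hP2
    rw [hθ] at hy
    rw [hθ'] at hy'
    have q := low_PP r L g ug d v θ i hadm (by rw [← hu, hv]) y hy
    have q' := low_PP r L g ug d v θ' i' hadm' (by rw [← hu', hv']) y' hy'
    have := Submodule.sub_mem _ hP2 (Submodule.sub_mem _ (Submodule.smul_mem _ a q) (Submodule.smul_mem _ a' q'))
    convert this using 1
    rw [smul_add, smul_add]
    abel
  · intro j hj
    have w1 := hadm j hj
    have w2 := hadm' j hj
    rw [← hθ, ordBlk_add] at w1
    rw [← hθ', ordBlk_add] at w2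
    simp only [d']
    omega

theorem abstract_main {tv : WTerm n m → E} (hli : LinearIndependent K tv) {L : WExp n → E →ₗ[K] E}
    (hL : ∀ θ u, ∃ y ∈ TS K tv {s | s.2 = u.2 ∧ s.1 < θ + u.1}, L θ (tv u) = tv (sh θ u) + y)
    (hLL : ∀ γ θ x, ∃ y ∈ Submodule.span K ((fun c => L c x) '' {c | c < γ + θ}),
      L γ (L θ x) = L (γ + θ) x + y)
    (N : Submodule K E) (hNL : ∀ θ, ∀ x ∈ N, L θ x ∈ N)
    (g : Fin t → E) (hgN : ∀ i, g i ∈ N)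
    (cg : Fin t → (WTerm n m →₀ K)) (ug : Fin t → Fin p → WTerm n m)
    (hrep : ∀ i, g i = Finsupp.linearCombination K tv (cg i))
    (hlead : ∀ i j, IsLeader B j (cg i) (ug i j)) (r : Fin p)
    (R : E → E → Prop)
    (hR : ∀ x y, R x y → ∃ i, ∃ cf : WTerm n m →₀ K, x = Finsupp.linearCombination K tv cf ∧
      ∃ w ∈ cf.support, tdvd (ug i r) w ∧
      (∀ j, r < j → ∀ uf : WTerm n m, IsLeader B j cf uf →
        ordBlk B (tquot w (ug i r)).1 (tquot w (ug i r)).2 j + ordT B j (ug i j) ≤ ordT B j uf) ∧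
      ∃ a : K, y = x - a • L (tquot w (ug i r)) (g i))
    (hS : ∀ i j, (ug i r).2 = (ug j r).2 → Relation.ReflTransGen R
      ((cg i (ug i r))⁻¹ • L (((ug i r).1 ⊔ (ug j r).1) - (ug i r).1) (g i) -
       (cg j (ug j r))⁻¹ • L (((ug i r).1 ⊔ (ug j r).1) - (ug j r).1) (g j)) 0)
    (s : Fin p) (hrs : ∀ j, r < j ↔ s = j ∨ s < j)
    (hseq : ∀ f ∈ N, f ≠ 0 → ∀ (cf : WTerm n m →₀ K) (uf : Fin p → WTerm n m),
      f = Finsupp.linearCombination K tv cf → (∀ j, IsLeader B j cf (uf j)) →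
      ∃ i, tdvd (ug i s) (uf s) ∧ ∀ j, s < j →
      ordBlk B (tquot (uf s) (ug i s)).1 (tquot (uf s) (ug i s)).2 j +
          ordT B j (ug i j) ≤ ordT B j (uf j))
    (f : E) (hfN : f ∈ N) (hf0 : f ≠ 0) (cf : WTerm n m →₀ K) (uf : Fin p → WTerm n m)
    (hf : f = Finsupp.linearCombination K tv cf) (huf : ∀ j, IsLeader B j cf (uf j)) :
    ∃ i, tdvd (ug i r) (uf r) ∧ ∀ j, r < j →
      ordBlk B (tquot (uf r) (ug i r)).1 (tquot (uf r) (ug i r)).2 j +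
          ordT B j (ug i j) ≤ ordT B j (uf j) := by
  -- Claim A
  have hA : ∀ (d : Fin p → ℕ) (u : WTerm n m), ∀ f ∈ N, ∀ cf : WTerm n m →₀ K,
      f = Finsupp.linearCombination K tv cf → IsLeader B s cf u →
      (∀ q ∈ cf.support, ∀ j, r < j → ordT B j q ≤ d j) → f ∈ PP B r L g ug d Set.univ := by
    intro d u
    induction u using (termLt_wf B s).induction with
    | _ u IH =>
    intro f hfN cf hf hu hd
    have hcf0 : cf ≠ 0 := by rintro rfl; simp [IsLeader] at hu
    have hf0 : f ≠ 0 := by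
      intro h0
      apply hcf0
      apply hli
      rw [← hf, h0, map_zero]
    have hex : ∀ j, ∃ w, IsLeader B j cf w ∧ (j = s → w = u) := by
      intro j
      by_cases hj : j = s
      · subst hj; exact ⟨u, hu, fun _ => rfl⟩
      · obtain ⟨w, hw⟩ := exists_leader B j cf hcf0
        exact ⟨w, hw, fun h => absurd h hj⟩
    choose uf huf hufs using hex
    obtain ⟨i, hdv, hord⟩ := hseq f hfN hf0 cf uf hf huf
    rw [hufs s rfl] at hdv hord
    set θ := tquot u (ug i s) with hθ
    have hsh : sh θ (ug i s) = u := by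
      apply Prod.ext
      · apply Prod.ext
        · exact tsub_add_cancel_of_le hdv.2.1
        · exact tsub_add_cancel_of_le hdv.2.2
      · exact hdv.1
    have hadm : ∀ j, r < j → ordBlk B θ.1 θ.2 j + ordT B j (ug i j) ≤ d j := by
      intro j hj
      rcases (hrs j).1 hj with h | h
      · subst h
        have := hd u hu.1 s hj
        rw [← hsh] at this
        unfold sh ordT at this
        simp only at this
        rw [ordBlk_add] at this
        exact this
      · exact le_trans (hord j h) (hd _ (huf j).1 j hj)
    have hPg : L θ (g i) ∈ PP B r L g ug d Set.univ :=
      Submodule.subset_span ⟨θ, i, hadm, trivial, rfl⟩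
    set b := cf u * (cg i (ug i s))⁻¹ with hb
    have hbc : b * cg i (ug i s) = cf u := by
      rw [hb, mul_assoc, inv_mul_cancel₀ (Finsupp.mem_support_iff.1 (hlead i s).1), mul_one]
    have hN' : f - b • L θ (g i) ∈ N := Submodule.sub_mem _ hfN (Submodule.smul_mem _ _ (hNL _ _ (hgN i)))
    have hT1 : f - b • L θ (g i) ∈ TS K tv {q | ∀ j, r < j → ordT B j q ≤ d j} := by
      apply Submodule.sub_mem
      · rw [hf, mem_TS hli]; exact fun q hq => hd q hq
      · apply Submodule.smul_mem
        rw [hrep]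
        refine TS_mono ?_ (g_ord B hli hL (cg i) (ug i) (hlead i) θ)
        intro s hs j hj
        exact le_trans (hs j) (hadm j hj)
    have hf2 : f - cf u • tv u ∈ TS K tv {q | termLt B s q u} := by
      rw [hf]; exact lead_split B hli cf s u hu
    have hT2 : f - b • L θ (g i) ∈ TS K tv {q | termLt B s q u} := by
      have e1 := g_lead B hli hL (cg i) s _ (hlead i s) θ
      rw [← hrep, hsh] at e1
      have e2 := Submodule.sub_mem _ hf2 (Submodule.smul_mem _ b e1)
      rw [smul_sub, smul_smul, hbc] at e2
      convert e2 using 1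
      abel
    have hT := TS_inter hli hT1 hT2
    obtain ⟨c', hc'⟩ := exists_rep _ _ hT
    have hsupp := hT
    rw [hc', mem_TS hli] at hsupp
    have hfin : f - b • L θ (g i) ∈ PP B r L g ug d Set.univ := by
      by_cases h0 : c' = 0
      · rw [hc', h0, map_zero]; exact Submodule.zero_mem _
      · obtain ⟨w, hw⟩ := exists_leader B s c' h0
        exact IH w (hsupp hw.1).2 _ hN' c' hc' hw (fun q hq => (hsupp hq).1)
    rw [← sub_add_cancel f (b • L θ (g i))]
    exact Submodule.add_mem _ hfin (Submodule.smul_mem _ _ hPg)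
  set d : Fin p → ℕ := fun j => ordT B j (uf j) with hd
  have hfP : f ∈ PP B r L g ug d Set.univ :=
    hA d (uf s) f hfN cf hf (huf s) (fun q hq j _ => leader_ord B (huf j) hq)
  have hlow : ∀ v : WTerm n m, ∀ q ∈ {q | termLt B r q v}, ∀ q', termLt B r q' q → q' ∈ {q | termLt B r q v} := by
    intro v q hq q' hq'
    simp only [Set.mem_ofPred_eq, termLt_iff] at *
    exact hq'.trans hq
  have hsupp : ∀ S, f ∈ TS K tv S → uf r ∈ S := by
    intro S hS
    rw [hf, mem_TS hli] at hS
    exact hS (huf r).1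
  have hno : ∀ v, f ∈ PP B r L g ug d {q | termLt B r q v} → termLt B r (uf r) v := fun v hv =>
    hsupp _ (PP_sub_TS hli hL g cg ug hrep hlead r d _ (hlow v) hv)
  -- Claim B and conclusion
  by_contra hcon
  have hmain : ∀ v, f ∉ PP B r L g ug d {q | tkey B r q ≤ tkey B r v} := by
    intro v
    induction v using (termLt_wf B r).induction with
    | _ v IH =>
    intro hv
    -- f is not in the strictly smaller span
    have hnot : f ∉ PP B r L g ug d {q | termLt B r q v} := by
      intro h
      rcases PP_bound r L g ug d _ f h with h0 | ⟨w, hw, hfw⟩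
      · exact hf0 h0
      · exact IH w hw hfw
    by_cases hgen : ∃ θ i, (∀ j, r < j → ordBlk B θ.1 θ.2 j + ordT B j (ug i j) ≤ d j) ∧ sh θ (ug i r) = v
    · obtain ⟨θ, i, hadm, hθv⟩ := hgen
      have hne : uf r ≠ v := by
        intro h
        apply hcon
        refine ⟨i, ?_, ?_⟩
        · rw [h, ← hθv]
          exact ⟨rfl, le_add_self, le_add_self⟩
        · have : tquot (uf r) (ug i r) = θ := by
            rw [h, ← hθv]
            exact add_tsub_cancel_right θ (ug i r).1
          rw [this]
          exact hadm
      set h0 := (cg i (ug i r))⁻¹ • L θ (g i) with hh0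
      have hsup : PP B r L g ug d {q | tkey B r q ≤ tkey B r v} ≤
          Submodule.span K {h0} ⊔ PP B r L g ug d {q | termLt B r q v} := by
        apply Submodule.span_le.2
        rintro _ ⟨θ', i', hadm', hle, rfl⟩
        rcases lt_or_eq_of_le (show tkey B r (sh θ' (ug i' r)) ≤ tkey B r v from hle) with hlt | heq
        · apply Submodule.mem_sup_right
          exact Submodule.subset_span ⟨θ', i', hadm', (termLt_iff B r _ _).2 hlt, rfl⟩
        · have hv' := tkey_inj B r heq
          have hC := spoly_PP hli hL hLL g cg ug hrep hlead r d v R hR hS θ' θ i' i hadm' hadm hv' hθv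
          have hcne : cg i' (ug i' r) ≠ 0 := Finsupp.mem_support_iff.1 (hlead i' r).1
          have e : L θ' (g i') = cg i' (ug i' r) • h0 +
              cg i' (ug i' r) • ((cg i' (ug i' r))⁻¹ • L θ' (g i') - h0) := by
            rw [smul_sub, smul_inv_smul₀ hcne]; abel
          rw [e]
          exact Submodule.add_mem_sup (Submodule.smul_mem _ _ (Submodule.mem_span_singleton_self _))
            (Submodule.smul_mem _ _ hC)
      obtain ⟨y, hy, z, hz, hyz⟩ := Submodule.mem_sup.1 (hsup hv)
      obtain ⟨b, rfl⟩ := Submodule.mem_span_singleton.1 hy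
      by_cases hb : b = 0
      · rw [hb, zero_smul, zero_add] at hyz
        exact hnot (hyz ▸ hz)
      -- the leading term `v` survives with coefficient `b`
      have hc : (cg i (ug i r))⁻¹ * cg i (ug i r) = 1 :=
        inv_mul_cancel₀ (Finsupp.mem_support_iff.1 (hlead i r).1)
      have e1 := g_lead B hli hL (cg i) r _ (hlead i r) θ
      rw [← hrep, hθv] at e1
      have e2 := Submodule.smul_mem _ (b * (cg i (ug i r))⁻¹) e1
      rw [smul_sub, smul_smul, mul_assoc, hc, mul_one, mul_smul, ← hh0] at e2
      have e3 := PP_sub_TS hli hL g cg ug hrep hlead r d _ (hlow v) hz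
      have e4 := Submodule.add_mem _ e2 e3
      have e5 : b • h0 - b • tv v + z = f - b • tv v := by rw [← hyz]; abel
      rw [e5] at e4
      have e6 : f - b • tv v = Finsupp.linearCombination K tv (cf - Finsupp.single v b) := by
        rw [map_sub, Finsupp.linearCombination_single, hf]
      rw [e6, mem_TS hli] at e4
      have hvf : v ∈ cf.support := by
        rw [Finsupp.mem_support_iff]
        intro hv0
        have hmem : v ∈ (cf - Finsupp.single v b).support := by
          rw [Finsupp.mem_support_iff]
          simp [hv0, hb]
        have := e4 hmem
        rw [Set.mem_ofPred_eq, termLt_iff] at this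
        exact lt_irrefl _ this
      have hlt := (huf r).2 v hvf hne.symm
      have hmem : uf r ∈ (cf - Finsupp.single v b).support := by
        rw [Finsupp.mem_support_iff, Finsupp.sub_apply, Finsupp.single_apply, if_neg hne.symm, sub_zero]
        exact Finsupp.mem_support_iff.1 (huf r).1
      have := e4 hmem
      rw [Set.mem_ofPred_eq, termLt_iff] at this
      rw [termLt_iff] at hlt
      exact lt_asymm hlt this
    · apply hnot
      refine Submodule.span_mono ?_ hv
      rintro _ ⟨θ, i, hadm, hle, rfl⟩
      refine ⟨θ, i, hadm, ?_, rfl⟩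
      rcases lt_or_eq_of_le (show tkey B r (sh θ (ug i r)) ≤ tkey B r v from hle) with hlt | heq
      · exact (termLt_iff B r _ _).2 hlt
      · exact absurd ⟨θ, i, hadm, tkey_inj B r heq⟩ hgen
  rcases PP_bound r L g ug d _ f hfP with h0 | ⟨v, _, hv⟩
  · exact hf0 h0
  · exact hmain v hv

end main2

section mon
variable {n p m t : ℕ} {K : Type} [Field K]
variable {B : Fin n → Fin p}

theorem abstract_mon {E : Type} [AddCommMonoid E] [Module K E] {tv : WTerm n m → E} (hli : LinearIndependent K tv) {L : WExp n → E →ₗ[K] E}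
    (hL : ∀ θ u, ∃ y ∈ Submodule.span K (tv '' {s | s.2 = u.2 ∧ s.1 < θ + u.1}), L θ (tv u) = tv (sh θ u) + y)
    (hLL : ∀ γ θ x, ∃ y ∈ Submodule.span K ((fun c => L c x) '' {c | c < γ + θ}),
      L γ (L θ x) = L (γ + θ) x + y)
    (N : Submodule K E) (hNL : ∀ θ, ∀ x ∈ N, L θ x ∈ N)
    (g : Fin t → E) (hgN : ∀ i, g i ∈ N)
    (cg : Fin t → (WTerm n m →₀ K)) (ug : Fin t → Fin p → WTerm n m)
    (hrep : ∀ i, g i = Finsupp.linearCombination K tv (cg i))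
    (hlead : ∀ i j, IsLeader B j (cg i) (ug i j)) (r : Fin p)
    (R : E → E → Prop)
    (hR : ∀ x y, R x y → ∃ i, ∃ cf : WTerm n m →₀ K, x = Finsupp.linearCombination K tv cf ∧
      ∃ w ∈ cf.support, tdvd (ug i r) w ∧
      (∀ j, r < j → ∀ uf : WTerm n m, IsLeader B j cf uf →
        ordBlk B (tquot w (ug i r)).1 (tquot w (ug i r)).2 j + ordT B j (ug i j) ≤ ordT B j uf) ∧
      ∃ a : K, x = y + a • L (tquot w (ug i r)) (g i))
    (hS : ∀ i j, (ug i r).2 = (ug j r).2 → ∃ z, Relation.ReflTransGen R z 0 ∧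
      z + (cg j (ug j r))⁻¹ • L (((ug i r).1 ⊔ (ug j r).1) - (ug j r).1) (g j) =
      (cg i (ug i r))⁻¹ • L (((ug i r).1 ⊔ (ug j r).1) - (ug i r).1) (g i))
    (s : Fin p) (hrs : ∀ j, r < j ↔ s = j ∨ s < j)
    (hseq : ∀ f ∈ N, f ≠ 0 → ∀ (cf : WTerm n m →₀ K) (uf : Fin p → WTerm n m),
      f = Finsupp.linearCombination K tv cf → (∀ j, IsLeader B j cf (uf j)) →
      ∃ i, tdvd (ug i s) (uf s) ∧ ∀ j, s < j →
      ordBlk B (tquot (uf s) (ug i s)).1 (tquot (uf s) (ug i s)).2 j +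
          ordT B j (ug i j) ≤ ordT B j (uf j))
    (f : E) (hfN : f ∈ N) (hf0 : f ≠ 0) (cf : WTerm n m →₀ K) (uf : Fin p → WTerm n m)
    (hf : f = Finsupp.linearCombination K tv cf) (huf : ∀ j, IsLeader B j cf (uf j)) :
    ∃ i, tdvd (ug i r) (uf r) ∧ ∀ j, r < j →
      ordBlk B (tquot (uf r) (ug i r)).1 (tquot (uf r) (ug i r)).2 j +
          ordT B j (ug i j) ≤ ordT B j (uf j) := by
  let inst : AddCommGroup E := Module.addCommMonoidToAddCommGroup K
  refine abstract_main (E := E) (B := B) (tv := tv) hli (L := L) hL hLL N hNL g hgN cg ug hrep hlead r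
    R ?_ ?_ s hrs hseq f hfN hf0 cf uf hf huf
  · intro x y hxy
    obtain ⟨i, c, hc, w, hw, h1, h2, a, h3⟩ := hR x y hxy
    exact ⟨i, c, hc, w, hw, h1, h2, a, eq_sub_of_add_eq h3.symm⟩
  · intro i j hij
    obtain ⟨z, hz, h⟩ := hS i j hij
    have e := eq_sub_of_add_eq h
    rw [← e]
    exact hz

end mon

end WeylGB

namespace WeylGB

section inst
variable {n p m t : ℕ} {K : Type} [Field K]

/-- left multiplication by a monomial -/
noncomputable def LM (n m : ℕ) (K : Type) [Field K] (θ : WExp n) :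
    (Fin m → WeylAlg n K) →ₗ[K] (Fin m → WeylAlg n K) where
  toFun x := fun j => wMono n K θ.1 θ.2 * x j
  map_add' x y := by funext j; exact mul_add _ _ _
  map_smul' a x := by funext j; exact mul_smul_comm a (wMono n K θ.1 θ.2) (x j)

theorem termVal_eq (u : WTerm n m) :
    termVal K u = LinearMap.single K (fun _ => WeylAlg n K) u.2 (wm K u.1) := rfl

theorem injj (j : Fin m) (S : Set (WExp n)) : Set.InjOn (fun e : WExp n => ((e, j) : WTerm n m)) S :=
  fun _ _ _ _ h => (Prod.ext_iff.1 h).1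

theorem tv_proj (c : WTerm n m →₀ K) (j : Fin m) :
    Finsupp.linearCombination K (termVal K : WTerm n m → _) c j =
      Finsupp.linearCombination K (wm K : WExp n → WeylAlg n K)
        (c.comapDomain (fun e => (e, j)) (injj j _)) := by
  classical
  induction c using Finsupp.induction_linear with
  | zero =>
    have : (0 : WTerm n m →₀ K).comapDomain (fun e : WExp n => (e, j)) (injj j _) = 0 := by
      ext e; rfl
    rw [this, map_zero, map_zero]; rfl
  | add x y hx hy =>
    rw [map_add, Pi.add_apply, hx, hy, ← map_add]
    congr 1
    ext e
    rfl
  | single u k =>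
    rw [Finsupp.linearCombination_single, Pi.smul_apply]
    by_cases h : u.2 = j
    · obtain ⟨u1, u2⟩ := u
      simp only at h
      subst h
      have : (Finsupp.single (u1, u2) k).comapDomain (fun e : WExp n => (e, u2))
          (injj u2 _) = Finsupp.single u1 k := by
        ext e
        rw [Finsupp.comapDomain_apply, Finsupp.single_apply, Finsupp.single_apply]
        simp
      rw [this, Finsupp.linearCombination_single]
      congr 1
      exact Pi.single_eq_same _ _
    · have : (Finsupp.single u k).comapDomain (fun e : WExp n => (e, j))
          (injj j _) = 0 := by
        ext e
        rw [Finsupp.comapDomain_apply, Finsupp.single_apply, if_neg]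
        · rfl
        · intro hh; exact h (by rw [hh])
      rw [this, map_zero]
      have h0 : termVal K u j = 0 := Pi.single_eq_of_ne (fun hh => h hh.symm) _
      rw [h0, smul_zero]

theorem tv_linInd [CharZero K] : LinearIndependent K (termVal K : WTerm n m → Fin m → WeylAlg n K) := by
  apply linInd_of
  intro c hc
  ext ⟨e, j⟩
  have h := tv_proj c j
  rw [hc] at h
  have hw := wm_linInd (n := n) (K := K)
  have h0 : Finsupp.linearCombination K (wm K : WExp n → WeylAlg n K)
        (c.comapDomain (fun e => (e, j)) (injj j _)) =
      Finsupp.linearCombination K (wm K : WExp n → WeylAlg n K) 0 := by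
    rw [← h, map_zero]; rfl
  have := hw h0
  exact DFunLike.congr_fun this e

theorem tv_hL (θ : WExp n) (u : WTerm n m) :
    ∃ y ∈ Submodule.span K ((termVal K : WTerm n m → Fin m → WeylAlg n K) '' {s | s.2 = u.2 ∧ s.1 < θ + u.1}),
      LM n m K θ (termVal K u) = termVal K (sh θ u) + y := by
  obtain ⟨y, hy, h⟩ := wm_mul (K := K) θ u.1
  refine ⟨LinearMap.single K (fun _ => WeylAlg n K) u.2 y, ?_, ?_⟩
  · have : Submodule.span K (wm K '' {c : WExp n | c < θ + u.1}) ≤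
      (Submodule.span K ((termVal K : WTerm n m → Fin m → WeylAlg n K) '' {s | s.2 = u.2 ∧ s.1 < θ + u.1})).comap
        (LinearMap.single K (fun _ => WeylAlg n K) u.2) := by
      apply Submodule.span_le.2
      rintro _ ⟨c, hc, rfl⟩
      exact Submodule.subset_span ⟨(c, u.2), ⟨rfl, hc⟩, rfl⟩
    exact this hy
  · rw [termVal_eq, termVal_eq]
    change _ = LinearMap.single K (fun _ => WeylAlg n K) u.2 (wm K (θ + u.1)) + _
    rw [← map_add, ← h]
    funext j
    change wm K θ * (Pi.single u.2 (wm K u.1) : Fin m → WeylAlg n K) j =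
      (Pi.single u.2 (wm K θ * wm K u.1) : Fin m → WeylAlg n K) j
    by_cases hj : j = u.2
    · subst hj
      rw [Pi.single_eq_same, Pi.single_eq_same]
    · rw [Pi.single_eq_of_ne hj, Pi.single_eq_of_ne hj, mul_zero]

/-- right multiplication -/
noncomputable def RM (x : Fin m → WeylAlg n K) : WeylAlg n K →ₗ[K] (Fin m → WeylAlg n K) where
  toFun z := fun j => z * x j
  map_add' a b := by funext j; exact add_mul _ _ _
  map_smul' a z := by funext j; exact smul_mul_assoc _ _ _

theorem tv_hLL (γ θ : WExp n) (x : Fin m → WeylAlg n K) :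
    ∃ y ∈ Submodule.span K ((fun c => LM n m K c x) '' {c | c < γ + θ}),
      LM n m K γ (LM n m K θ x) = LM n m K (γ + θ) x + y := by
  obtain ⟨y, hy, h⟩ := wm_mul (K := K) γ θ
  refine ⟨RM x y, ?_, ?_⟩
  · have : Submodule.span K (wm K '' {c : WExp n | c < γ + θ}) ≤
      (Submodule.span K ((fun c => LM n m K c x) '' {c | c < γ + θ})).comap (RM x) := by
      apply Submodule.span_le.2
      rintro _ ⟨c, hc, rfl⟩
      exact Submodule.subset_span ⟨c, hc, rfl⟩
    exact this hy
  · change _ = RM x (wm K (γ + θ)) + _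
    rw [← map_add, ← h]
    funext j
    exact (mul_assoc _ _ _).symm

theorem fun_sub {x y z : Fin m → WeylAlg n K} (h : y = x - z) : x = y + z := by
  subst h
  funext j
  apply Subtype.ext
  change (x j).1 = (x j).1 - (z j).1 + (z j).1
  rw [sub_add_cancel]

/-- restriction of scalars -/
noncomputable def NK (N : Submodule (WeylAlg n K) (Fin m → WeylAlg n K)) :
    Submodule K (Fin m → WeylAlg n K) where
  carrier := {x | x ∈ N}
  add_mem' h h' := N.add_mem h h'
  zero_mem' := N.zero_mem
  smul_mem' a x hx := by
    have e : a • x = (a • (1 : WeylAlg n K)) • x := by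
      funext j
      change a • x j = (a • (1 : WeylAlg n K)) * x j
      rw [smul_mul_assoc, one_mul]
    change a • x ∈ N
    rw [e]
    exact N.smul_mem _ hx

end inst

end WeylGB

theorem statement_14 (n p m t : ℕ) (hp : 0 < p) (K : Type) [Field K] [CharZero K]
    (nn : Fin p → ℕ) (hn : ∑ j, nn j = n)
    (B : Fin n → Fin p) (hBmono : Monotone B)
    (hBcard : ∀ j, (Finset.univ.filter fun i => B i = j).card = nn j)
    (N : Submodule (WeylAlg n K) (Fin m → WeylAlg n K))
    (g : Fin t → Fin m → WeylAlg n K) (hgN : ∀ i, g i ∈ N) (hg0 : ∀ i, g i ≠ 0)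
    (cg : Fin t → (WTerm n m →₀ K)) (ug : Fin t → Fin p → WTerm n m)
    (hrep : ∀ i, Represents (cg i) (g i))
    (hlead : ∀ i j, IsLeader B j (cg i) (ug i j))
    (r : Fin p) (hr : (r : ℕ) < p - 1)
    (hseq : ∀ s : Fin p, r < s → IsGBseq B s N ug)
    (hS : ∀ i j : Fin t,
      Relation.ReflTransGen
        (fun x y => ∃ i', RedStep B r ((List.finRange p).filter fun s => r < s)
          (g i') (cg i') (ug i') x y)
        (Spoly r (g i) (g j) (cg i) (cg j) (ug i) (ug j)) 0) :
    IsGBseq B r N ug := by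
  intro f hfN hf0 cf uf hf huf
  have hrl : (r : ℕ) + 1 < p := by omega
  refine WeylGB.abstract_mon (B := B) (tv := termVal K) WeylGB.tv_linInd (L := WeylGB.LM n m K)
    WeylGB.tv_hL WeylGB.tv_hLL (WeylGB.NK N) ?_ g hgN cg ug ?_ hlead r
    (fun x y => ∃ i', RedStep B r ((List.finRange p).filter fun s => r < s)
          (g i') (cg i') (ug i') x y) ?_ ?_ ⟨r + 1, hrl⟩ ?_ ?_ f hfN hf0 cf uf ?_ huf
  · intro θ x hx
    exact N.smul_mem (wMono n K θ.1 θ.2) hx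
  · intro i
    rw [Finsupp.linearCombination_apply]
    exact hrep i
  · rintro x y ⟨i, c, hc, w, hw, hdv, hord, hy⟩
    refine ⟨i, c, ?_, w, hw, hdv, ?_, _, WeylGB.fun_sub hy⟩
    · rw [Finsupp.linearCombination_apply]
      exact hc
    · intro j hj
      exact hord j (List.mem_filter.2 ⟨List.mem_finRange j, by simpa using hj⟩)
  · intro i j hij
    have h := hS i j
    unfold Spoly at h
    rw [if_pos hij] at h
    exact ⟨_, h, (WeylGB.fun_sub rfl).symm⟩
  · intro j
    simp only [Fin.lt_def, Fin.ext_iff]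
    omega
  · intro f hfN hf0 cf uf hf huf
    refine hseq ⟨r + 1, hrl⟩ (Fin.lt_def.2 (Nat.lt_succ_self _)) f hfN hf0 cf uf ?_ huf
    rw [Finsupp.linearCombination_apply] at hf
    exact hf
  · rw [Finsupp.linearCombination_apply]
    exact hf
end
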